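/- There exist absolute constants C and d such that for every undirected edge-weighted buy-at-bulk instance on an n-vertex graph (n ≥ 2) there is a randomized online algorithm whose expected objective value on every finite request sequence, in every arrival order, is at most C·(log n)^d times the optimal objective value of that multicommodity instance. -/

import Mathlib

open MeasureTheory

namespace BaB

/-- A walk from `s` to `t` using edges from `E`, given as the list of traversed edges. -/
def IsWalk {W : Type} (E : Set (W × W)) : W → W → List (W × W) → Prop
  | s, t, [] => s = t
  | s, t, e :: p => e.1 = s ∧ e ∈ E ∧ IsWalk E e.2 t p

/-- Buy-at-bulk (two-metric) objective value of a collection of paths (lists of edges):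
the buying cost of every edge used, plus the length of every path. -/
def objVal {A : Type} [DecidableEq A] (c ℓ : A → ℝ) {k : ℕ} (P : Fin k → List A) : ℝ :=
  (∑ e ∈ Finset.univ.biUnion fun i => (P i).toFinset, c e) + ∑ i, ((P i).map ℓ).sum

/-- `Opt(G,X)`: the optimal objective value for connecting the pairs of `X`. -/
noncomputable def optVal {W : Type} [DecidableEq W] (E : Set (W × W)) (c ℓ : W × W → ℝ)
    (X : List (W × W)) : ℝ :=
  sInf { v | ∃ P : Fin X.length → List (W × W),
    (∀ m, IsWalk E (X.get m).1 (X.get m).2 (P m)) ∧ v = objVal c ℓ P }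

/-- The instance admits some feasible solution. -/
def Routable {W : Type} (E : Set (W × W)) (X : List (W × W)) : Prop :=
  ∀ p ∈ X, ∃ w, IsWalk E p.1 p.2 w

/-- A randomized online algorithm: a random seed drawn in advance from a probability
space, and an action that, given the seed and the prefix of requests seen so far,
irrevocably outputs the path for the most recent request. -/
structure OnlineAlg (V : Type) : Type 1 where
  Ω : Type
  m : MeasurableSpace Ω
  μ : @Measure Ω m
  prob : @IsProbabilityMeasure Ω m μ
  act : Ω → List (V × V) → List (V × V)

/-- Expected objective value of the online algorithm on request sequence `X`. -/
noncomputable def expObj {V : Type} [DecidableEq V] (A : OnlineAlg V) (c ℓ : V × V → ℝ)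
    (X : List (V × V)) : ℝ :=
  letI := A.m
  ∫ ω, objVal c ℓ (fun i : Fin X.length => A.act ω (X.take (i.1 + 1))) ∂A.μ

/-- `A` is `γ`-competitive on the request sequence `X`: whenever the instance is
routable, the algorithm surely outputs feasible paths and its expected objective
value is at most `γ · Opt`. -/
def CompetitiveOn {V : Type} [DecidableEq V] (A : OnlineAlg V) (E : Set (V × V))
    (c ℓ : V × V → ℝ) (γ : ℝ) (X : List (V × V)) : Prop :=
  Routable E X →
    (∀ ω (i : Fin X.length), IsWalk E (X.get i).1 (X.get i).2 (A.act ω (X.take (i.1 + 1)))) ∧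
    expObj A c ℓ X ≤ γ * optVal E c ℓ X

def SingleSink {V : Type} (X : List (V × V)) : Prop := ∃ r, ∀ p ∈ X, p.2 = r

def SingleSource {V : Type} (X : List (V × V)) : Prop := ∃ r, ∀ p ∈ X, p.1 = r

/-- An undirected graph modeled by a symmetric directed edge set with symmetric
costs and lengths. -/
def Undirected {V : Type} (E : Set (V × V)) (c ℓ : V × V → ℝ) : Prop :=
  ∀ u v : V, ((u, v) ∈ E ↔ (v, u) ∈ E) ∧ c (u, v) = c (v, u) ∧ ℓ (u, v) = ℓ (v, u)

section Walks
variable {V : Type}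

/-- Weight of a list of edges. -/
def wsum (c : V × V → ℝ) (p : List (V × V)) : ℝ := (p.map c).sum

@[simp] theorem wsum_nil (c : V × V → ℝ) : wsum c [] = 0 := rfl
@[simp] theorem wsum_cons (c : V × V → ℝ) (e : V × V) (p : List (V × V)) :
    wsum c (e :: p) = c e + wsum c p := by simp [wsum]
@[simp] theorem wsum_append (c : V × V → ℝ) (p q : List (V × V)) :
    wsum c (p ++ q) = wsum c p + wsum c q := by simp [wsum]

theorem wsum_nonneg {c : V × V → ℝ} (hc : ∀ e, 0 ≤ c e) (p : List (V × V)) : 0 ≤ wsum c p := by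
  induction p with
  | nil => simp
  | cons e p ih => simp only [wsum_cons]; linarith [hc e]

theorem wsum_sublist {c : V × V → ℝ} (hc : ∀ e, 0 ≤ c e) {p q : List (V × V)}
    (h : p.Sublist q) : wsum c p ≤ wsum c q := by
  induction h with
  | slnil => simp
  | cons a _ ih => simp only [wsum_cons]; linarith [hc a]
  | cons_cons a _ ih => simp only [wsum_cons]; linarith

/-- Reversed walk. -/
def rev (p : List (V × V)) : List (V × V) := (p.map Prod.swap).reverse

theorem isWalk_mono {E E' : Set (V × V)} (h : E ⊆ E') {p : List (V × V)} {s t : V}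
    (hp : IsWalk E s t p) : IsWalk E' s t p := by
  induction p generalizing s with
  | nil => exact hp
  | cons e p ih => exact ⟨hp.1, h hp.2.1, ih hp.2.2⟩

theorem isWalk_append {E : Set (V × V)} {p q : List (V × V)} {a b d : V}
    (hp : IsWalk E a b p) (hq : IsWalk E b d q) : IsWalk E a d (p ++ q) := by
  induction p generalizing a with
  | nil => cases hp; exact hq
  | cons e p ih => exact ⟨hp.1, hp.2.1, ih hp.2.2⟩

theorem isWalk_append_iff {E : Set (V × V)} {p q : List (V × V)} {a d : V} :
    IsWalk E a d (p ++ q) ↔ ∃ b, IsWalk E a b p ∧ IsWalk E b d q := by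
  induction p generalizing a with
  | nil => simp [IsWalk]
  | cons e p ih =>
    simp only [List.cons_append, IsWalk, ih]
    constructor
    · rintro ⟨h1, h2, b, h3, h4⟩; exact ⟨b, ⟨h1, h2, h3⟩, h4⟩
    · rintro ⟨b, ⟨h1, h2, h3⟩, h4⟩; exact ⟨h1, h2, b, h3, h4⟩

theorem isWalk_rev {E : Set (V × V)} (hE : ∀ e ∈ E, e.swap ∈ E) {p : List (V × V)} {a b : V}
    (hp : IsWalk E a b p) : IsWalk E b a (rev p) := by
  induction p generalizing a with
  | nil => cases hp; rfl
  | cons e p ih =>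
    obtain ⟨h1, h2, h3⟩ := hp
    have := ih h3
    simp only [rev, List.map_cons, List.reverse_cons] at *
    exact isWalk_append this ⟨rfl, hE e h2, h1⟩

theorem wsum_rev {c : V × V → ℝ} (hc : ∀ e, c e.swap = c e) (p : List (V × V)) :
    wsum c (rev p) = wsum c p := by
  induction p with
  | nil => rfl
  | cons e p ih =>
    simp only [rev, List.map_cons, List.reverse_cons, wsum_append, wsum_cons, wsum_nil] at *
    rw [ih, hc]; ring

theorem isWalk_mem {E : Set (V × V)} {p : List (V × V)} {a b : V}
    (hp : IsWalk E a b p) : ∀ e ∈ p, e ∈ E := by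
  induction p generalizing a with
  | nil => simp
  | cons e p ih =>
    intro x hx
    rcases List.mem_cons.1 hx with rfl | hx
    · exact hp.2.1
    · exact ih hp.2.2 x hx

theorem isWalk_of_mem {E E' : Set (V × V)} {p : List (V × V)} {a b : V}
    (hp : IsWalk E a b p) (h : ∀ e ∈ p, e ∈ E') : IsWalk E' a b p := by
  induction p generalizing a with
  | nil => exact hp
  | cons e p ih =>
    exact ⟨hp.1, h e (by simp), ih hp.2.2 (fun x hx => h x (by simp [hx]))⟩

/-- Every walk contains a simple walk. -/
theorem exists_simple {E : Set (V × V)} {p : List (V × V)} {s t : V}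
    (hp : IsWalk E s t p) :
    ∃ p', IsWalk E s t p' ∧ p'.Sublist p ∧ (p'.map Prod.fst).Nodup := by
  induction p generalizing s with
  | nil => exact ⟨[], hp, by simp, by simp⟩
  | cons e p ih =>
    obtain ⟨h1, h2, h3⟩ := hp
    obtain ⟨p', w, sl, nd⟩ := ih h3
    by_cases hs : s ∈ p'.map Prod.fst
    · obtain ⟨e', he', rfl⟩ := List.mem_map.1 hs
      obtain ⟨l1, l2, rfl⟩ := List.append_of_mem he'
      obtain ⟨b, _, hb⟩ := isWalk_append_iff.1 w
      refine ⟨e' :: l2, ?_, ?_, ?_⟩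
      · exact ⟨rfl, hb.2.1, hb.2.2⟩
      · exact ((List.sublist_append_right l1 _).trans sl).trans (List.sublist_cons_self _ _)
      · rw [List.map_append] at nd
        exact (List.nodup_append.1 nd).2.1
    · refine ⟨e :: p', ⟨h1, h2, w⟩, sl.cons_cons e, ?_⟩
      simp only [List.map_cons, List.nodup_cons]
      exact ⟨by rw [h1]; exact hs, nd⟩

theorem simple_length [Fintype V] {p : List (V × V)} (h : (p.map Prod.fst).Nodup) :
    p.length ≤ Fintype.card V := by
  have := h.length_le_card
  simpa using this

/-- Minimal-length walks subject to a cost budget exist. -/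
theorem exists_min_walk [Fintype V] {E : Set (V × V)} {c ℓ : V × V → ℝ} (hc : ∀ e, 0 ≤ c e)
    (hl : ∀ e, 0 ≤ ℓ e) (s t : V) (B : ℝ)
    (h : ∃ p, IsWalk E s t p ∧ wsum c p ≤ B) :
    ∃ p, (IsWalk E s t p ∧ wsum c p ≤ B) ∧
      ∀ p', IsWalk E s t p' → wsum c p' ≤ B → wsum ℓ p ≤ wsum ℓ p' := by
  classical
  set S : Set (List (V × V)) :=
    {p | p.length ≤ Fintype.card V ∧ IsWalk E s t p ∧ wsum c p ≤ B} with hS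
  have hfin : S.Finite := (List.finite_length_le (V × V) (Fintype.card V)).subset
    (fun p hp => hp.1)
  have key : ∀ p, IsWalk E s t p → wsum c p ≤ B → ∃ q ∈ S, wsum ℓ q ≤ wsum ℓ p := by
    intro p hp hB
    obtain ⟨q, w, sl, nd⟩ := exists_simple hp
    exact ⟨q, ⟨simple_length nd, w, (wsum_sublist hc sl).trans hB⟩, wsum_sublist hl sl⟩
  have hne : S.Nonempty := by
    obtain ⟨p, hp, hB⟩ := h
    obtain ⟨q, hq, _⟩ := key p hp hB
    exact ⟨q, hq⟩
  obtain ⟨q, hq, hmin⟩ := hfin.exists_minimalFor (wsum ℓ) S hne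
  refine ⟨q, hq.2, fun p' h1 h2 => ?_⟩
  obtain ⟨q', hq', hle⟩ := key p' h1 h2
  rcases le_total (wsum ℓ q) (wsum ℓ q') with h | h
  · exact h.trans hle
  · exact (hmin hq' h).trans hle

end Walks

section Labels
variable {V : Type} [Fintype V] [DecidableEq V]

/-- Labels of steps: a target vertex and a cost budget `k * c e`. -/
abbrev Lab (V : Type) [Fintype V] : Type := V × ((V × V) × Fin (Fintype.card V + 1))

open Classical in
/-- The path of a step. -/
noncomputable def pth (E : Set (V × V)) (c ℓ : V × V → ℝ) (u : V) (a : Lab V) : List (V × V) :=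
  if h : ∃ p, (IsWalk E u a.1 p ∧ wsum c p ≤ (a.2.2.1 : ℝ) * c a.2.1) ∧
      ∀ p', IsWalk E u a.1 p' → wsum c p' ≤ (a.2.2.1 : ℝ) * c a.2.1 → wsum ℓ p ≤ wsum ℓ p'
  then h.choose else []

open Classical in
/-- The end vertex of a step. -/
noncomputable def nv (E : Set (V × V)) (c ℓ : V × V → ℝ) (u : V) (a : Lab V) : V :=
  if ∃ p, (IsWalk E u a.1 p ∧ wsum c p ≤ (a.2.2.1 : ℝ) * c a.2.1) ∧
      ∀ p', IsWalk E u a.1 p' → wsum c p' ≤ (a.2.2.1 : ℝ) * c a.2.1 → wsum ℓ p ≤ wsum ℓ p'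
  then a.1 else u

theorem pth_walk (E : Set (V × V)) (c ℓ : V × V → ℝ) (u : V) (a : Lab V) :
    IsWalk E u (nv E c ℓ u a) (pth E c ℓ u a) := by
  unfold nv pth
  split_ifs with h
  · exact h.choose_spec.1.1
  · rfl

/-- Every walk is represented, up to a factor two in cost, by a label. -/
theorem exists_label (E : Set (V × V)) {c ℓ : V × V → ℝ} (hc : ∀ e, 0 ≤ c e)
    (hl : ∀ e, 0 ≤ ℓ e) {u v : V} {p : List (V × V)} (hp : IsWalk E u v p) :
    ∃ a : Lab V, nv E c ℓ u a = v ∧ wsum c (pth E c ℓ u a) ≤ 2 * wsum c p ∧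
      wsum ℓ (pth E c ℓ u a) ≤ wsum ℓ p := by
  classical
  obtain ⟨q, w, sl, nd⟩ := exists_simple hp
  have hlen := simple_length nd
  have hcq := wsum_sublist hc sl
  have hlq := wsum_sublist hl sl
  have main : ∀ (e : V × V) (k : Fin (Fintype.card V + 1)), wsum c q ≤ (k.1 : ℝ) * c e →
      (k.1 : ℝ) * c e ≤ 2 * wsum c q →
      ∃ a : Lab V, nv E c ℓ u a = v ∧ wsum c (pth E c ℓ u a) ≤ 2 * wsum c p ∧
      wsum ℓ (pth E c ℓ u a) ≤ wsum ℓ p := by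
    intro e k h1 h2
    have hex := exists_min_walk (E := E) hc hl u v ((k.1 : ℝ) * c e) ⟨q, w, h1⟩
    refine ⟨(v, (e, k)), ?_, ?_, ?_⟩
    · unfold nv; rw [if_pos hex]
    · unfold pth; rw [dif_pos hex]
      have := hex.choose_spec.1.2
      linarith
    · unfold pth; rw [dif_pos hex]
      have := hex.choose_spec.2 q w h1
      linarith
  by_cases hne : q = []
  · subst hne
    exact main (u, u) 0 (by simp) (by simp)
  · obtain ⟨e, he, hmax⟩ : ∃ e ∈ q, ∀ e' ∈ q, c e' ≤ c e := by
      have : q.toFinset.Nonempty := by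
        rcases List.exists_mem_of_ne_nil q hne with ⟨x, hx⟩
        exact ⟨x, by simpa using hx⟩
      obtain ⟨e, he, hm⟩ := q.toFinset.exists_max_image c this
      exact ⟨e, by simpa using he, fun e' he' => hm e' (by simpa using he')⟩
    have hup : wsum c q ≤ (q.length : ℝ) * c e := by
      clear main hlen nd w sl hcq hlq hne he
      induction q with
      | nil => simp
      | cons x q ih =>
        simp only [wsum_cons, List.length_cons]
        have := ih (fun e' he' => hmax e' (by simp [he']))
        have := hmax x (by simp)
        push_cast; linarith
    have hlow : c e ≤ wsum c q := by
      have := wsum_sublist hc (List.singleton_sublist.2 he)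
      simpa using this
    rcases (hc e).eq_or_lt with h0 | hpos
    · refine main e 0 ?_ ?_
      · rw [← h0] at hup; simpa using hup
      · simpa using wsum_nonneg hc q
    · have hk : ⌈wsum c q / c e⌉₊ < Fintype.card V + 1 := by
        have : ⌈wsum c q / c e⌉₊ ≤ q.length := by
          apply Nat.ceil_le.2
          rw [div_le_iff₀ hpos]; exact hup
        omega
      refine main e ⟨_, hk⟩ ?_ ?_
      · have := Nat.le_ceil (wsum c q / c e)
        rw [div_le_iff₀ hpos] at this
        exact this
      · have h0 : 0 ≤ wsum c q / c e := div_nonneg (wsum_nonneg hc q) hpos.le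
        have := (Nat.ceil_lt_add_one h0).le
        have h2 := mul_le_mul_of_nonneg_right this hpos.le
        rw [add_mul, div_mul_cancel₀ _ hpos.ne'] at h2
        simp only
        linarith

end Labels

theorem sum_biUnion_le {α β : Type*} [DecidableEq α] [DecidableEq β] (s : Finset α)
    (t : α → Finset β) (f : β → ℝ) (hf : ∀ b, 0 ≤ f b) :
    ∑ b ∈ s.biUnion t, f b ≤ ∑ a ∈ s, ∑ b ∈ t a, f b := by
  induction s using Finset.induction_on with
  | empty => simp
  | insert a s ha ih =>
    rw [Finset.biUnion_insert, Finset.sum_insert ha]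
    have := Finset.sum_union_inter (s₁ := t a) (s₂ := s.biUnion t) (f := f)
    have h0 : 0 ≤ ∑ p ∈ t a ∩ s.biUnion t, f p := Finset.sum_nonneg (fun p _ => hf p)
    linarith



set_option linter.unusedSectionVars false

section Chains
variable {V : Type} [Fintype V] [DecidableEq V]

/-- Cost of the last step of a chain starting at `u`. -/
noncomputable def Cn (E : Set (V × V)) (c ℓ : V × V → ℝ) : V → List (Lab V) → ℝ
  | _, [] => 0
  | u, a :: q => if q = [] then wsum c (pth E c ℓ u a) else Cn E c ℓ (nv E c ℓ u a) q

/-- Total length of a chain starting at `u`. -/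
noncomputable def Lam (E : Set (V × V)) (c ℓ : V × V → ℝ) : V → List (Lab V) → ℝ
  | _, [] => 0
  | u, a :: q => wsum ℓ (pth E c ℓ u a) + Lam E c ℓ (nv E c ℓ u a) q

/-- End vertex of a chain starting at `u`. -/
noncomputable def en (E : Set (V × V)) (c ℓ : V × V → ℝ) : V → List (Lab V) → V
  | u, [] => u
  | u, a :: q => en E c ℓ (nv E c ℓ u a) q

/-- The path followed by a chain starting at `u`. -/
noncomputable def cpath (E : Set (V × V)) (c ℓ : V × V → ℝ) : V → List (Lab V) → List (V × V)
  | _, [] => []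
  | u, a :: q => pth E c ℓ u a ++ cpath E c ℓ (nv E c ℓ u a) q

theorem cpath_walk (E : Set (V × V)) (c ℓ : V × V → ℝ) (u : V) (q : List (Lab V)) :
    IsWalk E u (en E c ℓ u q) (cpath E c ℓ u q) := by
  induction q generalizing u with
  | nil => rfl
  | cons a q ih => exact isWalk_append (pth_walk E c ℓ u a) (ih _)

theorem wsum_cpath (E : Set (V × V)) (c ℓ : V × V → ℝ) (u : V) (q : List (Lab V)) :
    wsum ℓ (cpath E c ℓ u q) = Lam E c ℓ u q := by
  induction q generalizing u with
  | nil => rfl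
  | cons a q ih => simp [cpath, Lam, ih]

theorem Cn_nonneg (E : Set (V × V)) {c ℓ : V × V → ℝ} (hc : ∀ e, 0 ≤ c e)
    (u : V) (q : List (Lab V)) : 0 ≤ Cn E c ℓ u q := by
  induction q generalizing u with
  | nil => simp [Cn]
  | cons a q ih =>
    unfold Cn
    split_ifs
    · exact wsum_nonneg hc _
    · exact ih _

theorem Lam_nonneg (E : Set (V × V)) {c ℓ : V × V → ℝ} (hl : ∀ e, 0 ≤ ℓ e)
    (u : V) (q : List (Lab V)) : 0 ≤ Lam E c ℓ u q := by
  rw [← wsum_cpath]; exact wsum_nonneg hl _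

/-- Root paths in a rooted tree. -/
theorem tree_path (E : Set (V × V)) {c ℓ : V × V → ℝ} (hc : ∀ e, 0 ≤ c e) (par : V → V)
    (dep : V → ℕ) (δ : V → ℝ) (U : Finset V) (ρ : V)
    (h1 : ∀ u ∈ U, par u ∈ U ∨ par u = ρ) (h2 : ∀ u ∈ U, dep (par u) < dep u)
    (h3 : ∀ u ∈ U, (par u, u) ∈ E) (h4 : ∀ u ∈ U, δ u = δ (par u) + ℓ (par u, u)) :
    ∀ u ∈ U, ∃ p, IsWalk E ρ u p ∧ wsum ℓ p = δ u - δ ρ ∧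
      wsum c p ≤ ∑ x ∈ U, c (par x, x) := by
  have key : ∀ k, ∀ u ∈ U, dep u = k → ∃ p, ∃ A ⊆ U, (∀ x ∈ A, dep x ≤ k) ∧ IsWalk E ρ u p ∧
      wsum ℓ p = δ u - δ ρ ∧ wsum c p = ∑ x ∈ A, c (par x, x) := by
    intro k
    induction k using Nat.strong_induction_on with
    | _ k ih =>
      intro u hu hk
      rcases h1 u hu with hp | hp
      · obtain ⟨p, A, hA, hd, w, hw, hcw⟩ := ih _ (hk ▸ h2 u hu) (par u) hp rfl
        refine ⟨p ++ [(par u, u)], insert u A, ?_, ?_, ?_, ?_, ?_⟩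
        · intro x hx
          rcases Finset.mem_insert.1 hx with rfl | hx
          · exact hu
          · exact hA hx
        · intro x hx
          rcases Finset.mem_insert.1 hx with rfl | hx
          · exact hk.le
          · have := hd x hx
            have := h2 u hu
            omega
        · exact isWalk_append w ⟨rfl, h3 u hu, rfl⟩
        · rw [wsum_append, hw, h4 u hu]; simp
          ring
        · rw [Finset.sum_insert, wsum_append, hcw]
          · simp; ring
          · intro hx
            have := hd u hx
            have := h2 u hu
            omega
      · refine ⟨[(par u, u)], {u}, by simpa using hu, by simp [hk], ⟨hp, h3 u hu, rfl⟩, ?_, ?_⟩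
        · rw [h4 u hu, hp]; simp
        · simp
  intro u hu
  obtain ⟨p, A, hA, -, w, hw, hcw⟩ := key _ u hu rfl
  refine ⟨p, w, hw, ?_⟩
  rw [hcw]
  exact Finset.sum_le_sum_of_subset_of_nonneg hA (fun x _ _ => hc _)

/-- Centroid splitting of a rooted tree. -/
theorem centroid (par : V → V) (dep : V → ℕ) (U : Finset V) (ρ : V) (hρ : ρ ∉ U)
    (hU : U.Nonempty)
    (h1 : ∀ u ∈ U, par u ∈ U ∨ par u = ρ) (h2 : ∀ u ∈ U, dep (par u) < dep u) :
    ∃ (v : V) (D : V → Finset V) (T : Finset V), (v ∈ U ∨ v = ρ) ∧ T ⊆ U ∧ (∀ w, D w ⊆ U) ∧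
      2 * T.card ≤ U.card ∧ (∀ w, 2 * (D w).card ≤ U.card) ∧
      (∀ u ∈ U, u ∈ T ∨ u = v ∨ ∃ w ∈ U, u ∈ D w) ∧
      (∀ w ∈ U, ∀ u ∈ D w, u ∉ T ∧ u ≠ v) ∧
      (∀ w ∈ U, ∀ w' ∈ U, w ≠ w' → Disjoint (D w) (D w')) ∧
      (∀ w, ∀ u ∈ D w, par u ∈ D w ∨ par u = v) ∧
      (∀ u ∈ T, par u ∈ T ∨ par u = ρ) := by
  classical
  set pf : V → V := fun x => if x ∈ U then par x else x with hpf
  have pfU : ∀ x ∈ U, pf x = par x := fun x hx => by simp [hpf, hx]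
  have pfN : ∀ x ∉ U, pf x = x := fun x hx => by simp [hpf, hx]
  set De : V → Finset V := fun v => U.filter (fun u => ∃ k, pf^[k] u = v) with hDe
  have mDe : ∀ v u, u ∈ De v ↔ u ∈ U ∧ ∃ k, pf^[k] u = v := fun v u => by simp [hDe]
  have itd : ∀ k u, dep (pf^[k] u) ≤ dep u := by
    intro k
    induction k with
    | zero => intro u; simp
    | succ k ih =>
      intro u
      rw [Function.iterate_succ_apply]
      refine (ih _).trans ?_
      by_cases hu : u ∈ U
      · rw [pfU u hu]; exact (h2 u hu).le
      · rw [pfN u hu]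
  have itm : ∀ k u, (u ∈ U ∨ u = ρ) → (pf^[k] u ∈ U ∨ pf^[k] u = ρ) := by
    intro k
    induction k with
    | zero => intro u h; simpa using h
    | succ k ih =>
      intro u h
      rw [Function.iterate_succ_apply]
      apply ih
      by_cases hu : u ∈ U
      · rw [pfU u hu]; exact h1 u hu
      · rw [pfN u hu]; exact h
  have itρ : ∀ k u, u ∈ U → dep u = k → ∃ j, pf^[j] u = ρ := by
    intro k
    induction k using Nat.strong_induction_on with
    | _ k ih =>
      intro u hu hk
      rcases h1 u hu with h | h
      · obtain ⟨j, hj⟩ := ih _ (hk ▸ h2 u hu) _ h rfl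
        exact ⟨j + 1, by rw [Function.iterate_succ_apply, pfU u hu]; exact hj⟩
      · exact ⟨1, by simp [pfU u hu, h]⟩
  have hDρ : De ρ = U := by
    ext u; rw [mDe]
    exact ⟨fun h => h.1, fun h => ⟨h, itρ _ u h rfl⟩⟩
  set Cd : Finset V := (insert ρ U).filter (fun v => U.card < 2 * (De v).card) with hCd
  have hCne : Cd.Nonempty := ⟨ρ, by
    simp only [hCd, Finset.mem_filter, hDρ]
    have := hU.card_pos
    exact ⟨by simp, by omega⟩⟩
  obtain ⟨v, hv, hmax⟩ := Cd.exists_max_image dep hCne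
  have hv' : (v ∈ U ∨ v = ρ) ∧ U.card < 2 * (De v).card := by
    have := Finset.mem_filter.1 hv
    exact ⟨(Finset.mem_insert.1 this.1).symm, this.2⟩
  refine ⟨v, fun w => if w ∈ U ∧ par w = v then De w else ∅, U \ De v, hv'.1, Finset.sdiff_subset,
    ?_, ?_, ?_, ?_, ?_, ?_, ?_, ?_⟩
  · intro w; dsimp only; split_ifs
    · exact Finset.filter_subset _ _
    · simp
  · have : (U \ De v).card + (De v).card = U.card :=
      Finset.card_sdiff_add_card_eq_card (Finset.filter_subset _ _)
    omega
  · intro w; dsimp only; split_ifs with h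
    · by_contra hcon
      have hw : w ∈ Cd := by
        simp only [hCd, Finset.mem_filter]
        exact ⟨by simp [h.1], by omega⟩
      have := hmax w hw
      have := h2 w h.1
      rw [h.2] at this
      omega
    · simp
  · intro u hu
    by_cases hd : u ∈ De v
    · right
      by_cases huv : u = v
      · exact Or.inl huv
      right
      obtain ⟨-, hk⟩ := (mDe _ _).1 hd
      have hk0 : Nat.find hk ≠ 0 := by
        intro h0
        have := Nat.find_spec hk
        rw [h0] at this; exact huv this
      obtain ⟨j, hj⟩ := Nat.exists_eq_succ_of_ne_zero hk0
      have hs := Nat.find_spec hk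
      rw [hj, Function.iterate_succ_apply'] at hs
      have hne : pf^[j] u ≠ v := Nat.find_min hk (by omega)
      have hjU : pf^[j] u ∈ U := by
        rcases itm j u (Or.inl hu) with h | h
        · exact h
        · rw [h, pfN ρ hρ] at hs
          rw [h] at hne; exact absurd hs hne
      rw [pfU _ hjU] at hs
      refine ⟨pf^[j] u, hjU, ?_⟩
      dsimp only
      rw [if_pos ⟨hjU, hs⟩, mDe]
      exact ⟨hu, j, rfl⟩
    · left; simp [hu, hd]
  · intro w hw u hu
    dsimp only at hu
    split_ifs at hu with h
    · obtain ⟨huU, k, hk⟩ := (mDe _ _).1 hu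
      constructor
      · intro hT
        apply (Finset.mem_sdiff.1 hT).2
        rw [mDe]
        exact ⟨huU, k + 1, by rw [Function.iterate_succ_apply', hk, pfU w hw, h.2]⟩
      · rintro rfl
        have := itd k u
        rw [hk] at this
        have h3 := h2 w hw
        rw [h.2] at h3
        omega
    · simp at hu
  · intro w hw w' hw' hne
    dsimp only
    split_ifs with h h'
    · have aux : ∀ x ∈ U, ∀ y ∈ U, par x = v → par y = v → x ≠ y → ∀ u k k', k ≤ k' →
          pf^[k] u = x → pf^[k'] u = y → False := by
        intro x hx y hy hpx hpy hxy u k k' hkk hkx hky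
        obtain ⟨d, rfl⟩ := Nat.exists_eq_add_of_le hkk
        rw [add_comm, Function.iterate_add_apply, hkx] at hky
        cases d with
        | zero => exact hxy hky
        | succ d =>
          rw [Function.iterate_succ_apply, pfU x hx, hpx] at hky
          have h5 := itd d v
          rw [hky] at h5
          have h6 := h2 y hy
          rw [hpy] at h6
          omega
      rw [Finset.disjoint_left]
      intro u hu hu'
      obtain ⟨-, k, hk⟩ := (mDe _ _).1 hu
      obtain ⟨-, k', hk'⟩ := (mDe _ _).1 hu'
      rcases le_total k k' with hkk | hkk
      · exact aux w hw w' hw' h.2 h'.2 hne u k k' hkk hk hk'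
      · exact aux w' hw' w hw h'.2 h.2 hne.symm u k' k hkk hk' hk
    all_goals simp
  · intro w u hu
    dsimp only at hu ⊢
    split_ifs at hu ⊢ with h
    · obtain ⟨huU, k, hk⟩ := (mDe _ _).1 hu
      cases k with
      | zero => right; have hk' : u = w := hk
                rw [hk']; exact h.2
      | succ k =>
        rw [Function.iterate_succ_apply, pfU u huU] at hk
        rcases h1 u huU with hp | hp
        · left; rw [mDe]; exact ⟨hp, k, hk⟩
        · exfalso
          rw [hp] at hk
          have : ∀ k, pf^[k] ρ = ρ := fun k => Function.iterate_fixed (pfN ρ hρ) k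
          rw [this] at hk
          exact hρ (hk ▸ h.1)
    · simp at hu
  · intro u hu
    obtain ⟨huU, hn⟩ := Finset.mem_sdiff.1 hu
    rcases h1 u huU with hp | hp
    · left
      refine Finset.mem_sdiff.2 ⟨hp, fun hd => hn ?_⟩
      obtain ⟨-, k, hk⟩ := (mDe _ _).1 hd
      rw [mDe]
      exact ⟨huU, k + 1, by rw [Function.iterate_succ_apply, pfU u huU]; exact hk⟩
    · exact Or.inr hp

theorem prefix_append_cases {α : Type} {p pre q : List α} (h : p <+: pre ++ q) :
    p <+: pre ∨ ∃ p', p' ≠ [] ∧ p = pre ++ p' ∧ p' <+: q := by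
  induction pre generalizing p with
  | nil =>
    by_cases hp : p = []
    · left; simp [hp]
    · right; exact ⟨p, hp, rfl, h⟩
  | cons a pre ih =>
    cases p with
    | nil => left; simp
    | cons b p =>
      rw [List.cons_append, List.cons_prefix_cons] at h
      obtain ⟨rfl, h⟩ := h
      rcases ih h with h | ⟨p', h1, h2, h3⟩
      · left; rw [List.cons_prefix_cons]; exact ⟨rfl, h⟩
      · right; exact ⟨p', h1, by rw [h2, List.cons_append], h3⟩

theorem Lam_append (E : Set (V × V)) (c ℓ : V × V → ℝ) (u : V) (p q : List (Lab V)) :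
    Lam E c ℓ u (p ++ q) = Lam E c ℓ u p + Lam E c ℓ (en E c ℓ u p) q := by
  induction p generalizing u with
  | nil => simp [Lam, en]
  | cons a p ih => simp only [List.cons_append, Lam, en, ih]; ring

theorem en_append (E : Set (V × V)) (c ℓ : V × V → ℝ) (u : V) (p q : List (Lab V)) :
    en E c ℓ u (p ++ q) = en E c ℓ (en E c ℓ u p) q := by
  induction p generalizing u with
  | nil => simp [en]
  | cons a p ih => simp only [List.cons_append, en, ih]

theorem Cn_append (E : Set (V × V)) (c ℓ : V × V → ℝ) (u : V) (p q : List (Lab V)) (hq : q ≠ []) :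
    Cn E c ℓ u (p ++ q) = Cn E c ℓ (en E c ℓ u p) q := by
  induction p generalizing u with
  | nil => simp [en]
  | cons a p ih =>
    rw [List.cons_append, Cn, if_neg (by simp [hq]), ih]; rfl

/-- Height reduction: a rooted tree can be represented by chains of logarithmic length. -/
theorem height_red (E : Set (V × V)) {c ℓ : V × V → ℝ} (hc : ∀ e, 0 ≤ c e) (hl : ∀ e, 0 ≤ ℓ e)
    (par : V → V) (dep : V → ℕ) (δ : V → ℝ) : ∀ (m : ℕ) (U : Finset V) (ρ : V),
    U.card < 2 ^ m → ρ ∉ U →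
    (∀ u ∈ U, par u ∈ U ∨ par u = ρ) → (∀ u ∈ U, dep (par u) < dep u) →
    (∀ u ∈ U, (par u, u) ∈ E) → (∀ u ∈ U, δ u = δ (par u) + ℓ (par u, u)) →
    ∃ (q : V → List (Lab V)) (Q : Finset (List (Lab V))),
      (∀ u ∈ U, (q u).length ≤ m ∧ en E c ℓ ρ (q u) = u ∧ Lam E c ℓ ρ (q u) ≤ δ u - δ ρ ∧
        ∀ p, p ≠ [] → p <+: q u → p ∈ Q) ∧
      (∀ p ∈ Q, p ≠ []) ∧
      ∑ p ∈ Q, Cn E c ℓ ρ p ≤ 2 * m * ∑ u ∈ U, c (par u, u) := by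
  classical
  intro m
  induction m with
  | zero =>
    intro U ρ hcard _ _ _ _ _
    have : U = ∅ := by
      rw [← Finset.card_eq_zero]; simpa using hcard
    subst this
    exact ⟨fun _ => [], ∅, by simp, by simp, by simp⟩
  | succ m ih =>
    intro U ρ hcard hρ h1 h2 h3 h4
    rcases U.eq_empty_or_nonempty with rfl | hne
    · exact ⟨fun _ => [], ∅, by simp, by simp, by simp⟩
    obtain ⟨v, D, T, hv, hTU, hDU, hTc, hDc, hcov, hdis, hdisj, hDpar, hTpar⟩ :=
      centroid par dep U ρ hρ hne h1 h2
    have hpow : 2 ^ (m + 1) = 2 * 2 ^ m := by ring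
    -- the prefix leading to the centroid
    obtain ⟨pre, PQ, hpl, hpe, hpL, hpQ, hPne, hPc⟩ : ∃ (pre : List (Lab V))
        (PQ : Finset (List (Lab V))), pre.length ≤ 1 ∧
        en E c ℓ ρ pre = v ∧ Lam E c ℓ ρ pre ≤ δ v - δ ρ ∧ (∀ p, p ≠ [] → p <+: pre → p ∈ PQ) ∧
        (∀ p ∈ PQ, p ≠ []) ∧ ∑ p ∈ PQ, Cn E c ℓ ρ p ≤ 2 * ∑ u ∈ U, c (par u, u) := by
      have hs : 0 ≤ ∑ u ∈ U, c (par u, u) := Finset.sum_nonneg (fun x _ => hc _)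
      rcases hv with hv | hv
      · obtain ⟨p, hp, hpl, hpc⟩ := tree_path E hc par dep δ U ρ h1 h2 h3 h4 v hv
        obtain ⟨a, ha1, ha2, ha3⟩ := exists_label E hc hl hp
        refine ⟨[a], {[a]}, by simp, by simp [en, ha1], ?_, ?_, by simp, ?_⟩
        · simp only [Lam]; linarith
        · intro p hp1 hp2
          have := List.prefix_cons_iff.1 hp2
          rcases this with h | ⟨t, ht, ht2⟩
          · exact absurd h hp1
          · have : t = [] := by simpa using ht2
            simp [ht, this]
        · simp only [Finset.sum_singleton, Cn, if_true]; linarith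
      · refine ⟨[], ∅, by simp, by simp [en, hv], by simp [Lam, hv], ?_, by simp, by simpa using hs⟩
        intro p hp1 hp2
        exact absurd (List.prefix_nil.1 hp2) hp1
    have hvD : ∀ w ∈ U, v ∉ D w := fun w hw h => (hdis w hw v h).2 rfl
    have IHw : ∀ w ∈ U, ∃ (q : V → List (Lab V)) (Q : Finset (List (Lab V))),
      (∀ u ∈ D w, (q u).length ≤ m ∧ en E c ℓ v (q u) = u ∧ Lam E c ℓ v (q u) ≤ δ u - δ v ∧
        ∀ p, p ≠ [] → p <+: q u → p ∈ Q) ∧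
      (∀ p ∈ Q, p ≠ []) ∧
      ∑ p ∈ Q, Cn E c ℓ v p ≤ 2 * m * ∑ u ∈ D w, c (par u, u) := by
      intro w hw
      refine ih (D w) v (by have := hDc w; omega) (hvD w hw) (hDpar w)
        (fun u hu => h2 u (hDU w hu)) (fun u hu => h3 u (hDU w hu)) (fun u hu => h4 u (hDU w hu))
    obtain ⟨qT, QT, hT1, hT2, hT3⟩ := ih T ρ (by omega) (fun h => hρ (hTU h)) hTpar
        (fun u hu => h2 u (hTU hu)) (fun u hu => h3 u (hTU hu)) (fun u hu => h4 u (hTU hu))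
    choose! qw Qw hw1 hw2 hw3 using IHw
    have hwit : ∀ u, ∃ w, (∃ w ∈ U, u ∈ D w) → w ∈ U ∧ u ∈ D w := by
      intro u
      by_cases h : ∃ w ∈ U, u ∈ D w
      · obtain ⟨w, hw⟩ := h; exact ⟨w, fun _ => hw⟩
      · exact ⟨u, fun h' => absurd h' h⟩
    choose wit hwit using hwit
    refine ⟨fun u => if u ∈ T then qT u else if u = v then pre else pre ++ qw (wit u) u,
      QT ∪ (PQ ∪ U.biUnion (fun w => (Qw w).image (fun p => pre ++ p))), ?_, ?_, ?_⟩
    · intro u hu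
      dsimp only
      by_cases huT : u ∈ T
      · rw [if_pos huT]
        obtain ⟨a1, a2, a3, a4⟩ := hT1 u huT
        exact ⟨by omega, a2, a3, fun p hp hp' => Finset.mem_union_left _ (a4 p hp hp')⟩
      rw [if_neg huT]
      by_cases huv : u = v
      · subst huv
        rw [if_pos rfl]
        refine ⟨by omega, hpe, hpL, fun p hp hp' => ?_⟩
        exact Finset.mem_union_right _ (Finset.mem_union_left _ (hpQ p hp hp'))
      rw [if_neg huv]
      have hex : ∃ w ∈ U, u ∈ D w := by
        rcases hcov u hu with h | h | h
        · exact absurd h huT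
        · exact absurd h huv
        · exact h
      obtain ⟨hwU, hwD⟩ := hwit u hex
      obtain ⟨a1, a2, a3, a4⟩ := hw1 _ hwU u hwD
      refine ⟨by rw [List.length_append]; omega, by rw [en_append, hpe, a2], ?_, ?_⟩
      · rw [Lam_append, hpe]; linarith
      · intro p hp hp'
        rcases prefix_append_cases hp' with h | ⟨p', b1, b2, b3⟩
        · exact Finset.mem_union_right _ (Finset.mem_union_left _ (hpQ p hp h))
        · refine Finset.mem_union_right _ (Finset.mem_union_right _ ?_)
          rw [Finset.mem_biUnion]
          exact ⟨_, hwU, Finset.mem_image.2 ⟨p', a4 p' b1 b3, b2.symm⟩⟩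
    · intro p hp
      rcases Finset.mem_union.1 hp with h | h
      · exact hT2 p h
      rcases Finset.mem_union.1 h with h | h
      · exact hPne p h
      obtain ⟨w, hw, h⟩ := Finset.mem_biUnion.1 h
      obtain ⟨p', hp', rfl⟩ := Finset.mem_image.1 h
      have := hw2 w hw p' hp'
      simp [this]
    · have hnn : ∀ p, 0 ≤ Cn E c ℓ ρ p := fun p => Cn_nonneg E hc ρ p
      have un : ∀ A B : Finset (List (Lab V)), ∑ p ∈ A ∪ B, Cn E c ℓ ρ p ≤
          ∑ p ∈ A, Cn E c ℓ ρ p + ∑ p ∈ B, Cn E c ℓ ρ p := by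
        intro A B
        have := Finset.sum_union_inter (s₁ := A) (s₂ := B) (f := Cn E c ℓ ρ)
        have h0 : 0 ≤ ∑ p ∈ A ∩ B, Cn E c ℓ ρ p := Finset.sum_nonneg (fun p _ => hnn p)
        linarith
      have hbi : ∑ p ∈ U.biUnion (fun w => (Qw w).image (fun p => pre ++ p)), Cn E c ℓ ρ p ≤
          ∑ w ∈ U, 2 * m * ∑ u ∈ D w, c (par u, u) := by
        refine (sum_biUnion_le _ _ _ (fun p => hnn p)).trans ?_
        refine Finset.sum_le_sum (fun w hw => ?_)
        refine le_trans (le_of_eq ?_) (hw3 w hw)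
        rw [Finset.sum_image (fun x _ y _ h => List.append_cancel_left h)]
        refine Finset.sum_congr rfl (fun p hp => ?_)
        rw [Cn_append _ _ _ _ _ _ (hw2 w hw p hp), hpe]
      have hsub : ∑ u ∈ T, c (par u, u) + ∑ w ∈ U, ∑ u ∈ D w, c (par u, u) ≤
          ∑ u ∈ U, c (par u, u) := by
        rw [← Finset.sum_biUnion (fun x hx y hy hxy => hdisj x hx y hy hxy), ← Finset.sum_union]
        · refine Finset.sum_le_sum_of_subset_of_nonneg ?_ (fun _ _ _ => hc _)
          refine Finset.union_subset hTU ?_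
          exact Finset.biUnion_subset.2 (fun w _ => hDU w)
        · rw [Finset.disjoint_left]
          intro u hu hu'
          obtain ⟨w, hw, hw'⟩ := Finset.mem_biUnion.1 hu'
          exact (hdis w hw u hw').1 hu
      have e1 := un QT (PQ ∪ U.biUnion (fun w => (Qw w).image (fun p => pre ++ p)))
      have e2 := un PQ (U.biUnion (fun w => (Qw w).image (fun p => pre ++ p)))
      rw [← Finset.mul_sum] at hbi
      have hm : (0:ℝ) ≤ 2 * m := by positivity
      have := mul_le_mul_of_nonneg_left hsub hm
      push_cast
      nlinarith

end Chains

set_option linter.unusedSectionVars false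

section Spt
variable {V : Type} [Fintype V] [DecidableEq V]

/-- Shortest path trees, represented by chains of logarithmic length. -/
theorem spt (E : Set (V × V)) {c ℓ : V × V → ℝ} (hc : ∀ e, 0 ≤ c e) (hl : ∀ e, 0 ≤ ℓ e)
    (H : Finset (V × V)) (hH : ∀ e ∈ H, e ∈ E) (lg : ℕ) (hlg : Fintype.card V < 2 ^ lg) (v : V) :
    ∃ (q : V → List (Lab V)) (Q : Finset (List (Lab V))),
      (∀ u p, IsWalk (↑H : Set (V × V)) v u p → (q u).length ≤ lg ∧ en E c ℓ v (q u) = u ∧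
        Lam E c ℓ v (q u) ≤ wsum ℓ p ∧ ∀ p', p' ≠ [] → p' <+: q u → p' ∈ Q) ∧
      (∀ p ∈ Q, p ≠ []) ∧ ∑ p ∈ Q, Cn E c ℓ v p ≤ 2 * lg * ∑ e ∈ H, c e := by
  classical
  have best : ∀ u, (∃ p, IsWalk (↑H : Set (V × V)) v u p) →
      ∃ p, IsWalk (↑H : Set (V × V)) v u p ∧
        (∀ p', IsWalk (↑H : Set (V × V)) v u p' → wsum ℓ p ≤ wsum ℓ p') ∧
        (∀ p', IsWalk (↑H : Set (V × V)) v u p' → wsum ℓ p' ≤ wsum ℓ p →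
          p.length ≤ p'.length) := by
    rintro u ⟨p0, hp0⟩
    obtain ⟨p1, ⟨h1, _⟩, h1m⟩ := exists_min_walk (E := (↑H : Set (V × V))) (c := fun _ => 0)
      (fun _ => le_rfl) hl v u 0 ⟨p0, hp0, by simp [wsum]⟩
    have hex : ∃ k, ∃ p, IsWalk (↑H : Set (V × V)) v u p ∧ wsum ℓ p ≤ wsum ℓ p1 ∧ p.length = k :=
      ⟨_, p1, h1, le_rfl, rfl⟩
    obtain ⟨p, hp, hpl, hpk⟩ := Nat.find_spec hex
    refine ⟨p, hp, fun p' hp' => hpl.trans (h1m p' hp' (by simp [wsum])), fun p' hp' hle => ?_⟩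
    rw [hpk]
    exact Nat.find_min' hex ⟨p', hp', hle.trans hpl, rfl⟩
  choose! b hb hbm hbl using best
  set U : Finset V := Finset.univ.filter
    (fun u => u ≠ v ∧ ∃ p, IsWalk (↑H : Set (V × V)) v u p) with hU
  have last : ∀ u ∈ U, ∃ x p, b u = p ++ [(x, u)] ∧ IsWalk (↑H : Set (V × V)) v x p ∧
      (x, u) ∈ H := by
    intro u hu
    simp only [hU, Finset.mem_filter, Finset.mem_univ, true_and] at hu
    have hw := hb u hu.2
    rcases List.eq_nil_or_concat (b u) with h | ⟨p, e, h⟩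
    · rw [h] at hw
      exact absurd hw.symm hu.1
    · rw [List.concat_eq_append] at h
      rw [h] at hw
      obtain ⟨x, hx, hx'⟩ := isWalk_append_iff.1 hw
      obtain ⟨h1, h2, h3⟩ := hx'
      have : e = (x, u) := Prod.ext h1 h3
      subst this
      exact ⟨x, p, h, hx, h2⟩
  choose! par pp hpp hpw hpH using last
  have e1 : ∀ u ∈ U, wsum ℓ (b u) = wsum ℓ (b (par u)) + ℓ (par u, u) := by
    intro u hu
    have hu' : ∃ p, IsWalk (↑H : Set (V × V)) v u p := by
      simp only [hU, Finset.mem_filter, Finset.mem_univ, true_and] at hu; exact hu.2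
    apply le_antisymm
    · have := hbm u hu' (b (par u) ++ [(par u, u)])
        (isWalk_append (hb _ ⟨_, hpw u hu⟩) ⟨rfl, hpH u hu, rfl⟩)
      simpa using this
    · have := hbm (par u) ⟨_, hpw u hu⟩ (pp u) (hpw u hu)
      rw [hpp u hu]; simpa using this
  have e2 : ∀ u ∈ U, (b (par u)).length < (b u).length := by
    intro u hu
    have := hbl (par u) ⟨_, hpw u hu⟩ (pp u) (hpw u hu) (by
      have := e1 u hu
      rw [hpp u hu] at this
      simp at this
      linarith)
    rw [hpp u hu]; simp; omega
  have hbv : wsum ℓ (b v) = 0 := by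
    have := hbm v ⟨[], rfl⟩ [] rfl
    exact le_antisymm (by simpa using this) (wsum_nonneg hl _)
  obtain ⟨q, Q, h1, h2, h3⟩ := height_red E hc hl par (fun u => (b u).length)
    (fun u => wsum ℓ (b u)) lg U v ((Finset.card_le_univ _).trans_lt hlg) (by simp [hU])
    (by
      intro u hu
      by_cases h : par u = v
      · right; exact h
      · left; simp only [hU, Finset.mem_filter, Finset.mem_univ, true_and]
        exact ⟨h, _, hpw u hu⟩) e2 (fun u hu => hH _ (hpH u hu)) e1
  refine ⟨fun u => if u = v then [] else q u, Q, ?_, h2, h3.trans ?_⟩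
  · intro u p hp
    by_cases huv : u = v
    · simp only [huv, if_true, List.length_nil, en, Lam, List.prefix_nil]
      exact ⟨Nat.zero_le _, trivial, wsum_nonneg hl _, fun p' h h' => absurd h' h⟩
    · simp only [huv, if_false]
      have hu : u ∈ U := by
        simp only [hU, Finset.mem_filter, Finset.mem_univ, true_and]
        exact ⟨huv, _, hp⟩
      obtain ⟨a1, a2, a3, a4⟩ := h1 u hu
      refine ⟨a1, a2, a3.trans ?_, a4⟩
      rw [hbv]
      have := hbm u ⟨p, hp⟩ p hp
      linarith
  · refine mul_le_mul_of_nonneg_left ?_ (by positivity)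
    rw [← Finset.sum_image (f := c) (s := U) (g := fun u => (par u, u))
      (fun x _ y _ h => (Prod.ext_iff.1 h).2)]
    refine Finset.sum_le_sum_of_subset_of_nonneg ?_ (fun _ _ _ => hc _)
    intro e he
    obtain ⟨u, hu, rfl⟩ := Finset.mem_image.1 he
    exact hpH u hu

end Spt

set_option linter.unusedSectionVars false

section Carve
variable {V : Type} [Fintype V] [DecidableEq V]

/-- Averaging over radii. -/
theorem avg_radius (H : Finset (V × V)) (f : V × V → ℝ) (hf : ∀ e, 0 ≤ f e) (lam : V × V → ℕ)
    (B : ℕ → Finset V) (hB : Monotone B)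
    (hcut : ∀ e ∈ H, ∀ R, ((Finset.range R).filter
      (fun i => ¬ (e.1 ∈ B i ↔ e.2 ∈ B i))).card ≤ lam e) (a q : ℕ) (hq : 0 < q) :
    ∃ i, a ≤ i ∧ i < a + q ∧
      (q : ℝ) * ∑ e ∈ H with ¬ (e.1 ∈ B i ↔ e.2 ∈ B i), f e ≤
        ∑ e ∈ H with (e.1 ∈ B (a + q) ∨ e.2 ∈ B (a + q)), f e * lam e := by
  classical
  set g : ℕ → ℝ := fun i => ∑ e ∈ H with ¬ (e.1 ∈ B i ↔ e.2 ∈ B i), f e with hg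
  set T := ∑ e ∈ H with (e.1 ∈ B (a + q) ∨ e.2 ∈ B (a + q)), f e * lam e with hT
  have hsum : ∑ i ∈ Finset.Ico a (a + q), g i ≤ T := by
    have h1 : ∑ i ∈ Finset.Ico a (a + q), g i =
        ∑ e ∈ H, f e * (((Finset.Ico a (a + q)).filter
          (fun i => ¬ (e.1 ∈ B i ↔ e.2 ∈ B i))).card : ℝ) := by
      simp only [hg, Finset.sum_filter]
      rw [Finset.sum_comm]
      refine Finset.sum_congr rfl (fun e _ => ?_)
      rw [← Finset.sum_filter, Finset.sum_const, nsmul_eq_mul, mul_comm]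
    rw [h1, hT, Finset.sum_filter]
    refine Finset.sum_le_sum (fun e he => ?_)
    split_ifs with h
    · refine mul_le_mul_of_nonneg_left ?_ (hf e)
      have := hcut e he (a + q)
      refine Nat.cast_le.2 (le_trans (Finset.card_le_card ?_) this)
      refine Finset.filter_subset_filter _ ?_
      intro i hi
      simp at hi ⊢; exact hi.2
    · have : (Finset.Ico a (a + q)).filter (fun i => ¬ (e.1 ∈ B i ↔ e.2 ∈ B i)) = ∅ := by
        rw [Finset.filter_eq_empty_iff]
        intro i hi
        simp only [Finset.mem_Ico] at hi
        push Not at h ⊢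
        have h1 : e.1 ∉ B i := fun h' => h.1 (hB hi.2.le h')
        have h2 : e.2 ∉ B i := fun h' => h.2 (hB hi.2.le h')
        tauto
      rw [this]; simp
  by_contra hno0
  have hno : ∀ i, a ≤ i → i < a + q → T < q * g i :=
    fun i h1 h2 => not_le.1 (fun h => hno0 ⟨i, h1, h2, h⟩)
  have : ∑ i ∈ Finset.Ico a (a + q), T < ∑ i ∈ Finset.Ico a (a + q), (q : ℝ) * g i := by
    refine Finset.sum_lt_sum_of_nonempty (by simp; exact hq) (fun i hi => ?_)
    simp only [Finset.mem_Ico] at hi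
    exact hno i hi.1 hi.2
  rw [← Finset.mul_sum, Finset.sum_const, nsmul_eq_mul] at this
  simp at this
  have hq' : (0 : ℝ) < q := by exact_mod_cast hq
  have := (mul_lt_mul_iff_right₀ hq').1 this
  linarith

/-- Region growing: low diameter decomposition. -/
theorem carve (H : Finset (V × V)) (f : V × V → ℝ) (hf : ∀ e, 0 ≤ f e) (lam : V × V → ℕ)
    (B : V → ℕ → Finset V) (hB : ∀ w, Monotone (B w)) (hself : ∀ w i, w ∈ B w i)
    (hcut : ∀ w, ∀ e ∈ H, ∀ R, ((Finset.range R).filter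
      (fun i => ¬ (e.1 ∈ B w i ↔ e.2 ∈ B w i))).card ≤ lam e) (lg q : ℕ) (hq : 0 < q)
    (hlg : 0 < lg)
    (β : ℝ) (hβ : 0 ≤ β) (hVol : ∑ e ∈ H, f e * lam e + β ≤ 2 ^ lg * β) :
    ∀ (k : ℕ) (W : Finset V), W.card ≤ k →
    ∃ part : V → V, (∀ u ∈ W, part u ∈ W ∧ ∃ i < lg * q, u ∈ B (part u) i) ∧
      (q : ℝ) * ∑ e ∈ H with (e.1 ∈ W ∧ e.2 ∈ W ∧ part e.1 ≠ part e.2), f e ≤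
        2 * (∑ e ∈ H with (e.1 ∈ W ∧ e.2 ∈ W), f e * lam e + W.card * β) := by
  classical
  intro k
  induction k with
  | zero =>
    intro W hW
    have : W = ∅ := Finset.card_eq_zero.1 (by omega)
    subst this
    exact ⟨id, by simp, by simp⟩
  | succ k ih =>
    intro W hW
    rcases W.eq_empty_or_nonempty with rfl | ⟨w, hw⟩
    · exact ⟨id, by simp, by simp⟩
    have hfl : ∀ e, 0 ≤ f e * lam e := fun e => mul_nonneg (hf e) (Nat.cast_nonneg _)
    set HW := H.filter (fun e => e.1 ∈ W ∧ e.2 ∈ W) with hHW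
    set A : ℕ → ℝ := fun i => β + ∑ e ∈ HW with (e.1 ∈ B w i ∨ e.2 ∈ B w i), f e * lam e with hA
    have hAle : ∀ i, A i ≤ 2 ^ lg * β := by
      intro i
      refine le_trans ?_ hVol
      rw [hA]
      simp only
      rw [add_comm]
      refine add_le_add_left ?_ _
      refine Finset.sum_le_sum_of_subset_of_nonneg ?_ (fun _ _ _ => hfl _)
      exact (Finset.filter_subset _ _).trans (Finset.filter_subset _ _)
    have hA0 : β ≤ A 0 := by
      rw [hA]; simp only
      have : 0 ≤ ∑ e ∈ HW with (e.1 ∈ B w 0 ∨ e.2 ∈ B w 0), f e * lam e :=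
        Finset.sum_nonneg (fun _ _ => hfl _)
      linarith
    have hAm : Monotone A := by
      intro i j hij
      rw [hA]
      simp only
      refine add_le_add_right ?_ _
      refine Finset.sum_le_sum_of_subset_of_nonneg ?_ (fun _ _ _ => hfl _)
      intro e he
      simp only [Finset.mem_filter] at he ⊢
      exact ⟨he.1, he.2.imp (fun h => hB w hij h) (fun h => hB w hij h)⟩
    have hk : ∃ k < lg, A (k * q + q) ≤ 2 * A (k * q) := by
      by_contra hno
      push Not at hno
      have hind : ∀ j, j ≤ lg → 2 ^ j * β ≤ A (j * q) ∧ (0 < j → 2 ^ j * β < A (j * q)) := by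
        intro j
        induction j with
        | zero => intro _; simpa using hA0
        | succ j ihj =>
          intro hj
          have h1 := (ihj (by omega)).1
          have h2 := hno j (by omega)
          have e : (j + 1) * q = j * q + q := by ring
          rw [e, pow_succ]
          constructor
          · nlinarith
          · intro _; nlinarith
      have := (hind lg le_rfl).2 hlg
      exact absurd (hAle (lg * q)) (not_le.2 this)
    obtain ⟨j, hj, hjA⟩ := hk
    obtain ⟨i, hi1, hi2, hi3⟩ := avg_radius HW f hf lam (B w) (hB w)
      (fun e he => hcut w e (Finset.mem_filter.1 he).1) (j * q) q hq
    have hilt : i < lg * q := by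
      have : (j + 1) * q ≤ lg * q := Nat.mul_le_mul_right _ hj
      have e : (j + 1) * q = j * q + q := by ring
      omega
    have hi4 : (q : ℝ) * ∑ e ∈ HW with ¬ (e.1 ∈ B w i ↔ e.2 ∈ B w i), f e ≤ 2 * A i := by
      have h1 := hAm hi1
      have : ∑ e ∈ HW with (e.1 ∈ B w (j * q + q) ∨ e.2 ∈ B w (j * q + q)), f e * lam e
          ≤ A (j * q + q) := by rw [hA]; simp only; linarith
      linarith
    set W' := W \ B w i with hW'
    have hwW' : w ∉ W' := by simp [hW', hself]
    have hW'c : W'.card + 1 ≤ W.card := by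
      have : W' ⊂ W := by
        refine ⟨Finset.sdiff_subset, fun h => hwW' (h hw)⟩
      exact Finset.card_lt_card this
    obtain ⟨part, hp1, hp2⟩ := ih W' (by omega)
    refine ⟨fun u => if u ∈ B w i then w else part u, ?_, ?_⟩
    · intro u hu
      by_cases h : u ∈ B w i
      · simp only [h, if_true]; exact ⟨hw, i, hilt, h⟩
      · simp only [h, if_false]
        obtain ⟨h1, h2⟩ := hp1 u (by simp [hW', hu, h])
        exact ⟨(Finset.mem_sdiff.1 h1).1, h2⟩
    · set S1 := HW.filter (fun e => ¬ (e.1 ∈ B w i ↔ e.2 ∈ B w i)) with hS1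
      set S2 := H.filter (fun e => e.1 ∈ W' ∧ e.2 ∈ W' ∧ part e.1 ≠ part e.2) with hS2
      set T1 := HW.filter (fun e => (e.1 ∈ B w i ∨ e.2 ∈ B w i)) with hT1
      set T2 := H.filter (fun e => e.1 ∈ W' ∧ e.2 ∈ W') with hT2
      have hL : ∑ e ∈ H with (e.1 ∈ W ∧ e.2 ∈ W ∧ (if e.1 ∈ B w i then w else part e.1) ≠
          (if e.2 ∈ B w i then w else part e.2)), f e ≤ ∑ e ∈ S1, f e + ∑ e ∈ S2, f e := by
        have hsub : H.filter (fun e => e.1 ∈ W ∧ e.2 ∈ W ∧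
            (if e.1 ∈ B w i then w else part e.1) ≠
            (if e.2 ∈ B w i then w else part e.2)) ⊆ S1 ∪ S2 := by
          intro e he
          simp only [hS1, hS2, hHW, hW', Finset.mem_union, Finset.mem_filter,
            Finset.mem_sdiff] at he ⊢
          obtain ⟨h0, h1, h2, h3⟩ := he
          by_cases c1 : e.1 ∈ B w i <;> by_cases c2 : e.2 ∈ B w i
          · simp [c1, c2] at h3
          · left; exact ⟨⟨h0, h1, h2⟩, by simp [c1, c2]⟩
          · left; exact ⟨⟨h0, h1, h2⟩, by simp [c1, c2]⟩
          · right; simp only [c1, c2, if_false] at h3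
            exact ⟨h0, ⟨h1, c1⟩, ⟨h2, c2⟩, h3⟩
        refine (Finset.sum_le_sum_of_subset_of_nonneg hsub (fun _ _ _ => hf _)).trans ?_
        have := Finset.sum_union_inter (s₁ := S1) (s₂ := S2) (f := f)
        have h0 : 0 ≤ ∑ p ∈ S1 ∩ S2, f p := Finset.sum_nonneg (fun p _ => hf p)
        linarith
      have hR : ∑ e ∈ T1, f e * lam e + ∑ e ∈ T2, f e * lam e ≤ ∑ e ∈ HW, f e * lam e := by
        rw [← Finset.sum_union]
        · refine Finset.sum_le_sum_of_subset_of_nonneg ?_ (fun _ _ _ => hfl _)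
          intro e he
          simp only [hT1, hT2, hHW, hW', Finset.mem_union, Finset.mem_filter,
            Finset.mem_sdiff] at he ⊢
          tauto
        · rw [Finset.disjoint_left]
          intro e h1 h2
          simp only [hT1, hT2, hHW, hW', Finset.mem_filter, Finset.mem_sdiff] at h1 h2
          tauto
      have hq' : (0 : ℝ) < q := by exact_mod_cast hq
      have h1 := mul_le_mul_of_nonneg_left hL hq'.le
      have hcard : ((W'.card : ℝ) + 1) * β ≤ W.card * β :=
        mul_le_mul_of_nonneg_right (by exact_mod_cast hW'c) hβ
      have hAi : A i = β + ∑ e ∈ T1, f e * lam e := rfl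
      rw [hAi] at hi4
      refine h1.trans ?_
      rw [mul_add]
      linarith

end Carve

section Ball
variable {V : Type} [Fintype V] [DecidableEq V]

/-- integral length of a walk -/
def nsum (lam : V × V → ℕ) (p : List (V × V)) : ℕ := (p.map lam).sum

@[simp] theorem nsum_nil (lam : V × V → ℕ) : nsum lam [] = 0 := rfl
@[simp] theorem nsum_cons (lam : V × V → ℕ) (e : V × V) (p : List (V × V)) :
    nsum lam (e :: p) = lam e + nsum lam p := by simp [nsum]
@[simp] theorem nsum_append (lam : V × V → ℕ) (p q : List (V × V)) :
    nsum lam (p ++ q) = nsum lam p + nsum lam q := by simp [nsum]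
theorem nsum_rev {lam : V × V → ℕ} (h : ∀ e, lam e.swap = lam e) (p : List (V × V)) :
    nsum lam (rev p) = nsum lam p := by
  simp only [nsum, rev, List.map_reverse, List.map_map, List.sum_reverse]
  congr 1
  refine List.map_congr_left (fun e _ => ?_)
  simp [h]

open Classical in
/-- Balls in the graph `H`. -/
noncomputable def ball (H : Finset (V × V)) (lam : V × V → ℕ) (w : V) (i : ℕ) : Finset V :=
  Finset.univ.filter (fun u => ∃ p, IsWalk (↑H : Set (V × V)) w u p ∧ nsum lam p ≤ i)

theorem mem_ball {H : Finset (V × V)} {lam : V × V → ℕ} {w u : V} {i : ℕ} :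
    u ∈ ball H lam w i ↔ ∃ p, IsWalk (↑H : Set (V × V)) w u p ∧ nsum lam p ≤ i := by
  simp [ball]

theorem ball_mono (H : Finset (V × V)) (lam : V × V → ℕ) (w : V) : Monotone (ball H lam w) := by
  intro i j hij u hu
  rw [mem_ball] at hu ⊢
  obtain ⟨p, h1, h2⟩ := hu
  exact ⟨p, h1, h2.trans hij⟩

theorem self_ball (H : Finset (V × V)) (lam : V × V → ℕ) (w : V) (i : ℕ) : w ∈ ball H lam w i :=
  mem_ball.2 ⟨[], rfl, by simp⟩

theorem ball_step {H : Finset (V × V)} {lam : V × V → ℕ} {w x y : V} {i : ℕ}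
    (hx : x ∈ ball H lam w i) (hxy : (x, y) ∈ H) : y ∈ ball H lam w (i + lam (x, y)) := by
  rw [mem_ball] at hx ⊢
  obtain ⟨p, h1, h2⟩ := hx
  exact ⟨p ++ [(x, y)], isWalk_append h1 ⟨rfl, hxy, rfl⟩, by simp; omega⟩

theorem ball_subset {H : Finset (V × V)} {lam : V × V → ℕ} {U : Finset V}
    (hHU : ∀ e ∈ H, e.1 ∈ U ∧ e.2 ∈ U) {w : V} (hw : w ∈ U) (i : ℕ) : ball H lam w i ⊆ U := by
  intro u hu
  obtain ⟨p, h1, _⟩ := mem_ball.1 hu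
  clear hu
  induction p generalizing w with
  | nil => have : w = u := h1
           rwa [← this]
  | cons e p ih => exact ih (hHU e h1.2.1).2 h1.2.2 (by simp at *; omega)

theorem ball_cut {H : Finset (V × V)} {lam : V × V → ℕ} (hHs : ∀ e ∈ H, e.swap ∈ H)
    (hls : ∀ e, lam e.swap = lam e) (w : V) (e : V × V) (he : e ∈ H) (R : ℕ) :
    ((Finset.range R).filter
      (fun i => ¬ (e.1 ∈ ball H lam w i ↔ e.2 ∈ ball H lam w i))).card ≤ lam e := by
  classical
  set S := (Finset.range R).filter
      (fun i => ¬ (e.1 ∈ ball H lam w i ↔ e.2 ∈ ball H lam w i)) with hS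
  rcases S.eq_empty_or_nonempty with h | h
  · rw [h]; simp
  set i0 := S.min' h with hi0
  have hi0S : i0 ∈ S := S.min'_mem h
  have hboth : ∀ j, i0 + lam e ≤ j → e.1 ∈ ball H lam w j ∧ e.2 ∈ ball H lam w j := by
    intro j hj
    have h1 := (Finset.mem_filter.1 hi0S).2
    have h2 : lam (e.2, e.1) = lam e := hls e
    have h3 : (e.2, e.1) ∈ H := hHs e he
    by_cases c1 : e.1 ∈ ball H lam w i0
    · exact ⟨ball_mono H lam w (by omega) c1,
        ball_mono H lam w hj (ball_step (y := e.2) c1 he)⟩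
    · have c2 : e.2 ∈ ball H lam w i0 := by tauto
      have := ball_step c2 h3
      rw [h2] at this
      exact ⟨ball_mono H lam w hj this, ball_mono H lam w (by omega) c2⟩
  have hsub : S ⊆ Finset.Ico i0 (i0 + lam e) := by
    intro j hj
    rw [Finset.mem_Ico]
    refine ⟨S.min'_le j hj, ?_⟩
    by_contra hlt
    have := hboth j (by omega)
    exact (Finset.mem_filter.1 hj).2 ⟨fun _ => this.2, fun _ => this.1⟩
  have := Finset.card_le_card hsub
  simpa using this

theorem ball_small {H : Finset (V × V)} {lam : V × V → ℕ} {lg : ℕ}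
    (hl : ∀ e, lam e = 0 ∨ lg ≤ lam e) (w : V) (i : ℕ) (hi : i < lg) :
    ball H lam w i = ball H lam w 0 := by
  ext u
  rw [mem_ball, mem_ball]
  constructor
  · rintro ⟨p, h1, h2⟩
    refine ⟨p, h1, ?_⟩
    clear h1
    induction p with
    | nil => simp
    | cons e p ih =>
      simp only [nsum_cons] at h2 ⊢
      have := ih (by omega)
      rcases hl e with h | h <;> omega
  · rintro ⟨p, h1, h2⟩
    exact ⟨p, h1, by omega⟩

end Ball

set_option linter.unusedSectionVars false

section Decomp
variable {V : Type} [Fintype V] [DecidableEq V]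

/-- A walk touching the ball has both endpoints close to the centre. -/
theorem near_ends {H : Finset (V × V)} {lam : V × V → ℕ} (hHs : ∀ e ∈ H, e.swap ∈ H)
    (hls : ∀ e, lam e.swap = lam e) {v s t x : V} {p : List (V × V)}
    (hp : IsWalk (↑H : Set (V × V)) s t p) {i : ℕ} (hx : x ∈ ball H lam v i)
    (hxp : x = s ∨ ∃ e ∈ p, x = e.1 ∨ x = e.2) :
    s ∈ ball H lam v (i + nsum lam p) ∧ t ∈ ball H lam v (i + nsum lam p) := by
  have hsplit : ∃ p1 p2, p = p1 ++ p2 ∧ IsWalk (↑H : Set (V × V)) s x p1 ∧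
      IsWalk (↑H : Set (V × V)) x t p2 := by
    rcases hxp with rfl | ⟨e, he, h⟩
    · exact ⟨[], p, rfl, rfl, hp⟩
    · obtain ⟨l1, l2, rfl⟩ := List.append_of_mem he
      obtain ⟨b, hb1, hb2⟩ := isWalk_append_iff.1 hp
      rcases h with rfl | rfl
      · refine ⟨l1, e :: l2, rfl, ?_, ?_⟩
        · rw [hb2.1]; exact hb1
        · exact ⟨rfl, hb2.2⟩
      · refine ⟨l1 ++ [e], l2, by simp, ?_, hb2.2.2⟩
        exact isWalk_append hb1 ⟨hb2.1, hb2.2.1, rfl⟩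
  obtain ⟨p1, p2, rfl, h1, h2⟩ := hsplit
  obtain ⟨r, hr, hri⟩ := mem_ball.1 hx
  constructor
  · refine mem_ball.2 ⟨r ++ rev p1, isWalk_append hr (isWalk_rev (fun e he => hHs e he) h1), ?_⟩
    simp [nsum_rev hls]; omega
  · refine mem_ball.2 ⟨r ++ p2, isWalk_append hr h2, ?_⟩
    simp; omega

/-- One level of the junction decomposition. -/
theorem decomp (H : Finset (V × V)) (lam : V × V → ℕ) (hHs : ∀ e ∈ H, e.swap ∈ H)
    (hls : ∀ e, lam e.swap = lam e) (lg : ℕ) (hlg : 0 < lg) (hl : ∀ e, lam e = 0 ∨ lg ≤ lam e)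
    (U : Finset V) (hU : U.Nonempty) (hHU : ∀ e ∈ H, e.1 ∈ U ∧ e.2 ∈ U)
    (hUc : U.card < 2 ^ lg) {ι : Type} [DecidableEq ι] (I : Finset ι) (P : ι → List (V × V))
    (s t : ι → V) (hs : ∀ i ∈ I, s i ∈ U)
    (hP : ∀ i ∈ I, IsWalk (↑H : Set (V × V)) (s i) (t i) (P i)) :
    ∃ (v : V) (κ : V → Option V) (Z : Finset V) (cut : Finset ι) (ds : ι → ℕ), v ∈ U ∧
      (∀ g, 2 * ((U \ Z).filter (fun u => κ u = g)).card ≤ U.card) ∧ cut ⊆ I ∧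
      (∀ i ∈ I, i ∉ cut → s i ∉ Z ∧ ∀ e ∈ P i, e.1 ∉ Z ∧ e.2 ∉ Z ∧ κ e.1 = κ e.2) ∧
      (∀ i ∈ cut, s i ∈ ball H lam v (ds i) ∧ t i ∈ ball H lam v (ds i)) ∧
      ∑ i ∈ cut, (2 * ds i : ℝ) ≤ 38 * lg * ∑ i ∈ I, (nsum lam (P i) : ℝ) := by
  classical
  set Vol : ℝ := ∑ i ∈ I, (nsum lam (P i) : ℝ) with hVol
  have hVol0 : 0 ≤ Vol := Finset.sum_nonneg (fun _ _ => Nat.cast_nonneg _)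
  have hlg1 : (1 : ℝ) ≤ lg := by exact_mod_cast hlg
  by_cases h0 : ∃ v ∈ U, U.card ≤ 2 * (ball H lam v 0).card
  · -- a zero ball is large
    obtain ⟨v, hv, hvc⟩ := h0
    set Z := ball H lam v 0 with hZ
    set bad : ι → Prop := fun i => ∃ x ∈ Z, x = s i ∨ ∃ e ∈ P i, x = e.1 ∨ x = e.2 with hbad
    refine ⟨v, fun _ => none, Z, I.filter bad, fun i => nsum lam (P i), hv, ?_,
      Finset.filter_subset _ _, ?_, ?_, ?_⟩
    · intro g
      show 2 * ((U \ Z).filter (fun u => none = g)).card ≤ U.card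
      have h1 : ((U \ Z).filter (fun u => none = g)).card ≤ (U \ Z).card :=
        Finset.card_le_card (Finset.filter_subset _ _)
      have h2 := Finset.card_sdiff_add_card_eq_card (ball_subset (lam := lam) hHU hv 0)
      rw [← hZ] at h2
      omega
    · intro i hi hic
      have hnb : ¬ bad i := fun h => hic (Finset.mem_filter.2 ⟨hi, h⟩)
      refine ⟨fun h => hnb ⟨_, h, Or.inl rfl⟩, fun e he => ⟨fun h => ?_, fun h => ?_, rfl⟩⟩
      · exact hnb ⟨_, h, Or.inr ⟨e, he, Or.inl rfl⟩⟩
      · exact hnb ⟨_, h, Or.inr ⟨e, he, Or.inr rfl⟩⟩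
    · intro i hi
      obtain ⟨hi, x, hx, hxp⟩ := Finset.mem_filter.1 hi
      have := near_ends hHs hls (hP i hi) hx hxp
      simpa using this
    · rw [← Finset.mul_sum]
      have : ∑ i ∈ I with bad i, (nsum lam (P i) : ℝ) ≤ Vol :=
        Finset.sum_le_sum_of_subset_of_nonneg (Finset.filter_subset _ _)
          (fun _ _ _ => Nat.cast_nonneg _)
      nlinarith
  -- flow
  set f : V × V → ℝ := fun e => ∑ i ∈ I, ((P i).count e : ℝ) with hf
  have hf0 : ∀ e, 0 ≤ f e := fun e => Finset.sum_nonneg (fun _ _ => Nat.cast_nonneg _)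
  have hcount : ∀ (p : List (V × V)), (∀ e ∈ p, e ∈ H) → ∀ g : V × V → ℝ,
      ∑ e ∈ H, (p.count e : ℝ) * g e = (p.map g).sum := by
    intro p hp g
    induction p with
    | nil => simp
    | cons a p ih =>
      rw [List.map_cons, List.sum_cons, ← ih (fun e he => hp e (by simp [he]))]
      have : ∀ e, ((a :: p).count e : ℝ) * g e = (if e = a then g a else 0) + p.count e * g e := by
        intro e
        by_cases h : e = a
        · subst h; simp; ring
        · rw [List.count_cons_of_ne (fun h' => h h'.symm)]; simp [h]
      simp only [this, Finset.sum_add_distrib]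
      rw [Finset.sum_ite_eq' H a, if_pos (hp a (by simp))]
  have hPH : ∀ i ∈ I, ∀ e ∈ P i, e ∈ H := fun i hi e he => isWalk_mem (hP i hi) e he
  have hflam : ∑ e ∈ H, f e * lam e = Vol := by
    simp only [hf, Finset.sum_mul]
    rw [Finset.sum_comm]
    refine Finset.sum_congr rfl (fun i hi => ?_)
    rw [hcount (P i) (hPH i hi) (fun e => (lam e : ℝ))]
    simp [nsum, Function.comp_def, Nat.cast_list_sum]
  have hfin : ∀ S : Finset (V × V), S ⊆ H → ∀ C ⊆ I, (∀ i ∈ C, ∃ e ∈ P i, e ∈ S) →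
      (C.card : ℝ) ≤ ∑ e ∈ S, f e := by
    intro S hS C hC h
    simp only [hf]
    rw [Finset.sum_comm]
    calc (C.card : ℝ) = ∑ i ∈ C, (1 : ℝ) := by simp
      _ ≤ ∑ i ∈ C, ∑ e ∈ S, ((P i).count e : ℝ) := by
        refine Finset.sum_le_sum (fun i hi => ?_)
        obtain ⟨e, he, heS⟩ := h i hi
        have h1 : (1 : ℝ) ≤ (P i).count e := by
          exact_mod_cast List.count_pos_iff.2 he
        exact h1.trans (Finset.single_le_sum (f := fun e => ((P i).count e : ℝ))
          (fun _ _ => Nat.cast_nonneg _) heS)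
      _ ≤ ∑ i ∈ I, ∑ e ∈ S, ((P i).count e : ℝ) :=
        Finset.sum_le_sum_of_subset_of_nonneg hC
          (fun _ _ _ => Finset.sum_nonneg (fun _ _ => Nat.cast_nonneg _))
  -- carving with a small radius
  have hcarve : ∀ q, 0 < q → (∀ w ∈ U, ∀ i < lg * q, 2 * (ball H lam w i).card ≤ U.card) →
      ∀ W ⊆ U, ∃ part : V → V, (∀ u ∈ W, part u ∈ W) ∧
        (∀ w, 2 * (W.filter (fun u => part u = w)).card ≤ U.card) ∧
        (q : ℝ) * ∑ e ∈ H with (e.1 ∈ W ∧ e.2 ∈ W ∧ part e.1 ≠ part e.2), f e ≤ 4 * Vol := by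
    intro q hq hsm W hWU
    have hUpos : (0 : ℝ) < U.card := by exact_mod_cast hU.card_pos
    have hβ : 0 ≤ Vol / U.card := div_nonneg hVol0 hUpos.le
    have hUβ : (U.card : ℝ) * (Vol / U.card) = Vol := by field_simp
    obtain ⟨part, h1, h2⟩ := carve H f hf0 lam (ball H lam) (ball_mono H lam) (self_ball H lam)
      (fun w e he R => ball_cut hHs hls w e he R) lg q hq hlg (Vol / U.card) hβ (by
        rw [hflam]
        have : ((U.card : ℝ) + 1) * (Vol / U.card) ≤ 2 ^ lg * (Vol / U.card) :=
          mul_le_mul_of_nonneg_right (by exact_mod_cast hUc) hβ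
        linarith) W.card W le_rfl
    refine ⟨part, fun u hu => (h1 u hu).1, fun w => ?_, h2.trans ?_⟩
    · rcases (W.filter (fun u => part u = w)).eq_empty_or_nonempty with h | ⟨u, hu⟩
      · rw [h]; simp
      · obtain ⟨hu1, hu2⟩ := Finset.mem_filter.1 hu
        have hwU : w ∈ U := by rw [← hu2]; exact hWU (h1 u hu1).1
        have hpos : 0 < lg * q := Nat.mul_pos hlg hq
        refine le_trans (Nat.mul_le_mul_left 2 (Finset.card_le_card ?_))
          (hsm w hwU (lg * q - 1) (by omega))
        intro x hx
        obtain ⟨hx1, hx2⟩ := Finset.mem_filter.1 hx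
        obtain ⟨i, hi, hxi⟩ := (h1 x hx1).2
        rw [hx2] at hxi
        exact ball_mono H lam w (by omega) hxi
    · have a1 : ∑ e ∈ H with (e.1 ∈ W ∧ e.2 ∈ W), f e * lam e ≤ Vol := by
        rw [← hflam]
        exact Finset.sum_le_sum_of_subset_of_nonneg (Finset.filter_subset _ _)
          (fun _ _ _ => mul_nonneg (hf0 _) (Nat.cast_nonneg _))
      have a2 : (W.card : ℝ) * (Vol / U.card) ≤ U.card * (Vol / U.card) :=
        mul_le_mul_of_nonneg_right (by exact_mod_cast Finset.card_le_card hWU) hβ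
      linarith
  by_cases hbig : ∃ g, ∃ v ∈ U, U.card ≤ 2 * (ball H lam v g).card
  · obtain ⟨v, hv, hvc⟩ := Nat.find_spec hbig
    set g := Nat.find hbig with hg
    have hmin : ∀ w ∈ U, ∀ i < g, 2 * (ball H lam w i).card ≤ U.card := by
      intro w hw i hi
      by_contra hlt
      exact Nat.find_min hbig hi ⟨w, hw, by omega⟩
    have hglg : lg ≤ g := by
      by_contra hlt
      rw [ball_small hl v g (by omega)] at hvc
      exact h0 ⟨v, hv, hvc⟩
    set q := g / lg with hqdef
    have hq : 0 < q := Nat.div_pos hglg hlg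
    have hqg : lg * q ≤ g := Nat.mul_div_le g lg
    have hgq : g ≤ 2 * (lg * q) := by
      have h1 : g < lg * (q + 1) := Nat.lt_mul_div_succ g hlg
      have h2 : lg * 1 ≤ lg * q := Nat.mul_le_mul_left lg hq
      have h3 : lg * (q + 1) = lg * q + lg := by ring
      omega
    have hg0 : 0 < g := by omega
    obtain ⟨i0, hi1, hi2, hi3⟩ := avg_radius H f hf0 lam (ball H lam v) (ball_mono H lam v)
      (fun e he R => ball_cut hHs hls v e he R) g g hg0
    set W := ball H lam v i0 with hW
    have hWU : W ⊆ U := ball_subset hHU hv i0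
    obtain ⟨part, hp1, hp2, hp3⟩ := hcarve q hq
      (fun w hw i hi => hmin w hw i (lt_of_lt_of_le hi hqg)) W hWU
    set S1 := H.filter (fun e => ¬ (e.1 ∈ W ↔ e.2 ∈ W)) with hS1
    set S2 := H.filter (fun e => e.1 ∈ W ∧ e.2 ∈ W ∧ part e.1 ≠ part e.2) with hS2
    have hi4 : (g : ℝ) * ∑ e ∈ S1, f e ≤ Vol := by
      refine hi3.trans ?_
      rw [← hflam]
      exact Finset.sum_le_sum_of_subset_of_nonneg (Finset.filter_subset _ _)
          (fun _ _ _ => mul_nonneg (hf0 _) (Nat.cast_nonneg _))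
    set κ : V → Option V := fun u => if u ∈ W then some (part u) else none with hκ
    have hκS : ∀ e ∈ H, κ e.1 ≠ κ e.2 → e ∈ S1 ∪ S2 := by
      intro e he hne
      simp only [hκ] at hne
      simp only [hS1, hS2, Finset.mem_union, Finset.mem_filter]
      by_cases c1 : e.1 ∈ W <;> by_cases c2 : e.2 ∈ W
      · right
        simp only [c1, c2, if_true] at hne
        exact ⟨he, c1, c2, fun h => hne (congrArg some h)⟩
      · left; exact ⟨he, by simp [c1, c2]⟩
      · left; exact ⟨he, by simp [c1, c2]⟩
      · simp [c1, c2] at hne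
    set cut := I.filter (fun i => ∃ e ∈ P i, κ e.1 ≠ κ e.2) with hcutdef
    have hcutI : cut ⊆ I := Finset.filter_subset _ _
    refine ⟨v, κ, ∅, cut, fun i => 2 * g + nsum lam (P i), hv, ?_, hcutI, ?_, ?_, ?_⟩
    · intro o
      rw [Finset.sdiff_empty]
      cases o with
      | none =>
        have h1 : (U.filter (fun u => κ u = none)) ⊆ U \ W := by
          intro u hu
          obtain ⟨hu1, hu2⟩ := Finset.mem_filter.1 hu
          refine Finset.mem_sdiff.2 ⟨hu1, fun h => ?_⟩
          simp [hκ, h] at hu2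
        have h2 := Finset.card_sdiff_add_card_eq_card hWU
        have h3 := Finset.card_le_card h1
        have h4 := Finset.card_le_card (ball_mono H lam v hi1)
        rw [← hW] at h4
        omega
      | some w =>
        refine le_trans (Nat.mul_le_mul_left 2 (Finset.card_le_card ?_)) (hp2 w)
        intro u hu
        obtain ⟨hu1, hu2⟩ := Finset.mem_filter.1 hu
        by_cases h : u ∈ W
        · simp only [hκ, h, if_true, Option.some.injEq] at hu2
          exact Finset.mem_filter.2 ⟨h, hu2⟩
        · simp [hκ, h] at hu2
    · intro i hi hic
      refine ⟨by simp, fun e he => ⟨by simp, by simp, ?_⟩⟩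
      by_contra hne
      exact hic (Finset.mem_filter.2 ⟨hi, e, he, hne⟩)
    · intro i hi
      obtain ⟨hi, e, he, hne⟩ := Finset.mem_filter.1 hi
      have hx : ∃ x ∈ W, x = s i ∨ ∃ e ∈ P i, x = e.1 ∨ x = e.2 := by
        by_cases c1 : e.1 ∈ W
        · exact ⟨_, c1, Or.inr ⟨e, he, Or.inl rfl⟩⟩
        by_cases c2 : e.2 ∈ W
        · exact ⟨_, c2, Or.inr ⟨e, he, Or.inr rfl⟩⟩
        simp [hκ, c1, c2] at hne
      obtain ⟨x, hx, hxp⟩ := hx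
      have := near_ends hHs hls (hP i hi) (ball_mono H lam v (show i0 ≤ 2 * g by omega) hx) hxp
      exact this
    · have hc1 : (cut.card : ℝ) ≤ ∑ e ∈ S1, f e + ∑ e ∈ S2, f e := by
        refine (hfin (S1 ∪ S2) (Finset.union_subset (Finset.filter_subset _ _)
          (Finset.filter_subset _ _)) cut hcutI ?_).trans ?_
        · intro i hi
          obtain ⟨hi, e, he, hne⟩ := Finset.mem_filter.1 hi
          exact ⟨e, he, hκS e (hPH i hi e he) hne⟩
        · have := Finset.sum_union_inter (s₁ := S1) (s₂ := S2) (f := f)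
          have h0 : 0 ≤ ∑ p ∈ S1 ∩ S2, f p := Finset.sum_nonneg (fun p _ => hf0 p)
          linarith
      have hcV : ∑ i ∈ cut, (nsum lam (P i) : ℝ) ≤ Vol :=
        Finset.sum_le_sum_of_subset_of_nonneg hcutI (fun _ _ _ => Nat.cast_nonneg _)
      have hgS2 : (g : ℝ) * ∑ e ∈ S2, f e ≤ 8 * lg * Vol := by
        have h1 : (g : ℝ) ≤ 2 * (lg * q) := by exact_mod_cast hgq
        have h2 : 0 ≤ ∑ e ∈ S2, f e := Finset.sum_nonneg (fun _ _ => hf0 _)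
        calc (g : ℝ) * ∑ e ∈ S2, f e ≤ 2 * (lg * q) * ∑ e ∈ S2, f e :=
              mul_le_mul_of_nonneg_right h1 h2
          _ = 2 * lg * (q * ∑ e ∈ S2, f e) := by ring
          _ ≤ 2 * lg * (4 * Vol) := mul_le_mul_of_nonneg_left hp3 (by positivity)
          _ = 8 * lg * Vol := by ring
      have e1 : ∑ i ∈ cut, (2 * ((2 * g + nsum lam (P i) : ℕ) : ℝ)) =
          4 * (g * cut.card) + 2 * ∑ i ∈ cut, (nsum lam (P i) : ℝ) := by
        push_cast
        simp only [mul_add, Finset.sum_add_distrib, Finset.sum_const, nsmul_eq_mul, Finset.mul_sum]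
        ring
      rw [e1]
      have h2 : (g : ℝ) * cut.card ≤ g * (∑ e ∈ S1, f e + ∑ e ∈ S2, f e) :=
        mul_le_mul_of_nonneg_left hc1 (Nat.cast_nonneg _)
      nlinarith
  · obtain ⟨v, hv⟩ := hU
    obtain ⟨part, hp1, hp2, hp3⟩ := hcarve (⌈4 * Vol⌉₊ + 1) (by omega)
      (fun w hw i hi => by
        by_contra hlt
        exact hbig ⟨i, w, hw, by omega⟩) U (le_refl _)
    set S2 := H.filter (fun e => e.1 ∈ U ∧ e.2 ∈ U ∧ part e.1 ≠ part e.2) with hS2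
    set cut := I.filter (fun i => ∃ e ∈ P i, part e.1 ≠ part e.2) with hcutdef
    have hcutI : cut ⊆ I := Finset.filter_subset _ _
    have hc1 : (cut.card : ℝ) ≤ ∑ e ∈ S2, f e := by
      refine hfin S2 (Finset.filter_subset _ _) cut hcutI ?_
      intro i hi
      obtain ⟨hi, e, he, hne⟩ := Finset.mem_filter.1 hi
      have := hPH i hi e he
      exact ⟨e, he, Finset.mem_filter.2 ⟨this, (hHU e this).1, (hHU e this).2, hne⟩⟩
    have hlt : ∑ e ∈ S2, f e < 1 := by
      by_contra hge
      push Not at hge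
      have h1 := Nat.le_ceil (4 * Vol)
      push_cast at hp3
      nlinarith
    have hc0 : cut = ∅ := by
      have : (cut.card : ℝ) < 1 := lt_of_le_of_lt hc1 hlt
      exact Finset.card_eq_zero.1 (by exact_mod_cast Nat.lt_one_iff.1 (by exact_mod_cast this))
    refine ⟨v, fun u => some (part u), ∅, ∅, fun _ => 0, hv, ?_, by simp, ?_, by simp, ?_⟩
    · intro o
      rw [Finset.sdiff_empty]
      cases o with
      | none => simp
      | some w => simpa using hp2 w
    · intro i hi _
      refine ⟨by simp, fun e he => ⟨by simp, by simp, ?_⟩⟩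
      by_contra hne
      have : i ∈ cut := Finset.mem_filter.2 ⟨hi, e, he, fun h => hne (congrArg some h)⟩
      rw [hc0] at this
      simp at this
    · simp; positivity

end Decomp

set_option linter.unusedSectionVars false

section Junction
variable {V : Type} [Fintype V] [DecidableEq V]

/-- Edges of `F` inside `U`. -/
def inside (F : Finset (V × V)) (U : Finset V) : Finset (V × V) :=
  F.filter (fun e => e.1 ∈ U ∧ e.2 ∈ U)

theorem mem_inside {F : Finset (V × V)} {U : Finset V} {e : V × V} :
    e ∈ inside F U ↔ e ∈ F ∧ e.1 ∈ U ∧ e.2 ∈ U := by simp [inside]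

theorem walk_color {E : Set (V × V)} {κ : V → Option V} {s t : V} {p : List (V × V)}
    (hp : IsWalk E s t p) (h : ∀ e ∈ p, κ e.1 = κ e.2) :
    ∀ e ∈ p, κ e.1 = κ s ∧ κ e.2 = κ s := by
  induction p generalizing s with
  | nil => simp
  | cons e p ih =>
    intro e' he'
    have h0 := h e (by simp)
    rcases List.mem_cons.1 he' with rfl | he'
    · rw [← h0, hp.1]; exact ⟨rfl, rfl⟩
    · have := ih hp.2.2 (fun e he => h e (by simp [he])) e' he'
      rw [← h0, hp.1] at this
      exact this

theorem nsum_wsum {lam : V × V → ℕ} {ℓ : V × V → ℝ} {τ : ℝ} (h : ∀ e, ℓ e ≤ τ * lam e)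
    (p : List (V × V)) : wsum ℓ p ≤ τ * nsum lam p := by
  induction p with
  | nil => simp
  | cons e p ih =>
    simp only [wsum_cons, nsum_cons, Nat.cast_add]
    have := h e
    linarith

/-- The junction tree representation of a solution. -/
theorem junction (E : Set (V × V)) {c ℓ : V × V → ℝ} (hc : ∀ e, 0 ≤ c e) (hl : ∀ e, 0 ≤ ℓ e)
    (F : Finset (V × V)) (hFE : ∀ e ∈ F, e ∈ E) (hFs : ∀ e ∈ F, e.swap ∈ F)
    (lam : V × V → ℕ) (hls : ∀ e, lam e.swap = lam e) (τ : ℝ) (hτ0 : 0 ≤ τ)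
    (hτ : ∀ e, ℓ e ≤ τ * lam e) (lg : ℕ) (hlg : 0 < lg) (hlam : ∀ e, lam e = 0 ∨ lg ≤ lam e)
    (hn : Fintype.card V < 2 ^ lg) {ι : Type} [DecidableEq ι] (P : ι → List (V × V))
    (s t : ι → V) : ∀ (m : ℕ) (U : Finset V) (I : Finset ι), U.card < 2 ^ m →
    (∀ i ∈ I, s i ∈ U) →
    (∀ i ∈ I, IsWalk (↑(inside F U) : Set (V × V)) (s i) (t i) (P i)) →
    ∃ (Q : Finset (V × List (Lab V))) (r : ι → V) (a b : ι → List (Lab V)),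
      (∀ i ∈ I, (a i).length ≤ lg ∧ (b i).length ≤ lg ∧ en E c ℓ (r i) (a i) = s i ∧
        en E c ℓ (r i) (b i) = t i ∧ ∀ p, p ≠ [] → (p <+: a i ∨ p <+: b i) → (r i, p) ∈ Q) ∧
      (∀ z ∈ Q, z.2 ≠ []) ∧
      ∑ z ∈ Q, Cn E c ℓ z.1 z.2 ≤ 2 * lg * m * ∑ e ∈ inside F U, c e ∧
      ∑ i ∈ I, (Lam E c ℓ (r i) (a i) + Lam E c ℓ (r i) (b i)) ≤
        38 * lg * m * (τ * ∑ i ∈ I, (nsum lam (P i) : ℝ)) := by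
  classical
  intro m
  induction m with
  | zero =>
    intro U I hU hs _
    have hU0 : U = ∅ := Finset.card_eq_zero.1 (by omega)
    have hI0 : I = ∅ := by
      rw [Finset.eq_empty_iff_forall_notMem]
      intro i hi
      have := hs i hi
      rw [hU0] at this
      simp at this
    subst hI0
    refine ⟨∅, s, fun _ => [], fun _ => [], by simp, by simp, by simp, by simp⟩
  | succ m ih =>
    intro U I hU hs hP
    rcases U.eq_empty_or_nonempty with hU0 | hUne
    · have hI0 : I = ∅ := by
        rw [Finset.eq_empty_iff_forall_notMem]
        intro i hi
        have := hs i hi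
        rw [hU0] at this
        simp at this
      subst hI0
      refine ⟨∅, s, fun _ => [], fun _ => [], by simp, by simp, ?_, by simp⟩
      simp only [Finset.sum_empty]
      exact mul_nonneg (by positivity) (Finset.sum_nonneg (fun _ _ => hc _))
    set H := inside F U with hH
    obtain ⟨v, κ, Z, cut, ds, hv, hpc, hcutI, hnc, hcut, hsum⟩ := decomp H lam
      (by
        intro e he
        obtain ⟨h1, h2, h3⟩ := mem_inside.1 he
        exact mem_inside.2 ⟨hFs e h1, h3, h2⟩) hls lg hlg hlam U hUne
      (fun e he => (mem_inside.1 he).2) ((Finset.card_le_univ U).trans_lt hn) I P s t hs hP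
    obtain ⟨q, Q0, hq1, hq2, hq3⟩ := spt E hc hl H
      (fun e he => hFE e (mem_inside.1 he).1) lg hn v
    set Ug : Option V → Finset V := fun g => (U \ Z).filter (fun u => κ u = g) with hUg
    set Ig : Option V → Finset ι := fun g => (I \ cut).filter (fun i => κ (s i) = g) with hIg
    have hih : ∀ g, ∃ (Q : Finset (V × List (Lab V))) (r : ι → V) (a b : ι → List (Lab V)),
      (∀ i ∈ Ig g, (a i).length ≤ lg ∧ (b i).length ≤ lg ∧ en E c ℓ (r i) (a i) = s i ∧
        en E c ℓ (r i) (b i) = t i ∧ ∀ p, p ≠ [] → (p <+: a i ∨ p <+: b i) → (r i, p) ∈ Q) ∧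
      (∀ z ∈ Q, z.2 ≠ []) ∧
      ∑ z ∈ Q, Cn E c ℓ z.1 z.2 ≤ 2 * lg * m * ∑ e ∈ inside F (Ug g), c e ∧
      ∑ i ∈ Ig g, (Lam E c ℓ (r i) (a i) + Lam E c ℓ (r i) (b i)) ≤
        38 * lg * m * (τ * ∑ i ∈ Ig g, (nsum lam (P i) : ℝ)) := by
      intro g
      apply ih
      · have := hpc g
        rw [pow_succ] at hU
        simp only [hUg]
        omega
      · intro i hi
        obtain ⟨hi1, hi2⟩ := Finset.mem_filter.1 hi
        obtain ⟨hi3, hi4⟩ := Finset.mem_sdiff.1 hi1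
        exact Finset.mem_filter.2 ⟨Finset.mem_sdiff.2 ⟨hs i hi3, (hnc i hi3 hi4).1⟩, hi2⟩
      · intro i hi
        obtain ⟨hi1, hi2⟩ := Finset.mem_filter.1 hi
        obtain ⟨hi3, hi4⟩ := Finset.mem_sdiff.1 hi1
        have hn' := (hnc i hi3 hi4).2
        have hcol := walk_color (hP i hi3) (fun e he => (hn' e he).2.2)
        refine isWalk_of_mem (hP i hi3) (fun e he => ?_)
        have heH := isWalk_mem (hP i hi3) e he
        obtain ⟨h1, h2, h3⟩ := mem_inside.1 heH
        have := hcol e he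
        rw [hi2] at this
        refine mem_inside.2 ⟨h1, ?_, ?_⟩
        · exact Finset.mem_filter.2 ⟨Finset.mem_sdiff.2 ⟨h2, (hn' e he).1⟩, this.1⟩
        · exact Finset.mem_filter.2 ⟨Finset.mem_sdiff.2 ⟨h3, (hn' e he).2.1⟩, this.2⟩
    choose Qg rg ag bg hg1 hg2 hg3 hg4 using hih
    set r : ι → V := fun i => if i ∈ cut then v else rg (κ (s i)) i with hr
    set a : ι → List (Lab V) := fun i => if i ∈ cut then q (s i) else ag (κ (s i)) i with ha
    set b : ι → List (Lab V) := fun i => if i ∈ cut then q (t i) else bg (κ (s i)) i with hb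
    have hcw : ∀ i ∈ cut, ∃ p1 p2, IsWalk (↑H : Set (V × V)) v (s i) p1 ∧
        IsWalk (↑H : Set (V × V)) v (t i) p2 ∧ wsum ℓ p1 ≤ τ * ds i ∧ wsum ℓ p2 ≤ τ * ds i := by
      intro i hi
      obtain ⟨h1, h2⟩ := hcut i hi
      obtain ⟨p1, hp1, hp1'⟩ := mem_ball.1 h1
      obtain ⟨p2, hp2, hp2'⟩ := mem_ball.1 h2
      refine ⟨p1, p2, hp1, hp2, (nsum_wsum hτ p1).trans ?_, (nsum_wsum hτ p2).trans ?_⟩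
      · exact mul_le_mul_of_nonneg_left (by exact_mod_cast hp1') hτ0
      · exact mul_le_mul_of_nonneg_left (by exact_mod_cast hp2') hτ0
    refine ⟨Q0.image (fun p => (v, p)) ∪ Finset.univ.biUnion Qg, r, a, b, ?_, ?_, ?_, ?_⟩
    · intro i hi
      by_cases hic : i ∈ cut
      · simp only [hr, ha, hb, hic, if_true]
        obtain ⟨p1, p2, w1, w2, _, _⟩ := hcw i hic
        obtain ⟨x1, x2, _, x4⟩ := hq1 _ _ w1
        obtain ⟨y1, y2, _, y4⟩ := hq1 _ _ w2
        refine ⟨x1, y1, x2, y2, fun p hp h => Finset.mem_union_left _ ?_⟩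
        refine Finset.mem_image.2 ⟨p, ?_, rfl⟩
        rcases h with h | h
        · exact x4 p hp h
        · exact y4 p hp h
      · simp only [hr, ha, hb, hic, if_false]
        obtain ⟨x1, x2, x3, x4, x5⟩ := hg1 (κ (s i)) i
          (Finset.mem_filter.2 ⟨Finset.mem_sdiff.2 ⟨hi, hic⟩, rfl⟩)
        refine ⟨x1, x2, x3, x4, fun p hp h => Finset.mem_union_right _ ?_⟩
        exact Finset.mem_biUnion.2 ⟨κ (s i), Finset.mem_univ _, x5 p hp h⟩
    · intro z hz
      rcases Finset.mem_union.1 hz with h | h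
      · obtain ⟨p, hp, rfl⟩ := Finset.mem_image.1 h
        exact hq2 p hp
      · obtain ⟨g, _, h⟩ := Finset.mem_biUnion.1 h
        exact hg2 g z h
    · have hnn : ∀ z : V × List (Lab V), 0 ≤ Cn E c ℓ z.1 z.2 := fun z => Cn_nonneg E hc _ _
      have h1 : ∑ z ∈ Q0.image (fun p => (v, p)), Cn E c ℓ z.1 z.2 ≤ 2 * lg * ∑ e ∈ H, c e := by
        rw [Finset.sum_image (fun x _ y _ h => (Prod.ext_iff.1 h).2)]
        exact hq3
      have h2 : ∑ z ∈ Finset.univ.biUnion Qg, Cn E c ℓ z.1 z.2 ≤ 2 * lg * m * ∑ e ∈ H, c e := by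
        refine (sum_biUnion_le _ _ _ hnn).trans ((Finset.sum_le_sum (fun g _ => hg3 g)).trans ?_)
        rw [← Finset.mul_sum]
        refine mul_le_mul_of_nonneg_left ?_ (by positivity)
        rw [← Finset.sum_biUnion]
        · refine Finset.sum_le_sum_of_subset_of_nonneg ?_ (fun _ _ _ => hc _)
          intro e he
          obtain ⟨g, _, he⟩ := Finset.mem_biUnion.1 he
          obtain ⟨e1, e2, e3⟩ := mem_inside.1 he
          exact mem_inside.2 ⟨e1, (Finset.mem_sdiff.1 (Finset.mem_filter.1 e2).1).1,
            (Finset.mem_sdiff.1 (Finset.mem_filter.1 e3).1).1⟩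
        · intro g _ g' _ hgg
          rw [Function.onFun, Finset.disjoint_left]
          intro e he he'
          have e1 := (Finset.mem_filter.1 (mem_inside.1 he).2.1).2
          have e2 := (Finset.mem_filter.1 (mem_inside.1 he').2.1).2
          exact hgg (e1.symm.trans e2)
      have := Finset.sum_union_inter (s₁ := Q0.image (fun p => (v, p)))
        (s₂ := Finset.univ.biUnion Qg) (f := fun z => Cn E c ℓ z.1 z.2)
      have h0 : 0 ≤ ∑ z ∈ Q0.image (fun p => (v, p)) ∩ Finset.univ.biUnion Qg,
        Cn E c ℓ z.1 z.2 := Finset.sum_nonneg (fun p _ => hnn p)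
      push_cast
      linarith
    · set G : ι → ℝ := fun i => Lam E c ℓ (r i) (a i) + Lam E c ℓ (r i) (b i) with hG
      have h1 : ∑ i ∈ cut, G i ≤ τ * ∑ i ∈ cut, (2 * ds i : ℝ) := by
        rw [Finset.mul_sum]
        refine Finset.sum_le_sum (fun i hi => ?_)
        simp only [hG, hr, ha, hb, hi, if_true]
        obtain ⟨p1, p2, w1, w2, z1, z2⟩ := hcw i hi
        have x3 := (hq1 _ _ w1).2.2.1
        have y3 := (hq1 _ _ w2).2.2.1
        linarith
      have h2 : ∑ i ∈ I \ cut, G i ≤ 38 * lg * m * (τ * ∑ i ∈ I \ cut, (nsum lam (P i) : ℝ)) := by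
        rw [← Finset.sum_fiberwise (I \ cut) (fun i => κ (s i)) G,
          ← Finset.sum_fiberwise (I \ cut) (fun i => κ (s i)) (fun i => (nsum lam (P i) : ℝ)),
          Finset.mul_sum, Finset.mul_sum]
        refine Finset.sum_le_sum (fun g _ => le_trans (le_of_eq ?_) (hg4 g))
        refine Finset.sum_congr rfl (fun i hi => ?_)
        obtain ⟨hi1, hi2⟩ := Finset.mem_filter.1 hi
        have hi3 := (Finset.mem_sdiff.1 hi1).2
        simp only [hG, hr, ha, hb, hi3, if_false, hi2]
      have h3 : ∑ i ∈ I \ cut, (nsum lam (P i) : ℝ) ≤ ∑ i ∈ I, (nsum lam (P i) : ℝ) :=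
        Finset.sum_le_sum_of_subset_of_nonneg Finset.sdiff_subset (fun _ _ _ => Nat.cast_nonneg _)
      have h4 := mul_le_mul_of_nonneg_left h3 hτ0
      have h5 := mul_le_mul_of_nonneg_left h4 (show (0 : ℝ) ≤ 38 * lg * m by positivity)
      have h6 := mul_le_mul_of_nonneg_left hsum hτ0
      rw [← Finset.sum_sdiff hcutI]
      push_cast
      linarith

end Junction

set_option linter.unusedSectionVars false

theorem exists_delta {α : Type*} (S : Finset α) (f : α → ℝ) (hf : ∀ a, 0 ≤ f a) :
    ∃ δ : ℝ, 0 < δ ∧ ∀ a ∈ S, f a = 0 ∨ δ ≤ f a := by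
  classical
  induction S using Finset.induction_on with
  | empty => exact ⟨1, one_pos, by simp⟩
  | insert a S ha ih =>
    obtain ⟨δ, h0, h⟩ := ih
    by_cases hz : f a = 0
    · refine ⟨δ, h0, fun b hb => ?_⟩
      rcases Finset.mem_insert.1 hb with rfl | hb
      · left; exact hz
      · exact h b hb
    · have hpos : 0 < f a := lt_of_le_of_ne (hf a) (Ne.symm hz)
      refine ⟨min δ (f a), lt_min h0 hpos, fun b hb => ?_⟩
      rcases Finset.mem_insert.1 hb with rfl | hb
      · right; exact min_le_right _ _
      · rcases h b hb with h | h
        · left; exact h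
        · right; exact (min_le_left _ _).trans h

section Benchmark
variable {V : Type} [Fintype V] [DecidableEq V]

/-- Every feasible solution is approximated by a junction-tree solution on chains. -/
theorem benchmark (E : Set (V × V)) {c ℓ : V × V → ℝ} (hc : ∀ e, 0 ≤ c e) (hl : ∀ e, 0 ≤ ℓ e)
    (hE : ∀ e ∈ E, e.swap ∈ E) (hcs : ∀ e, c e.swap = c e) (hls : ∀ e, ℓ e.swap = ℓ e)
    (lg : ℕ) (hlg : 0 < lg) (hn : Fintype.card V < 2 ^ lg) {k : ℕ} (P : Fin k → List (V × V))
    (s t : Fin k → V) (hP : ∀ i, IsWalk E (s i) (t i) (P i)) :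
    ∃ (Q : Finset (V × List (Lab V))) (r : Fin k → V) (a b : Fin k → List (Lab V)),
      (∀ i, (a i).length ≤ lg ∧ (b i).length ≤ lg ∧ en E c ℓ (r i) (a i) = s i ∧
        en E c ℓ (r i) (b i) = t i ∧ ∀ p, p ≠ [] → (p <+: a i ∨ p <+: b i) → (r i, p) ∈ Q) ∧
      (∀ z ∈ Q, z.2 ≠ []) ∧
      ∑ z ∈ Q, Cn E c ℓ z.1 z.2 ≤
        4 * lg ^ 2 * ∑ e ∈ Finset.univ.biUnion fun i => (P i).toFinset, c e ∧
      ∑ i, (Lam E c ℓ (r i) (a i) + Lam E c ℓ (r i) (b i)) ≤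
        76 * lg ^ 2 * ∑ i, wsum ℓ (P i) := by
  classical
  obtain ⟨δ, hδ, hδl⟩ := exists_delta (Finset.univ : Finset (V × V)) ℓ hl
  have hlg' : (0 : ℝ) < lg := by exact_mod_cast hlg
  set τ := δ / lg with hτ
  have hτ0 : 0 < τ := div_pos hδ hlg'
  set lam : V × V → ℕ := fun e => ⌈ℓ e / τ⌉₊ with hlam
  set F0 : Finset (V × V) := Finset.univ.biUnion fun i => (P i).toFinset with hF0
  set F : Finset (V × V) := F0 ∪ F0.image Prod.swap with hF
  have hF0E : ∀ e ∈ F0, e ∈ E := by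
    intro e he
    obtain ⟨i, _, hi⟩ := Finset.mem_biUnion.1 he
    exact isWalk_mem (hP i) e (List.mem_toFinset.1 hi)
  have hl1 : ∀ e, lam e = 0 ∨ (lg ≤ lam e ∧ τ * lam e ≤ 2 * ℓ e) := by
    intro e
    rcases hδl e (Finset.mem_univ _) with h | h
    · left; simp [hlam, h]
    · right
      have h1 : (lg : ℝ) ≤ ℓ e / τ := by
        rw [le_div_iff₀ hτ0, hτ]
        have : (lg : ℝ) * (δ / lg) = δ := by field_simp
        linarith
      refine ⟨?_, ?_⟩
      · have := Nat.le_ceil (ℓ e / τ)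
        exact_mod_cast h1.trans this
      · have h2 := Nat.ceil_lt_add_one (a := ℓ e / τ) (div_nonneg (hl e) hτ0.le)
        have h3 : (1 : ℝ) ≤ lg := by exact_mod_cast hlg
        have h4 : (lam e : ℝ) ≤ 2 * (ℓ e / τ) := by
          show ((⌈ℓ e / τ⌉₊ : ℕ) : ℝ) ≤ _
          linarith
        calc τ * lam e ≤ τ * (2 * (ℓ e / τ)) := mul_le_mul_of_nonneg_left h4 hτ0.le
          _ = 2 * ℓ e := by field_simp
  have hl2 : ∀ e, ℓ e ≤ τ * lam e := by
    intro e
    have := Nat.le_ceil (ℓ e / τ)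
    calc ℓ e = τ * (ℓ e / τ) := by field_simp
      _ ≤ τ * lam e := mul_le_mul_of_nonneg_left this hτ0.le
  have hl3 : ∀ e, τ * lam e ≤ 2 * ℓ e := by
    intro e
    rcases hl1 e with h | h
    · rw [h]; simp; exact hl e
    · exact h.2
  have hns : ∀ p : List (V × V), τ * nsum lam p ≤ 2 * wsum ℓ p := by
    intro p
    induction p with
    | nil => simp
    | cons e p ih =>
      simp only [wsum_cons, nsum_cons, Nat.cast_add]
      have := hl3 e
      linarith
  obtain ⟨Q, r, a, b, h1, h2, h3, h4⟩ := junction E hc hl F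
    (by
      intro e he
      rcases Finset.mem_union.1 he with h | h
      · exact hF0E e h
      · obtain ⟨e', he', rfl⟩ := Finset.mem_image.1 h
        exact hE e' (hF0E e' he'))
    (by
      intro e he
      rcases Finset.mem_union.1 he with h | h
      · exact Finset.mem_union_right _ (Finset.mem_image_of_mem _ h)
      · obtain ⟨e', he', rfl⟩ := Finset.mem_image.1 h
        exact Finset.mem_union_left _ (by simpa using he'))
    lam (by intro e; simp only [hlam, hls e]) τ hτ0.le hl2 lg hlg (fun e => (hl1 e).imp id (·.1))
    hn P s t lg Finset.univ Finset.univ (by simpa using hn) (by simp)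
    (by
      intro i _
      refine isWalk_of_mem (hP i) (fun e he => mem_inside.2 ⟨?_, by simp, by simp⟩)
      refine Finset.mem_union_left _ (Finset.mem_biUnion.2 ⟨i, Finset.mem_univ _, ?_⟩)
      exact List.mem_toFinset.2 he)
  refine ⟨Q, r, a, b, fun i => h1 i (Finset.mem_univ _), h2, h3.trans ?_, h4.trans ?_⟩
  · have hin : inside F Finset.univ = F := by simp [inside]
    rw [hin]
    have e1 : ∑ e ∈ F0.image Prod.swap, c e = ∑ e ∈ F0, c e := by
      rw [Finset.sum_image (fun x _ y _ h => Prod.swap_injective h)]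
      exact Finset.sum_congr rfl (fun e _ => hcs e)
    have e2 := Finset.sum_union_inter (s₁ := F0) (s₂ := F0.image Prod.swap) (f := c)
    have e3 : 0 ≤ ∑ p ∈ F0 ∩ F0.image Prod.swap, c p := Finset.sum_nonneg (fun p _ => hc p)
    have e4 : ∑ e ∈ F, c e ≤ 2 * ∑ e ∈ F0, c e := by rw [hF]; linarith
    have := mul_le_mul_of_nonneg_left e4 (show (0 : ℝ) ≤ 2 * lg * lg by positivity)
    linarith
  · have e1 : τ * ∑ i, (nsum lam (P i) : ℝ) ≤ 2 * ∑ i, wsum ℓ (P i) := by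
      rw [Finset.mul_sum, Finset.mul_sum]
      exact Finset.sum_le_sum (fun i _ => hns (P i))
    have := mul_le_mul_of_nonneg_left e1 (show (0 : ℝ) ≤ 38 * lg * lg by positivity)
    linarith

end Benchmark

set_option linter.unusedSectionVars false

section TreeFlow
variable {L : Type} [Fintype L] [DecidableEq L]

/-- All lists of length at most `d`. -/
def lists (L : Type) [Fintype L] [DecidableEq L] : ℕ → Finset (List L)
  | 0 => {[]}
  | d + 1 => insert [] (Finset.univ.biUnion fun a : L => (lists L d).image (List.cons a))

theorem mem_lists {d : ℕ} {q : List L} : q ∈ lists L d ↔ q.length ≤ d := by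
  induction d generalizing q with
  | zero => simp [lists]
  | succ d ih =>
    cases q with
    | nil => simp [lists]
    | cons a q => simp [lists, ih]

theorem card_lists (d : ℕ) : (lists L d).card ≤ (Fintype.card L + 1) ^ d := by
  induction d with
  | zero => simp [lists]
  | succ d ih =>
    have h1 : (lists L (d + 1)).card ≤ Fintype.card L * (lists L d).card + 1 := by
      refine (Finset.card_insert_le _ _).trans (Nat.succ_le_succ ?_)
      refine Finset.card_biUnion_le.trans ?_
      refine (Finset.sum_le_sum (fun a _ => Finset.card_image_le)).trans ?_
      simp
    have h2 : 1 ≤ (Fintype.card L + 1) ^ d := Nat.one_le_pow _ _ (by omega)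
    have h3 := Nat.mul_le_mul_left (Fintype.card L) ih
    rw [pow_succ]
    nlinarith

theorem sum_lists_succ (d : ℕ) (f : List L → ℝ) :
    ∑ q ∈ lists L (d + 1), f q = f [] + ∑ a : L, ∑ q ∈ lists L d, f (a :: q) := by
  rw [lists, Finset.sum_insert (by simp)]
  congr 1
  rw [Finset.sum_biUnion]
  · refine Finset.sum_congr rfl (fun a _ => ?_)
    rw [Finset.sum_image (fun x _ y _ h => (List.cons.inj h).2)]
  · intro a _ b _ hab
    rw [Function.onFun, Finset.disjoint_left]
    intro q hq hq'
    obtain ⟨x, _, rfl⟩ := Finset.mem_image.1 hq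
    obtain ⟨y, _, h⟩ := Finset.mem_image.1 hq'
    exact hab (List.cons.inj h).1.symm

open Classical in
/-- Flow value from the root to the targets. -/
noncomputable def Fl : ℕ → (List L → ℝ) → (List L → Prop) → ℝ
  | 0, x, T => if T [] then x [] else 0
  | d + 1, x, T => if T [] then x [] else
      min (x []) (∑ a : L, Fl d (fun q => x (a :: q)) (fun q => T (a :: q)))

open Classical in
/-- A minimum cut. -/
noncomputable def ct : ℕ → (List L → ℝ) → (List L → Prop) → Finset (List L)
  | 0, _, T => if T [] then {[]} else ∅
  | d + 1, x, T => if T [] then {[]} else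
      if x [] ≤ ∑ a : L, Fl d (fun q => x (a :: q)) (fun q => T (a :: q)) then {[]} else
        Finset.univ.biUnion fun a : L =>
          (ct d (fun q => x (a :: q)) (fun q => T (a :: q))).image (List.cons a)

theorem Fl_nonneg (d : ℕ) (x : List L → ℝ) (T : List L → Prop) (hx : ∀ q, 0 ≤ x q) :
    0 ≤ Fl d x T := by
  induction d generalizing x T with
  | zero => unfold Fl; split_ifs; exacts [hx _, le_rfl]
  | succ d ih =>
    unfold Fl
    split_ifs
    · exact hx _
    · exact le_min (hx _) (Finset.sum_nonneg (fun a _ => ih _ _ (fun q => hx _)))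

theorem Fl_le (d : ℕ) (x : List L → ℝ) (T : List L → Prop) (hx : ∀ q, 0 ≤ x q) :
    Fl d x T ≤ x [] := by
  cases d with
  | zero => unfold Fl; split_ifs; exacts [le_rfl, hx _]
  | succ d =>
    unfold Fl
    split_ifs
    · exact le_rfl
    · exact min_le_left _ _

theorem ct_sum (d : ℕ) (x : List L → ℝ) (T : List L → Prop) :
    ∑ q ∈ ct d x T, x q = Fl d x T := by
  induction d generalizing x T with
  | zero => unfold ct Fl; split_ifs <;> simp
  | succ d ih =>
    rw [ct, Fl]
    by_cases h1 : T []
    · simp [h1]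
    by_cases h2 : x [] ≤ ∑ a : L, Fl d (fun q => x (a :: q)) (fun q => T (a :: q))
    · simp [h1, h2]
    · simp only [h1, h2, if_false]
      rw [min_eq_right (not_le.1 h2).le, Finset.sum_biUnion]
      · refine Finset.sum_congr rfl (fun a _ => ?_)
        rw [Finset.sum_image (fun x _ y _ h => (List.cons.inj h).2), ← ih]
      · intro a _ b _ hab
        rw [Function.onFun, Finset.disjoint_left]
        intro q hq hq'
        obtain ⟨x, _, rfl⟩ := Finset.mem_image.1 hq
        obtain ⟨y, _, h⟩ := Finset.mem_image.1 hq'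
        exact hab (List.cons.inj h).1.symm

theorem ct_lists (d : ℕ) (x : List L → ℝ) (T : List L → Prop) : ct d x T ⊆ lists L d := by
  intro q hq
  rw [mem_lists]
  induction d generalizing x T q with
  | zero => unfold ct at hq; split_ifs at hq <;> simp at hq; simp [hq]
  | succ d ih =>
    unfold ct at hq
    split_ifs at hq with h1 h2
    · simp at hq; simp [hq]
    · simp at hq; simp [hq]
    · obtain ⟨a, _, hq⟩ := Finset.mem_biUnion.1 hq
      obtain ⟨p, hp, rfl⟩ := Finset.mem_image.1 hq
      have := ih _ _ hp
      simp; exact this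

theorem ct_cuts (d : ℕ) (x : List L → ℝ) (T : List L → Prop) (q : List L) (hq : q.length ≤ d)
    (hT : T q) : ∃ p, p <+: q ∧ p ∈ ct d x T := by
  induction d generalizing x T q with
  | zero =>
    have : q = [] := List.length_eq_zero_iff.1 (by omega)
    subst this
    refine ⟨[], by simp, ?_⟩
    unfold ct; simp [hT]
  | succ d ih =>
    by_cases h1 : T []
    · refine ⟨[], by simp, ?_⟩
      unfold ct; simp [h1]
    by_cases h2 : x [] ≤ ∑ a : L, Fl d (fun q => x (a :: q)) (fun q => T (a :: q))
    · refine ⟨[], by simp, ?_⟩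
      unfold ct; simp [h1, h2]
    · cases q with
      | nil => exact absurd hT h1
      | cons a q =>
        obtain ⟨p, hp, hp'⟩ := ih (fun q => x (a :: q)) (fun q => T (a :: q)) q
          (by simpa using hq) hT
        refine ⟨a :: p, by simpa using hp, ?_⟩
        unfold ct; simp only [h1, h2, if_false]
        exact Finset.mem_biUnion.2 ⟨a, Finset.mem_univ _, Finset.mem_image_of_mem _ hp'⟩

/-- weight of all prefixes -/
def pw (w : List L → ℝ) (q : List L) : ℝ := (q.inits.map w).sum

theorem pw_cons (w : List L → ℝ) (a : L) (q : List L) :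
    pw w (a :: q) = w [] + pw (fun p => w (a :: p)) q := by
  simp [pw, List.inits_cons, Function.comp_def]

theorem Fl_cost (d : ℕ) (x w : List L → ℝ) (T : List L → Prop) (hx : ∀ q, 0 ≤ x q)
    (hw : ∀ q, 0 ≤ w q) (D : ℝ) (hD : ∀ q, q.length ≤ d → T q → D ≤ pw w q) :
    D * Fl d x T ≤ ∑ q ∈ lists L d, w q * x q := by
  induction d generalizing x w T D with
  | zero =>
    unfold Fl
    split_ifs with h
    · have := hD [] (by simp) h
      simp [lists, pw] at this ⊢
      exact mul_le_mul_of_nonneg_right this (hx _)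
    · simp [lists]; exact mul_nonneg (hw _) (hx _)
  | succ d ih =>
    rw [sum_lists_succ]
    have hnn : 0 ≤ ∑ a : L, ∑ q ∈ lists L d, w (a :: q) * x (a :: q) :=
      Finset.sum_nonneg (fun a _ => Finset.sum_nonneg (fun q _ => mul_nonneg (hw _) (hx _)))
    by_cases h : T []
    · have h1 := hD [] (by simp) h
      have h2 : Fl (d + 1) x T = x [] := by unfold Fl; simp [h]
      rw [h2]
      simp [pw] at h1
      have := mul_le_mul_of_nonneg_right h1 (hx [])
      linarith
    · have h2 : Fl (d + 1) x T =
        min (x []) (∑ a : L, Fl d (fun q => x (a :: q)) (fun q => T (a :: q))) := by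
        rw [Fl]; simp [h]
      have h0 : 0 ≤ Fl (d + 1) x T := Fl_nonneg _ _ _ hx
      have hch : (D - w []) * ∑ a : L, Fl d (fun q => x (a :: q)) (fun q => T (a :: q)) ≤
          ∑ a : L, ∑ q ∈ lists L d, w (a :: q) * x (a :: q) := by
        rw [Finset.mul_sum]
        refine Finset.sum_le_sum (fun a _ => ?_)
        refine ih (fun q => x (a :: q)) (fun q => w (a :: q)) (fun q => T (a :: q))
          (fun q => hx _) (fun q => hw _) _ (fun q hq hT => ?_)
        have := hD (a :: q) (by simpa using hq) hT
        rw [pw_cons] at this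
        linarith
      have h3 : Fl (d + 1) x T ≤ x [] := Fl_le _ _ _ hx
      have h4 : Fl (d + 1) x T ≤ ∑ a : L, Fl d (fun q => x (a :: q)) (fun q => T (a :: q)) := by
        rw [h2]; exact min_le_right _ _
      have h5 : w [] * Fl (d + 1) x T ≤ w [] * x [] := mul_le_mul_of_nonneg_left h3 (hw _)
      rcases le_total (w []) D with h6 | h6
      · have h7 := mul_le_mul_of_nonneg_left h4 (sub_nonneg.2 h6)
        nlinarith
      · have := mul_le_mul_of_nonneg_right h6 h0
        linarith

theorem Fl_pos_target (d : ℕ) (x : List L → ℝ) (T : List L → Prop) (h : 0 < Fl d x T) :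
    ∃ q, q.length ≤ d ∧ T q := by
  induction d generalizing x T with
  | zero =>
    unfold Fl at h
    split_ifs at h with h1
    · exact ⟨[], by simp, h1⟩
    · exact absurd h (lt_irrefl _)
  | succ d ih =>
    by_cases h1 : T []
    · exact ⟨[], by simp, h1⟩
    rw [Fl] at h
    simp only [h1, if_false] at h
    have h2 := (lt_min_iff.1 h).2
    obtain ⟨a, _, ha⟩ := Finset.exists_lt_of_sum_lt (s := Finset.univ) (f := fun _ : L => (0 : ℝ))
      (by simpa using h2)
    obtain ⟨q, hq, hT⟩ := ih _ _ ha
    exact ⟨a :: q, by simpa using hq, hT⟩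

end TreeFlow

set_option linter.unusedSectionVars false

/-- Abstract data of the layered tree problem. -/
structure Dat (R L V : Type) where
  h : ℕ
  J : ℕ
  k : R → List L → ℕ
  len : R → List L → ℕ
  ed : R → List L → V
  k0 : ∀ r, k r [] = 0
  J0 : J ≠ 0

section Frac
variable {R L V : Type} [Fintype R] [DecidableEq R] [Fintype L] [DecidableEq L] [DecidableEq V]

/-- Level of a node. -/
def Dat.lev (D : Dat R L V) (u : R → List L → ℕ) (r : R) (q : List L) : ℕ :=
  if D.k r q = 0 then D.J else min D.J (u r q / D.k r q)

/-- Capacity of a level. -/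
noncomputable def cp (J lv : ℕ) : ℝ := if lv = 0 then 0 else 2 ^ lv / 2 ^ J

theorem cp_nonneg (J lv : ℕ) : 0 ≤ cp J lv := by
  unfold cp; split_ifs <;> positivity

theorem cp_mono (J : ℕ) {a b : ℕ} (h : a ≤ b) : cp J a ≤ cp J b := by
  unfold cp
  split_ifs with h1 h2 h2
  · exact le_rfl
  · positivity
  · omega
  · have : (2 : ℝ) ^ a ≤ 2 ^ b := pow_le_pow_right₀ (by norm_num) h
    gcongr

/-- Target predicate. -/
def Dat.Tg (D : Dat R L V) (s : V) (m : ℕ) (r : R) (q : List L) : Prop :=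
  D.ed r q = s ∧ D.len r q ≤ m

noncomputable def Dat.x (D : Dat R L V) (u : R → List L → ℕ) (r : R) (q : List L) : ℝ :=
  cp D.J (D.lev u r q)

noncomputable def Dat.F (D : Dat R L V) (u : R → List L → ℕ) (s : V) (m : ℕ) (r : R) : ℝ :=
  Fl D.h (D.x u r) (D.Tg s m r)

noncomputable def Dat.Y (D : Dat R L V) (u : R → List L → ℕ) (s t : V) (m : ℕ) : ℝ :=
  ∑ r, min (D.F u s m r) (D.F u t m r)

open Classical in
noncomputable def Dat.cut (D : Dat R L V) (u : R → List L → ℕ) (s t : V) (m : ℕ) (r : R) :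
    Finset (List L) :=
  if D.F u s m r ≤ D.F u t m r then ct D.h (D.x u r) (D.Tg s m r)
  else ct D.h (D.x u r) (D.Tg t m r)

noncomputable def Dat.raise (D : Dat R L V) (u : R → List L → ℕ) (s t : V) (m : ℕ) (r : R)
    (q : List L) : ℕ := u r q + if q ∈ D.cut u s t m r then 1 else 0

noncomputable def Dat.it (D : Dat R L V) (u : R → List L → ℕ) (s t : V) : ℕ → R → List L → ℕ
  | 0 => u
  | m + 1 => D.raise (D.it u s t m) s t m

noncomputable def Dat.halt (D : Dat R L V) (u : R → List L → ℕ) (s t : V) : ℕ :=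
  sInf {m | 1 ≤ D.Y (D.it u s t m) s t m}

/-- State: the counters and the stopping index of the last request. -/
noncomputable def Dat.st (D : Dat R L V) (X : List (V × V)) : (R → List L → ℕ) × ℕ :=
  X.foldl (fun z p => (D.it z.1 p.1 p.2 (D.halt z.1 p.1 p.2), D.halt z.1 p.1 p.2))
    (fun _ _ => 0, 0)

def Dat.Inv (D : Dat R L V) (u : R → List L → ℕ) : Prop := ∀ r q, u r q ≤ D.J * D.k r q

noncomputable def Dat.Psi (D : Dat R L V) (u : R → List L → ℕ) : ℝ :=
  ∑ r, ∑ q ∈ lists L D.h, ∑ v ∈ Finset.range (u r q), (2 : ℝ) ^ (v / D.k r q) / 2 ^ D.J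

noncomputable def Dat.Frac (D : Dat R L V) (u : R → List L → ℕ) : ℝ :=
  ∑ r, ∑ q ∈ lists L D.h, (D.k r q : ℝ) * D.x u r q

theorem Dat.lev_mono (D : Dat R L V) {u u' : R → List L → ℕ} (h : ∀ r q, u r q ≤ u' r q)
    (r : R) (q : List L) : D.lev u r q ≤ D.lev u' r q := by
  unfold Dat.lev
  split_ifs
  · exact le_rfl
  · exact min_le_min_left _ (Nat.div_le_div_right (h r q))

theorem Dat.lev_le (D : Dat R L V) (u : R → List L → ℕ) (r : R) (q : List L) :
    D.lev u r q ≤ D.J := by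
  unfold Dat.lev; split_ifs
  · exact le_rfl
  · exact min_le_left _ _

theorem Dat.x_nonneg (D : Dat R L V) (u : R → List L → ℕ) (r : R) (q : List L) : 0 ≤ D.x u r q :=
  cp_nonneg _ _

theorem Dat.F_nonneg (D : Dat R L V) (u : R → List L → ℕ) (s : V) (m : ℕ) (r : R) :
    0 ≤ D.F u s m r := Fl_nonneg _ _ _ (D.x_nonneg u r)

theorem Dat.Frac_mono (D : Dat R L V) {u u' : R → List L → ℕ} (h : ∀ r q, u r q ≤ u' r q) :
    D.Frac u ≤ D.Frac u' := by
  refine Finset.sum_le_sum (fun r _ => Finset.sum_le_sum (fun q _ => ?_))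
  exact mul_le_mul_of_nonneg_left (cp_mono _ (D.lev_mono h r q)) (Nat.cast_nonneg _)

theorem Dat.Frac_nonneg (D : Dat R L V) (u : R → List L → ℕ) : 0 ≤ D.Frac u :=
  Finset.sum_nonneg (fun r _ => Finset.sum_nonneg (fun q _ =>
    mul_nonneg (Nat.cast_nonneg _) (D.x_nonneg u r q)))

theorem Dat.Frac_le_Psi (D : Dat R L V) (u : R → List L → ℕ) (hu : D.Inv u) :
    D.Frac u ≤ 2 * D.Psi u := by
  unfold Dat.Frac Dat.Psi
  rw [Finset.mul_sum]
  refine Finset.sum_le_sum (fun r _ => ?_)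
  rw [Finset.mul_sum]
  refine Finset.sum_le_sum (fun q _ => ?_)
  have hnn : ∀ s : Finset ℕ, 0 ≤ ∑ v ∈ s, (2 : ℝ) ^ (v / D.k r q) / 2 ^ D.J := fun s =>
    Finset.sum_nonneg (fun v _ => by positivity)
  unfold Dat.x
  by_cases hk : D.k r q = 0
  · simp [hk]
  by_cases hl : D.lev u r q = 0
  · rw [hl]; simpa [cp] using hnn _
  obtain ⟨l, hl'⟩ := Nat.exists_eq_succ_of_ne_zero hl
  have h1 : l + 1 ≤ u r q / D.k r q := by
    rw [Dat.lev, if_neg hk] at hl'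
    have := min_le_right D.J (u r q / D.k r q)
    omega
  have h2 : (l + 1) * D.k r q ≤ u r q := by
    exact (Nat.le_div_iff_mul_le (Nat.pos_of_ne_zero hk)).1 h1
  have h3 : Finset.Ico (l * D.k r q) ((l + 1) * D.k r q) ⊆ Finset.range (u r q) := by
    intro v hv
    rw [Finset.mem_Ico] at hv
    rw [Finset.mem_range]; omega
  have h4 : (D.k r q : ℝ) * (2 ^ l / 2 ^ D.J) ≤
      ∑ v ∈ Finset.Ico (l * D.k r q) ((l + 1) * D.k r q), (2 : ℝ) ^ (v / D.k r q) / 2 ^ D.J := by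
    have : ∀ v ∈ Finset.Ico (l * D.k r q) ((l + 1) * D.k r q),
        (2 : ℝ) ^ l / 2 ^ D.J ≤ (2 : ℝ) ^ (v / D.k r q) / 2 ^ D.J := by
      intro v hv
      rw [Finset.mem_Ico] at hv
      have : l ≤ v / D.k r q := (Nat.le_div_iff_mul_le (Nat.pos_of_ne_zero hk)).2 hv.1
      have : (2 : ℝ) ^ l ≤ 2 ^ (v / D.k r q) := pow_le_pow_right₀ (by norm_num) this
      gcongr
    have h5 := Finset.card_nsmul_le_sum _ _ _ this
    rw [Nat.card_Ico, nsmul_eq_mul] at h5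
    have h6 : (l + 1) * D.k r q - l * D.k r q = D.k r q := by
      rw [Nat.add_mul]; omega
    rwa [h6] at h5
  have h5 := Finset.sum_le_sum_of_subset_of_nonneg h3
    (f := fun v => (2 : ℝ) ^ (v / D.k r q) / 2 ^ D.J) (fun v _ _ => by positivity)
  rw [hl', cp, if_neg (Nat.succ_ne_zero l), Nat.succ_eq_add_one, pow_succ]
  have : (D.k r q : ℝ) * (2 ^ l * 2 / 2 ^ D.J) = 2 * ((D.k r q : ℝ) * (2 ^ l / 2 ^ D.J)) := by ring
  rw [this]
  linarith

theorem Dat.cut_sum (D : Dat R L V) (u : R → List L → ℕ) (s t : V) (m : ℕ) (r : R) :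
    ∑ q ∈ D.cut u s t m r, D.x u r q = min (D.F u s m r) (D.F u t m r) := by
  unfold Dat.cut
  split_ifs with h
  · rw [min_eq_left h]; exact ct_sum _ _ _
  · rw [min_eq_right (not_le.1 h).le]; exact ct_sum _ _ _

theorem Dat.cut_lists (D : Dat R L V) (u : R → List L → ℕ) (s t : V) (m : ℕ) (r : R) :
    D.cut u s t m r ⊆ lists L D.h := by
  unfold Dat.cut
  split_ifs with h <;> exact ct_lists _ _ _

theorem Dat.cut_x (D : Dat R L V) (u : R → List L → ℕ) (s t : V) (m : ℕ) (hY : D.Y u s t m < 1)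
    (r : R) (q : List L) (hq : q ∈ D.cut u s t m r) : D.lev u r q < D.J := by
  have h1 : D.x u r q ≤ D.Y u s t m := by
    unfold Dat.Y
    refine le_trans ?_ (Finset.single_le_sum (f := fun r => min (D.F u s m r) (D.F u t m r))
      (fun r _ => le_min (D.F_nonneg u s m r) (D.F_nonneg u t m r)) (Finset.mem_univ r))
    simp only [← Dat.cut_sum]
    exact Finset.single_le_sum (f := fun q => D.x u r q) (fun q _ => D.x_nonneg u r q) hq
  by_contra hc
  have h2 : D.lev u r q = D.J := le_antisymm (D.lev_le u r q) (not_lt.1 hc)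
  unfold Dat.x at h1
  rw [h2] at h1
  unfold cp at h1
  rw [if_neg D.J0, div_self (by positivity)] at h1
  linarith

theorem Dat.cut_k (D : Dat R L V) (u : R → List L → ℕ) (s t : V) (m : ℕ) (hY : D.Y u s t m < 1)
    (r : R) (q : List L) (hq : q ∈ D.cut u s t m r) :
    D.k r q ≠ 0 ∧ u r q / D.k r q < D.J ∧ D.lev u r q = u r q / D.k r q := by
  have h := D.cut_x u s t m hY r q hq
  unfold Dat.lev at h
  split_ifs at h with h1
  · exact absurd h (lt_irrefl _)
  · have : u r q / D.k r q < D.J := by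
      rcases min_lt_iff.1 h with h | h
      · exact absurd h (lt_irrefl _)
      · exact h
    exact ⟨h1, this, by unfold Dat.lev; rw [if_neg h1, min_eq_right this.le]⟩

theorem Dat.raise_inv (D : Dat R L V) (u : R → List L → ℕ) (s t : V) (m : ℕ)
    (hY : D.Y u s t m < 1) (hu : D.Inv u) : D.Inv (D.raise u s t m) := by
  intro r q
  unfold Dat.raise
  split_ifs with h
  · obtain ⟨h1, h2, _⟩ := D.cut_k u s t m hY r q h
    have := (Nat.div_lt_iff_lt_mul (Nat.pos_of_ne_zero h1)).1 h2
    omega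
  · exact hu r q

theorem Dat.raise_Psi (D : Dat R L V) (u : R → List L → ℕ) (s t : V) (m : ℕ)
    (hY : D.Y u s t m < 1) (hN : Fintype.card R * (lists L D.h).card ≤ 2 ^ D.J) :
    D.Psi (D.raise u s t m) ≤ D.Psi u + 2 := by
  have h1 : ∀ r, ∀ q ∈ lists L D.h,
      ∑ v ∈ Finset.range (D.raise u s t m r q), (2 : ℝ) ^ (v / D.k r q) / 2 ^ D.J ≤
      ∑ v ∈ Finset.range (u r q), (2 : ℝ) ^ (v / D.k r q) / 2 ^ D.J +
        ((if q ∈ D.cut u s t m r then D.x u r q else 0) + 1 / 2 ^ D.J) := by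
    intro r q _
    unfold Dat.raise
    split_ifs with h
    · rw [Finset.sum_range_succ]
      obtain ⟨h1, h2, h3⟩ := D.cut_k u s t m hY r q h
      have : (2 : ℝ) ^ (u r q / D.k r q) / 2 ^ D.J ≤ D.x u r q + 1 / 2 ^ D.J := by
        unfold Dat.x cp
        rw [h3]
        split_ifs with h4
        · rw [h4]; simp
        · have : (0 : ℝ) ≤ 1 / 2 ^ D.J := by positivity
          linarith
      linarith
    · have : (0 : ℝ) ≤ 1 / 2 ^ D.J := by positivity
      rw [Nat.add_zero]
      linarith
  have h2 : D.Psi (D.raise u s t m) ≤ D.Psi u + (D.Y u s t m +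
      (Fintype.card R * (lists L D.h).card : ℕ) * (1 / 2 ^ D.J)) := by
    unfold Dat.Psi
    refine (Finset.sum_le_sum (fun r _ => Finset.sum_le_sum (h1 r))).trans (le_of_eq ?_)
    simp only [Finset.sum_add_distrib]
    congr 1
    congr 1
    · unfold Dat.Y
      refine Finset.sum_congr rfl (fun r _ => ?_)
      rw [← Finset.sum_filter, ← D.cut_sum]
      congr 1
      ext q
      rw [Finset.mem_filter]
      exact ⟨fun h => h.2, fun h => ⟨D.cut_lists u s t m r h, h⟩⟩
    · simp; ring
  have h3 : ((Fintype.card R * (lists L D.h).card : ℕ) : ℝ) * (1 / 2 ^ D.J) ≤ 1 := by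
    rw [mul_one_div, div_le_one (by positivity)]
    exact_mod_cast hN
  linarith

theorem Dat.le_raise (D : Dat R L V) (u : R → List L → ℕ) (s t : V) (m : ℕ) (r : R) (q : List L) :
    u r q ≤ D.raise u s t m r q := Nat.le_add_right _ _

/-- One raise hits the comparison solution. -/
theorem Dat.raise_hit (D : Dat R L V) (u : R → List L → ℕ) (s t : V) (m : ℕ)
    (hY : D.Y u s t m < 1) (S : Finset (R × List L)) (r : R) (a b : List L)
    (ha : a.length ≤ D.h) (hb : b.length ≤ D.h) (hTa : D.Tg s m r a) (hTb : D.Tg t m r b)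
    (hS : ∀ p, p ≠ [] → (p <+: a ∨ p <+: b) → (r, p) ∈ S) :
    ∑ z ∈ S, u z.1 z.2 + 1 ≤ ∑ z ∈ S, D.raise u s t m z.1 z.2 := by
  have h1 : ∃ p, (p <+: a ∨ p <+: b) ∧ p ∈ D.cut u s t m r := by
    unfold Dat.cut
    split_ifs with h
    · obtain ⟨p, hp, hp'⟩ := ct_cuts D.h (D.x u r) (D.Tg s m r) a ha hTa
      exact ⟨p, Or.inl hp, hp'⟩
    · obtain ⟨p, hp, hp'⟩ := ct_cuts D.h (D.x u r) (D.Tg t m r) b hb hTb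
      exact ⟨p, Or.inr hp, hp'⟩
  obtain ⟨p, hp, hp'⟩ := h1
  have hp0 : p ≠ [] := by
    rintro rfl
    exact (D.cut_k u s t m hY r [] hp').1 (D.k0 r)
  have hz := hS p hp0 hp
  rw [← Nat.lt_iff_add_one_le]
  refine Finset.sum_lt_sum (fun z _ => D.le_raise u s t m z.1 z.2) ⟨(r, p), hz, ?_⟩
  simp [Dat.raise, hp']

theorem Dat.it_props (D : Dat R L V) (u : R → List L → ℕ) (s t : V) (hu : D.Inv u)
    (hN : Fintype.card R * (lists L D.h).card ≤ 2 ^ D.J) (m : ℕ)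
    (hY : ∀ i < m, D.Y (D.it u s t i) s t i < 1) :
    D.Inv (D.it u s t m) ∧ (∀ r q, u r q ≤ D.it u s t m r q) ∧
      D.Psi (D.it u s t m) ≤ D.Psi u + 2 * m := by
  induction m with
  | zero => exact ⟨hu, fun r q => le_rfl, by simp [Dat.it]⟩
  | succ m ih =>
    obtain ⟨h1, h2, h3⟩ := ih (fun i hi => hY i (by omega))
    have h4 := hY m (by omega)
    refine ⟨D.raise_inv _ s t m h4 h1, fun r q => (h2 r q).trans (D.le_raise _ s t m r q), ?_⟩
    have := D.raise_Psi _ s t m h4 hN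
    rw [Dat.it]
    push_cast
    linarith

theorem Dat.it_hit (D : Dat R L V) (u : R → List L → ℕ) (s t : V) 
    (S : Finset (R × List L)) (r : R) (a b : List L) (M : ℕ)
    (ha : a.length ≤ D.h) (hb : b.length ≤ D.h) (hTa : D.Tg s M r a) (hTb : D.Tg t M r b)
    (hS : ∀ p, p ≠ [] → (p <+: a ∨ p <+: b) → (r, p) ∈ S) (m : ℕ)
    (hY : ∀ i < m, D.Y (D.it u s t i) s t i < 1) :
    m + ∑ z ∈ S, u z.1 z.2 ≤ M + ∑ z ∈ S, D.it u s t m z.1 z.2 := by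
  induction m with
  | zero => simp [Dat.it]
  | succ m ih =>
    have h1 := ih (fun i hi => hY i (by omega))
    have h4 := hY m (by omega)
    have h5 : ∑ z ∈ S, D.it u s t m z.1 z.2 ≤ ∑ z ∈ S, D.it u s t (m + 1) z.1 z.2 :=
      Finset.sum_le_sum (fun z _ => D.le_raise _ s t m z.1 z.2)
    by_cases hm : M ≤ m
    · have := D.raise_hit (D.it u s t m) s t m h4 S r a b ha hb ⟨hTa.1, hTa.2.trans hm⟩
        ⟨hTb.1, hTb.2.trans hm⟩ hS
      rw [Dat.it]
      omega
    · have h6 : ∀ i, ∑ z ∈ S, u z.1 z.2 ≤ ∑ z ∈ S, D.it u s t i z.1 z.2 := by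
        intro i
        induction i with
        | zero => exact le_rfl
        | succ i ih' => exact ih'.trans (Finset.sum_le_sum (fun z _ => D.le_raise _ s t i z.1 z.2))
      have := h6 (m + 1)
      omega

theorem Dat.halt_spec (D : Dat R L V) (u : R → List L → ℕ) (s t : V) (hu : D.Inv u)
    (hN : Fintype.card R * (lists L D.h).card ≤ 2 ^ D.J)
    (S : Finset (R × List L)) (r : R) (a b : List L) (M : ℕ)
    (ha : a.length ≤ D.h) (hb : b.length ≤ D.h) (hTa : D.Tg s M r a) (hTb : D.Tg t M r b)
    (hS : ∀ p, p ≠ [] → (p <+: a ∨ p <+: b) → (r, p) ∈ S) :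
    1 ≤ D.Y (D.it u s t (D.halt u s t)) s t (D.halt u s t) ∧
    ∀ i < D.halt u s t, D.Y (D.it u s t i) s t i < 1 := by
  have hne : {m | 1 ≤ D.Y (D.it u s t m) s t m}.Nonempty := by
    by_contra hc
    have hc' : ∀ m, D.Y (D.it u s t m) s t m < 1 := by
      intro m
      by_contra h
      exact hc ⟨m, not_lt.1 h⟩
    have h1 := D.it_hit u s t S r a b M ha hb hTa hTb hS
      (M + ∑ z ∈ S, D.J * D.k z.1 z.2 + 1) (fun i _ => hc' i)
    have h2 := (D.it_props u s t hu hN (M + ∑ z ∈ S, D.J * D.k z.1 z.2 + 1) (fun i _ => hc' i)).1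
    have h3 := Finset.sum_le_sum (s := S) (fun z _ => h2 z.1 z.2)
    omega
  refine ⟨Nat.sInf_mem hne, fun i hi => ?_⟩
  have := Nat.notMem_of_lt_sInf hi
  exact not_le.1 this

theorem Dat.st_append (D : Dat R L V) (X : List (V × V)) (p : V × V) :
    D.st (X ++ [p]) = (D.it (D.st X).1 p.1 p.2 (D.halt (D.st X).1 p.1 p.2),
      D.halt (D.st X).1 p.1 p.2) := by
  simp [Dat.st]

theorem Dat.frac (D : Dat R L V)
    (hN : Fintype.card R * (lists L D.h).card ≤ 2 ^ D.J)
    (X : List (V × V)) (S : Finset (R × List L)) (r : Fin X.length → R)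
    (a b : Fin X.length → List L) (M : Fin X.length → ℕ)
    (hab : ∀ i, (a i).length ≤ D.h ∧ (b i).length ≤ D.h ∧ D.Tg (X.get i).1 (M i) (r i) (a i) ∧
      D.Tg (X.get i).2 (M i) (r i) (b i) ∧
      ∀ p, p ≠ [] → (p <+: a i ∨ p <+: b i) → (r i, p) ∈ S) :
    (∀ i : Fin X.length, 1 ≤ D.Y (D.st (X.take (i + 1))).1 (X.get i).1 (X.get i).2
      (D.st (X.take (i + 1))).2) ∧
    (∀ i j, i ≤ j → ∀ r q, (D.st (X.take i)).1 r q ≤ (D.st (X.take j)).1 r q) ∧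
    D.Frac (D.st X).1 ≤ 4 * ∑ i : Fin X.length, ((D.st (X.take (i + 1))).2 : ℝ) ∧
    ∑ i : Fin X.length, (D.st (X.take (i + 1))).2 ≤
      ∑ i, M i + D.J * ∑ z ∈ S, D.k z.1 z.2 := by
  have key : ∀ j ≤ X.length, D.Inv (D.st (X.take j)).1 ∧
      (∀ i : Fin X.length, i.1 < j → 1 ≤ D.Y (D.st (X.take (i + 1))).1 (X.get i).1 (X.get i).2
      (D.st (X.take (i + 1))).2) ∧
      (∀ i < j, ∀ r q, (D.st (X.take i)).1 r q ≤ (D.st (X.take (i + 1))).1 r q) ∧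
      D.Psi (D.st (X.take j)).1 ≤
        2 * ∑ i ∈ Finset.range j, ((D.st (X.take (i + 1))).2 : ℝ) ∧
      ∑ i ∈ Finset.range j, (D.st (X.take (i + 1))).2 ≤
        ∑ i ∈ Finset.range j, (if h : i < X.length then M ⟨i, h⟩ else 0) +
          ∑ z ∈ S, (D.st (X.take j)).1 z.1 z.2 := by
    intro j hj
    induction j with
    | zero =>
      refine ⟨fun r q => by simp [Dat.st], by simp, by simp, by simp [Dat.st, Dat.Psi], by simp⟩
    | succ j ih =>
      obtain ⟨h1, h2, h3, h4, h5⟩ := ih (by omega)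
      have hjl : j < X.length := by omega
      have htk : X.take (j + 1) = X.take j ++ [X.get ⟨j, hjl⟩] := by
        simp
      have hst := D.st_append (X.take j) (X.get ⟨j, hjl⟩)
      rw [← htk] at hst
      obtain ⟨g1, g2, g3, g4, g5⟩ := hab ⟨j, hjl⟩
      obtain ⟨e1, e2⟩ := D.halt_spec _ _ _ h1 hN S _ _ _ _ g1 g2 g3 g4 g5
      have e3 := D.it_hit (D.st (X.take j)).1 _ _ S _ _ _ _ g1 g2 g3 g4 g5 _ e2
      obtain ⟨e4, e5, e6⟩ := D.it_props _ _ _ h1 hN _ e2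
      have hs1 : (D.st (X.take (j + 1))).1 = _ := congrArg Prod.fst hst
      have hs2 : (D.st (X.take (j + 1))).2 = _ := congrArg Prod.snd hst
      refine ⟨?_, ?_, ?_, ?_, ?_⟩
      · rw [hs1]; exact e4
      · intro i hi
        rcases Nat.lt_succ_iff_lt_or_eq.1 hi with h | h
        · exact h2 i h
        · have : i = ⟨j, hjl⟩ := Fin.ext h
          subst this
          rw [hs1, hs2]; exact e1
      · intro i hi
        rcases Nat.lt_succ_iff_lt_or_eq.1 hi with h | h
        · exact h3 i h
        · subst h
          rw [hs1]; exact e5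
      · rw [Finset.sum_range_succ, hs1, hs2]
        linarith
      · rw [Finset.sum_range_succ, Finset.sum_range_succ, dif_pos hjl, hs1, hs2]
        dsimp only
        omega
  obtain ⟨h1, h2, h3, h4, h5⟩ := key X.length le_rfl
  rw [List.take_length] at h1 h4 h5
  refine ⟨fun i => h2 i i.2, ?_, ?_, ?_⟩
  · have h6 : Monotone (fun i => (D.st (X.take i)).1) := by
      refine monotone_nat_of_le_succ (fun i => ?_)
      by_cases hi : i < X.length
      · intro r q; exact h3 i hi r q
      · rw [List.take_of_length_le (by omega), List.take_of_length_le (by omega)]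
    intro i j hij r q
    exact h6 hij r q
  · have := D.Frac_le_Psi _ h1
    rw [Fin.sum_univ_eq_sum_range (fun i => ((D.st (X.take (i + 1))).2 : ℝ))]
    linarith
  · rw [Fin.sum_univ_eq_sum_range (fun i => (D.st (X.take (i + 1))).2)]
    refine h5.trans (Nat.add_le_add (le_of_eq ?_) ?_)
    · rw [← Fin.sum_univ_eq_sum_range (fun i => if h : i < X.length then M ⟨i, h⟩ else 0)]
      simp
    · rw [Finset.mul_sum]
      exact Finset.sum_le_sum (fun z _ => h1 z.1 z.2)

/-- If the fractional solution routes one unit then there is a cheap integral route. -/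
theorem Dat.cheap (D : Dat R L V) (u : R → List L → ℕ) (s t : V) (m : ℕ)
    (hY : 1 ≤ D.Y u s t m) : ∃ r a b, a.length ≤ D.h ∧ b.length ≤ D.h ∧ D.Tg s m r a ∧
      D.Tg t m r b ∧
      pw (fun q => (D.k r q : ℝ)) a + pw (fun q => (D.k r q : ℝ)) b ≤ 2 * D.Frac u := by
  by_contra hc
  push Not at hc
  have hx := D.x_nonneg u
  have h1 : ∀ r, (2 * D.Frac u) * min (D.F u s m r) (D.F u t m r) ≤
      2 * ∑ q ∈ lists L D.h, (D.k r q : ℝ) * D.x u r q ∧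
      (0 < min (D.F u s m r) (D.F u t m r) →
      (2 * D.Frac u) * min (D.F u s m r) (D.F u t m r) <
      2 * ∑ q ∈ lists L D.h, (D.k r q : ℝ) * D.x u r q) := by
    intro r
    have hs0 : 0 ≤ ∑ q ∈ lists L D.h, (D.k r q : ℝ) * D.x u r q :=
      Finset.sum_nonneg (fun q _ => mul_nonneg (Nat.cast_nonneg _) (hx r q))
    have hmn : 0 ≤ min (D.F u s m r) (D.F u t m r) :=
      le_min (D.F_nonneg u s m r) (D.F_nonneg u t m r)
    rcases hmn.eq_or_lt with h0 | h0
    · rw [← h0]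
      refine ⟨by linarith, fun h => absurd h (lt_irrefl _)⟩
    suffices hh : (2 * D.Frac u) * min (D.F u s m r) (D.F u t m r) <
      2 * ∑ q ∈ lists L D.h, (D.k r q : ℝ) * D.x u r q from ⟨hh.le, fun _ => hh⟩
    have hmin : ∀ v, 0 < D.F u v m r → ∃ q, q.length ≤ D.h ∧ D.Tg v m r q ∧
        pw (fun q => (D.k r q : ℝ)) q * D.F u v m r ≤
          ∑ q ∈ lists L D.h, (D.k r q : ℝ) * D.x u r q := by
      classical
      intro v hv
      obtain ⟨q0, hq0, hT0⟩ := Fl_pos_target _ _ _ hv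
      obtain ⟨q, hq, hqm⟩ := Finset.exists_min_image ((lists L D.h).filter (D.Tg v m r))
        (fun q => pw (fun q => (D.k r q : ℝ)) q)
        ⟨q0, Finset.mem_filter.2 ⟨mem_lists.2 hq0, hT0⟩⟩
      rw [Finset.mem_filter, mem_lists] at hq
      refine ⟨q, hq.1, hq.2, ?_⟩
      exact Fl_cost D.h (D.x u r) (fun q => (D.k r q : ℝ)) (D.Tg v m r) (hx r)
        (fun q => Nat.cast_nonneg _) _ (fun p hp hT =>
          hqm p (Finset.mem_filter.2 ⟨mem_lists.2 hp, hT⟩))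
    obtain ⟨a, ha, hTa, hca⟩ := hmin s (lt_of_lt_of_le h0 (min_le_left _ _))
    obtain ⟨b, hb, hTb, hcb⟩ := hmin t (lt_of_lt_of_le h0 (min_le_right _ _))
    have hab := hc r a b ha hb hTa hTb
    have hpw : ∀ q, 0 ≤ pw (fun q => (D.k r q : ℝ)) q := by
      intro q
      unfold pw
      refine List.sum_nonneg (fun y hy => ?_)
      obtain ⟨p, _, rfl⟩ := List.mem_map.1 hy
      exact Nat.cast_nonneg _
    have i1 := mul_lt_mul_of_pos_right hab h0
    have i2 := mul_le_mul_of_nonneg_left (min_le_left (D.F u s m r) (D.F u t m r)) (hpw a)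
    have i3 := mul_le_mul_of_nonneg_left (min_le_right (D.F u s m r) (D.F u t m r)) (hpw b)
    linarith
  have hpos : ∃ r ∈ (Finset.univ : Finset R), 0 < min (D.F u s m r) (D.F u t m r) := by
    refine Finset.exists_lt_of_sum_lt (f := fun _ => (0 : ℝ)) ?_
    unfold Dat.Y at hY
    simpa using lt_of_lt_of_le one_pos hY
  obtain ⟨r0, _, hr0⟩ := hpos
  have h2 : (2 * D.Frac u) * D.Y u s t m < 2 * D.Frac u := by
    have h3 := Finset.sum_lt_sum (s := Finset.univ) (fun r _ => (h1 r).1)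
      ⟨r0, Finset.mem_univ _, (h1 r0).2 hr0⟩
    rw [← Finset.mul_sum, ← Finset.mul_sum] at h3
    exact h3
  have h3 := D.Frac_nonneg u
  nlinarith

end Frac

set_option linter.unusedSectionVars false

section Prob
variable {α β : Type} [Fintype α] [Fintype β]

open Classical in
/-- Probability of an event under the uniform distribution. -/
noncomputable def pr (A : α → Prop) : ℝ := ((Finset.univ.filter A).card : ℝ) / Fintype.card α

theorem pr_eq (A : α → Prop) [DecidablePred A] :
    pr A = ((Finset.univ.filter A).card : ℝ) / Fintype.card α := by
  unfold pr; congr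

theorem pr_nonneg (A : α → Prop) : 0 ≤ pr A := by unfold pr; positivity

theorem pr_mono {A B : α → Prop} (h : ∀ x, A x → B x) : pr A ≤ pr B := by
  classical
  rw [pr_eq, pr_eq]
  have : (Finset.univ.filter A).card ≤ (Finset.univ.filter B).card :=
    Finset.card_le_card (Finset.monotone_filter_right _ (fun x _ hx => h x hx))
  have : ((Finset.univ.filter A).card : ℝ) ≤ (Finset.univ.filter B).card := by exact_mod_cast this
  gcongr

theorem pr_true [Nonempty α] : pr (fun _ : α => True) = 1 := by
  unfold pr
  simp [Fintype.card_ne_zero]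

theorem pr_le_one (A : α → Prop) : pr A ≤ 1 := by
  unfold pr
  refine div_le_one_of_le₀ ?_ (Nat.cast_nonneg _)
  exact_mod_cast Finset.card_le_univ _

theorem pr_not [Nonempty α] (A : α → Prop) : pr (fun x => ¬ A x) = 1 - pr A := by
  classical
  have h : pr (fun x => ¬ A x) + pr A = 1 := by
    rw [pr_eq, pr_eq, ← add_div, div_eq_one_iff_eq (by exact_mod_cast Fintype.card_ne_zero)]
    have := Finset.card_filter_add_card_filter_not (s := (Finset.univ : Finset α)) A
    rw [Finset.card_univ] at this
    rw [add_comm]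
    exact_mod_cast this
  linarith

theorem pr_or (A B : α → Prop) : pr (fun x => A x ∨ B x) ≤ pr A + pr B := by
  classical
  rw [pr_eq, pr_eq, pr_eq, ← add_div]
  have : (Finset.univ.filter fun x => A x ∨ B x).card ≤
      (Finset.univ.filter A).card + (Finset.univ.filter B).card := by
    rw [Finset.filter_or]; exact Finset.card_union_le _ _
  have : ((Finset.univ.filter fun x => A x ∨ B x).card : ℝ) ≤
      (Finset.univ.filter A).card + (Finset.univ.filter B).card := by exact_mod_cast this
  gcongr

theorem pr_false : pr (fun _ : α => False) = 0 := by simp [pr]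

theorem pr_exists {ι : Type} (s : Finset ι) (A : ι → α → Prop) :
    pr (fun x => ∃ i ∈ s, A i x) ≤ ∑ i ∈ s, pr (A i) := by
  classical
  induction s using Finset.induction_on with
  | empty => simp [pr_false]
  | insert i s hi ih =>
    rw [Finset.sum_insert hi]
    refine le_trans (pr_mono (B := fun x => A i x ∨ ∃ j ∈ s, A j x) ?_) ?_
    · rintro x ⟨j, hj, hx⟩
      rcases Finset.mem_insert.1 hj with rfl | hj
      · exact Or.inl hx
      · exact Or.inr ⟨j, hj, hx⟩
    · exact (pr_or _ _).trans (by linarith)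

theorem pr_exists' {ι : Type} [Fintype ι] (A : ι → α → Prop) :
    pr (fun x => ∃ i, A i x) ≤ ∑ i, pr (A i) := by
  refine le_trans (pr_mono ?_) (pr_exists Finset.univ A)
  rintro x ⟨i, hi⟩
  exact ⟨i, Finset.mem_univ _, hi⟩

theorem pr_prod (A : α → Prop) (B : β → Prop) :
    pr (fun x : α × β => A x.1 ∧ B x.2) = pr A * pr B := by
  classical
  unfold pr
  rw [div_mul_div_comm, Fintype.card_prod]
  congr 1
  · rw [← Nat.cast_mul, ← Finset.card_product]
    congr 2
    ext x
    simp
  · push_cast; rfl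

theorem pr_pi {ι : Type} [Fintype ι] [DecidableEq ι] (A : ι → α → Prop) :
    pr (fun x : ι → α => ∀ i, A i (x i)) = ∏ i, pr (A i) := by
  classical
  unfold pr
  rw [Finset.prod_div_distrib, Fintype.card_fun]
  congr 1
  · rw [← Nat.cast_prod, ← Fintype.card_piFinset]
    congr 2
    ext x
    simp
  · simp

theorem pr_proj {ι : Type} [Fintype ι] [DecidableEq ι] [Nonempty α] (i : ι) (A : α → Prop) :
    pr (fun x : ι → α => A (x i)) = pr A := by
  have h := pr_pi (fun j (y : α) => j = i → A y)
  have h1 : (fun x : ι → α => ∀ j, j = i → A (x j)) = fun x => A (x i) := by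
    funext x; simp
  rw [h1] at h
  rw [h, Finset.prod_eq_single i]
  · congr 1; funext y; simp
  · intro j _ hj
    have : (fun y : α => j = i → A y) = fun _ => True := by funext y; simp [hj]
    rw [this, pr_true]
  · intro h; exact absurd (Finset.mem_univ _) h

theorem pr_pi_exp {ι : Type} [Fintype ι] [DecidableEq ι] [Nonempty α] (G : ι → α → Prop)
    (p : ι → ℝ) (hp : ∀ i, p i ≤ pr (G i)) :
    pr (fun x : ι → α => ∀ i, ¬ G i (x i)) ≤ Real.exp (-∑ i, p i) := by
  rw [pr_pi (fun i y => ¬ G i y), ← Finset.sum_neg_distrib, Real.exp_sum]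
  refine Finset.prod_le_prod (fun i _ => pr_nonneg _) (fun i _ => ?_)
  rw [pr_not]
  have := Real.add_one_le_exp (-p i)
  linarith [hp i]

theorem pr_coin (J m : ℕ) (h : m ≤ J) :
    pr (fun x : Fin (2 ^ J) => x.1 < 2 ^ m) = 2 ^ m / 2 ^ J := by
  rw [pr_eq, Fintype.card_fin]
  have h1 : (2 : ℕ) ^ m ≤ 2 ^ J := Nat.pow_le_pow_right (by norm_num) h
  have h2 : (Finset.univ.filter fun x : Fin (2 ^ J) => x.1 < 2 ^ m).card = 2 ^ m := by
    rw [Fin.card_filter_val_lt]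
    exact min_eq_right h1
  rw [h2]
  push_cast
  rfl

end Prob

section Round
variable {L : Type} [Fintype L] [DecidableEq L]

/-- Random seeds for a tree of height `d`. -/
def Seeds (L : Type) (J : ℕ) : ℕ → Type
  | 0 => Unit
  | d + 1 => (L × Fin (J + 1)) → Fin (2 ^ J) × Seeds L J d

noncomputable instance seedsFintype (J : ℕ) : (d : ℕ) → Fintype (Seeds L J d)
  | 0 => inferInstanceAs (Fintype Unit)
  | d + 1 => by
    have := seedsFintype J d
    exact inferInstanceAs (Fintype ((L × Fin (J + 1)) → Fin (2 ^ J) × Seeds L J d))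

instance seedsNonempty (J : ℕ) : (d : ℕ) → Nonempty (Seeds L J d)
  | 0 => inferInstanceAs (Nonempty Unit)
  | d + 1 => by
    have := seedsNonempty J d
    have : Nonempty (Fin (2 ^ J)) := ⟨⟨0, by positivity⟩⟩
    exact inferInstanceAs (Nonempty ((L × Fin (J + 1)) → Fin (2 ^ J) × Seeds L J d))

/-- New exponent after moving to a child of level `l`. -/
def nj (J : ℕ) (j : Fin (J + 1)) (l : ℕ) : Fin (J + 1) :=
  ⟨max j.1 (J - l), by have := j.2; omega⟩

/-- The node `q` is reached. -/
def alive (J : ℕ) : (d : ℕ) → Seeds L J d → Fin (J + 1) → (List L → ℕ) → List L → Prop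
  | _, _, _, _, [] => True
  | 0, _, _, _, _ :: _ => False
  | d + 1, ω, j, lv, a :: q =>
    0 < lv [a] ∧ (ω (a, nj J j (lv [a]))).1.1 < 2 ^ (J - ((nj J j (lv [a])).1 - j.1)) ∧
      alive J d (ω (a, nj J j (lv [a]))).2 (nj J j (lv [a])) (fun p => lv (a :: p)) q

theorem alive_nil (J d : ℕ) (ω : Seeds L J d) (j : Fin (J + 1)) (lv : List L → ℕ) :
    alive J d ω j lv [] := by
  cases d <;> trivial

theorem alive_pre (J d : ℕ) (ω : Seeds L J d) (j : Fin (J + 1)) (lv : List L → ℕ)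
    (p q : List L) (hpq : p <+: q) (h : alive J d ω j lv q) : alive J d ω j lv p := by
  induction d generalizing j lv p q with
  | zero =>
    cases q with
    | nil => rw [List.prefix_nil.1 hpq]; exact h
    | cons a q => exact absurd h (by simp [alive])
  | succ d ih =>
    cases p with
    | nil => exact alive_nil _ _ _ _ _
    | cons a p =>
      obtain ⟨w, hw⟩ := hpq
      subst hw
      exact ⟨h.1, h.2.1, ih _ _ _ _ _ ⟨w, rfl⟩ h.2.2⟩

theorem alive_congr (J d : ℕ) (ω : Seeds L J d) (j : Fin (J + 1)) (lv lv' : List L → ℕ)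
    (q : List L) (hl : ∀ p, p ≠ [] → p <+: q → lv p = lv' p) (h : alive J d ω j lv q) :
    alive J d ω j lv' q := by
  induction d generalizing j lv lv' q with
  | zero =>
    cases q with
    | nil => exact h
    | cons a q => exact absurd h (by simp [alive])
  | succ d ih =>
    cases q with
    | nil => exact alive_nil _ _ _ _ _
    | cons a q =>
      have h1 : lv [a] = lv' [a] := hl [a] (by simp) (by simp)
      obtain ⟨g1, g2, g3⟩ := h
      rw [h1] at g1 g2 g3
      refine ⟨g1, g2, ih _ _ _ _ _ (fun p _ hp => ?_) g3⟩
      exact hl (a :: p) (by simp) (by simpa using hp)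

theorem pr_child (J d : ℕ) (j : Fin (J + 1)) (l : ℕ) (a : L)
    (A : Seeds L J d → Prop) :
    pr (fun ω : Seeds L J (d + 1) => (ω (a, nj J j l)).1.1 < 2 ^ (J - ((nj J j l).1 - j.1)) ∧
      A (ω (a, nj J j l)).2) = (2 ^ j.1 / 2 ^ (nj J j l).1) * pr A := by
  have : Nonempty (Fin (2 ^ J) × Seeds L J d) := ⟨⟨⟨0, by positivity⟩, Classical.arbitrary _⟩⟩
  have h1 := pr_proj (ι := L × Fin (J + 1)) (a, nj J j l)
    (fun y : Fin (2 ^ J) × Seeds L J d => y.1.1 < 2 ^ (J - ((nj J j l).1 - j.1)) ∧ A y.2)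
  refine Eq.trans h1 ?_
  rw [pr_prod (fun y : Fin (2 ^ J) => y.1 < 2 ^ (J - ((nj J j l).1 - j.1))) A,
    pr_coin J _ (Nat.sub_le _ _)]
  congr 1
  have h2 : j.1 ≤ (nj J j l).1 := le_max_left _ _
  have h3 : (nj J j l).1 ≤ J := by have := (nj J j l).2; omega
  rw [div_eq_div_iff (by positivity) (by positivity), ← pow_add, ← pow_add]
  congr 1
  omega

theorem alive_cost (J d : ℕ) (j : Fin (J + 1)) (lv : List L → ℕ) (q : List L) (hq : q ≠ [])
    (hlv : ∀ p, lv p ≤ J) :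
    pr (fun ω : Seeds L J d => alive J d ω j lv q) ≤ 2 ^ j.1 * cp J (lv q) := by
  induction d generalizing j lv q with
  | zero =>
    cases q with
    | nil => exact absurd rfl hq
    | cons a q =>
      simp only [alive]
      rw [pr_false]
      exact mul_nonneg (by positivity) (cp_nonneg _ _)
  | succ d ih =>
    cases q with
    | nil => exact absurd rfl hq
    | cons a q =>
      by_cases h0 : 0 < lv [a]
      · have h1 : pr (fun ω : Seeds L J (d + 1) => alive J (d + 1) ω j lv (a :: q)) =
          (2 ^ j.1 / 2 ^ (nj J j (lv [a])).1) *
          pr (fun ω : Seeds L J d => alive J d ω (nj J j (lv [a])) (fun p => lv (a :: p)) q) := by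
          rw [← pr_child J d j (lv [a]) a]
          congr 1
          funext ω
          simp only [alive, h0, true_and]
        rw [h1]
        by_cases hq' : q = []
        · subst hq'
          have h2 : (nj J j (lv [a])).1 ≥ J - lv [a] := le_max_right _ _
          have h3 : (2 : ℝ) ^ J ≤ 2 ^ (nj J j (lv [a])).1 * 2 ^ lv [a] := by
            rw [← pow_add]
            exact pow_le_pow_right₀ (by norm_num) (by omega)
          have h4 : (2 : ℝ) ^ j.1 / 2 ^ (nj J j (lv [a])).1 ≤ 2 ^ j.1 * cp J (lv [a]) := by
            unfold cp
            rw [if_neg (by omega), div_eq_mul_one_div]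
            refine mul_le_mul_of_nonneg_left ?_ (by positivity)
            rw [div_le_div_iff₀ (by positivity) (by positivity)]
            linarith
          calc _ ≤ (2 : ℝ) ^ j.1 / 2 ^ (nj J j (lv [a])).1 * 1 :=
                mul_le_mul_of_nonneg_left (pr_le_one _) (by positivity)
            _ ≤ _ := by rw [mul_one]; exact h4
        · have h2 := ih (nj J j (lv [a])) (fun p => lv (a :: p)) q hq' (fun p => hlv _)
          refine (mul_le_mul_of_nonneg_left h2 (by positivity)).trans (le_of_eq ?_)
          field_simp
      · have : (fun ω : Seeds L J (d + 1) => alive J (d + 1) ω j lv (a :: q)) = fun _ => False := by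
          funext ω
          simp [alive, h0]
        rw [this, pr_false]
        exact mul_nonneg (by positivity) (cp_nonneg _ _)

/-- Connection probability of the tree rounding. -/
theorem alive_conn (J d : ℕ) (j : Fin (J + 1)) (lv : List L → ℕ) (T : List L → Prop)
    (hlv : ∀ p, lv p ≤ J) :
    min (2 ^ j.1 * Fl d (fun q => cp J (lv q)) T) 1 / (d + 1) ≤
      pr (fun ω : Seeds L J d => ∃ q, q.length ≤ d ∧ T q ∧ alive J d ω j lv q) := by
  induction d generalizing j lv T with
  | zero =>
    by_cases hT : T []
    · have : (fun ω : Seeds L J 0 => ∃ q, q.length ≤ 0 ∧ T q ∧ alive J 0 ω j lv q) =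
          fun _ => True := by
        funext ω
        simp only [eq_iff_iff, iff_true]
        exact ⟨[], by simp, hT, alive_nil _ _ _ _ _⟩
      rw [this, pr_true]
      simp
    · refine le_trans (le_of_eq ?_) (pr_nonneg _)
      unfold Fl
      simp [hT]
  | succ d ih =>
    by_cases hT : T []
    · have : (fun ω : Seeds L J (d + 1) => ∃ q, q.length ≤ d + 1 ∧ T q ∧ alive J (d + 1) ω j lv q) =
          fun _ => True := by
        funext ω
        simp only [eq_iff_iff, iff_true]
        exact ⟨[], by simp, hT, alive_nil _ _ _ _ _⟩
      rw [this, pr_true]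
      refine div_le_one_of_le₀ ((min_le_right _ _).trans ?_) (by positivity)
      push_cast
      linarith [Nat.cast_nonneg (α := ℝ) d]
    set Fa : L → ℝ := fun a => Fl d (fun q => cp J (lv (a :: q))) (fun q => T (a :: q)) with hFa
    have hFa0 : ∀ a, 0 ≤ Fa a := fun a => Fl_nonneg _ _ _ (fun q => cp_nonneg _ _)
    have hFle : Fl (d + 1) (fun q => cp J (lv q)) T ≤ ∑ a, Fa a := by
      rw [Fl]
      simp only [hT, if_false]
      exact min_le_right _ _
    have hj0 : (0 : ℝ) < 2 ^ j.1 := by positivity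
    -- good events
    let G : L × Fin (J + 1) → Fin (2 ^ J) × Seeds L J d → Prop := fun i y =>
      i.2 = nj J j (lv [i.1]) ∧ 0 < lv [i.1] ∧
        y.1.1 < 2 ^ (J - ((nj J j (lv [i.1])).1 - j.1)) ∧
        ∃ q, q.length ≤ d ∧ T (i.1 :: q) ∧
          alive J d y.2 (nj J j (lv [i.1])) (fun p => lv (i.1 :: p)) q
    let pp : L × Fin (J + 1) → ℝ := fun i =>
      if i.2 = nj J j (lv [i.1]) then min (2 ^ j.1 * Fa i.1) 1 / (d + 1) else 0
    have hpG : ∀ i, pp i ≤ pr (G i) := by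
      rintro ⟨a, i⟩
      simp only [pp]
      split_ifs with h1
      · by_cases h0 : 0 < lv [a]
        · have hG : G (a, i) = fun y : Fin (2 ^ J) × Seeds L J d =>
            y.1.1 < 2 ^ (J - ((nj J j (lv [a])).1 - j.1)) ∧
            ∃ q, q.length ≤ d ∧ T (a :: q) ∧
              alive J d y.2 (nj J j (lv [a])) (fun p => lv (a :: p)) q := by
            funext y
            simp only [G, h1, h0, true_and]
          have hc := pr_child J d j (lv [a]) a (fun ω => ∃ q, q.length ≤ d ∧ T (a :: q) ∧
              alive J d ω (nj J j (lv [a])) (fun p => lv (a :: p)) q)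
          have : Nonempty (Fin (2 ^ J) × Seeds L J d) :=
            ⟨⟨⟨0, by positivity⟩, Classical.arbitrary _⟩⟩
          have hproj := pr_proj (ι := L × Fin (J + 1)) (a, nj J j (lv [a])) (G (a, i))
          have heq : pr (G (a, i)) = (2 ^ j.1 / 2 ^ (nj J j (lv [a])).1) *
              pr (fun ω : Seeds L J d => ∃ q, q.length ≤ d ∧ T (a :: q) ∧
              alive J d ω (nj J j (lv [a])) (fun p => lv (a :: p)) q) := by
            rw [← hc, ← hproj, hG]
            rfl
          rw [heq]
          have hi := ih (nj J j (lv [a])) (fun p => lv (a :: p)) (fun p => T (a :: p))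
            (fun p => hlv _)
          refine le_trans ?_ (mul_le_mul_of_nonneg_left hi (by positivity))
          rw [← mul_div_assoc]
          refine div_le_div_of_nonneg_right ?_ (by positivity)
          have hle : Fa a ≤ cp J (lv [a]) := Fl_le _ _ _ (fun q => cp_nonneg _ _)
          have hnj : (nj J j (lv [a])).1 = max j.1 (J - lv [a]) := rfl
          change _ ≤ 2 ^ j.1 / 2 ^ (nj J j (lv [a])).1 * min (2 ^ (nj J j (lv [a])).1 * Fa a) 1
          rcases le_total j.1 (J - lv [a]) with h5 | h5
          · have h6 : (nj J j (lv [a])).1 = J - lv [a] := by rw [hnj, max_eq_right h5]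
            have h7 : 2 ^ (nj J j (lv [a])).1 * Fa a ≤ 1 := by
              refine (mul_le_mul_of_nonneg_left hle (by positivity)).trans (le_of_eq ?_)
              unfold cp
              rw [if_neg (by omega), h6, ← mul_div_assoc, ← pow_add,
                Nat.sub_add_cancel (hlv _), div_self (by positivity)]
            rw [min_eq_left h7]
            refine (min_le_left _ _).trans (le_of_eq ?_)
            field_simp
          · have h6 : (nj J j (lv [a])).1 = j.1 := by rw [hnj, max_eq_left h5]
            rw [h6, div_self hj0.ne', one_mul]
        · have h2 : Fa a ≤ 0 := by
            refine (Fl_le _ _ _ (fun q => cp_nonneg _ _)).trans ?_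
            have : lv [a] = 0 := by omega
            simp [cp, this]
          have h3 : Fa a = 0 := le_antisymm h2 (hFa0 a)
          rw [h3]
          simpa using pr_nonneg _
      · exact pr_nonneg _
    have : Nonempty (Fin (2 ^ J) × Seeds L J d) := ⟨⟨⟨0, by positivity⟩, Classical.arbitrary _⟩⟩
    have hexp := pr_pi_exp G pp hpG
    have hnot : pr (fun ω : Seeds L J (d + 1) =>
        ¬ ∃ q, q.length ≤ d + 1 ∧ T q ∧ alive J (d + 1) ω j lv q) ≤ Real.exp (-∑ i, pp i) := by
      refine le_trans (pr_mono ?_) hexp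
      intro ω hω i hG
      obtain ⟨g1, g2, g3, q, g4, g5, g6⟩ := hG
      apply hω
      have hi : i = (i.1, nj J j (lv [i.1])) := by rw [← g1]
      rw [hi] at g3 g6
      exact ⟨i.1 :: q, by simpa using g4, g5, g2, g3, g6⟩
    rw [pr_not] at hnot
    have hsum : min (2 ^ j.1 * Fl (d + 1) (fun q => cp J (lv q)) T) 1 / (d + 1) ≤ ∑ i, pp i := by
      rw [Fintype.sum_prod_type]
      simp only [pp, Finset.sum_ite_eq', Finset.mem_univ, if_true]
      rw [← Finset.sum_div]
      refine div_le_div_of_nonneg_right ?_ (by positivity)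
      by_cases hex : ∃ a, 1 ≤ 2 ^ j.1 * Fa a
      · obtain ⟨a, ha⟩ := hex
        refine (min_le_right _ _).trans ?_
        have := Finset.single_le_sum (f := fun a => min (2 ^ j.1 * Fa a) 1)
          (fun a _ => le_min (mul_nonneg hj0.le (hFa0 a)) zero_le_one) (Finset.mem_univ a)
        rwa [min_eq_right ha] at this
      · push Not at hex
        have : ∀ a, min (2 ^ j.1 * Fa a) 1 = 2 ^ j.1 * Fa a := fun a => min_eq_left (hex a).le
        simp only [this]
        rw [← Finset.mul_sum]
        exact (min_le_left _ _).trans (mul_le_mul_of_nonneg_left hFle hj0.le)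
    set F := min (2 ^ j.1 * Fl (d + 1) (fun q => cp J (lv q)) T) 1 with hF
    have hF0 : 0 ≤ F := le_min (mul_nonneg hj0.le (Fl_nonneg _ _ _ (fun q => cp_nonneg _ _)))
      zero_le_one
    have hF1 : F ≤ 1 := min_le_right _ _
    have hd : (0 : ℝ) < d + 1 := by positivity
    have h8 : Real.exp (-∑ i, pp i) ≤ 1 / (1 + F / (d + 1)) := by
      rw [Real.exp_neg, ← one_div]
      refine one_div_le_one_div_of_le (by positivity) ?_
      have := Real.add_one_le_exp (∑ i, pp i)
      linarith
    have h9 : 1 / (1 + F / (d + 1)) ≤ 1 - F / (d + 1 + 1) := by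
      have e1 : 1 / (1 + F / (d + 1)) = (d + 1) / (d + 1 + F) := by
        rw [div_eq_div_iff (by positivity) (by positivity)]
        field_simp
      have e2 : 1 - F / ((d : ℝ) + 1 + 1) = (d + 1 + 1 - F) / (d + 1 + 1) := by field_simp
      rw [e1, e2, div_le_div_iff₀ (by positivity) (by positivity)]
      nlinarith
    push_cast
    linarith

end Round

set_option linter.unusedSectionVars false

section Time
variable {L : Type} [Fintype L] [DecidableEq L]

theorem alive_time (J d : ℕ) (j : Fin (J + 1)) (lvs : ℕ → List L → ℕ) (N : ℕ)
    (hmono : ∀ i i', i ≤ i' → ∀ p, lvs i p ≤ lvs i' p) (hlv : ∀ i p, lvs i p ≤ J)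
    (q : List L) (hq : q ≠ []) (hql : q.length ≤ d) :
    pr (fun ω : Seeds L J d => ∃ i ≤ N, alive J d ω j (lvs i) q) ≤
      (((d + 1) * J + 1 : ℕ) : ℝ) * (2 ^ j.1 * cp J (lvs N q)) := by
  set sig : ℕ → ℕ := fun i => ∑ p ∈ q.inits.toFinset, lvs i p with hsig
  have hcard : q.inits.toFinset.card ≤ d + 1 := by
    refine (List.toFinset_card_le _).trans ?_
    rw [List.length_inits]; omega
  have hsigle : ∀ i, sig i < (d + 1) * J + 1 := by
    intro i
    have h1 := Finset.sum_le_card_nsmul q.inits.toFinset (lvs i) J (fun p _ => hlv i p)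
    rw [smul_eq_mul] at h1
    have h2 := Nat.mul_le_mul_right J hcard
    exact Nat.lt_succ_of_le (h1.trans h2)
  have hsame : ∀ i i', i ≤ i' → sig i = sig i' → ∀ p, p <+: q → lvs i p = lvs i' p := by
    intro i i' hii he p hp
    have := (Finset.sum_eq_sum_iff_of_le (fun p _ => hmono i i' hii p)).1 he
    exact this p (List.mem_toFinset.2 ((List.mem_inits _ _).2 hp))
  have hsame' : ∀ i i', sig i = sig i' → ∀ p, p <+: q → lvs i p = lvs i' p := by
    intro i i' he p hp
    rcases le_total i i' with h | h
    · exact hsame i i' h he p hp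
    · exact (hsame i' i h he.symm p hp).symm
  have h1 : pr (fun ω : Seeds L J d => ∃ i ≤ N, alive J d ω j (lvs i) q) ≤
      pr (fun ω : Seeds L J d => ∃ σ ∈ Finset.range ((d + 1) * J + 1),
        ∃ i ≤ N, sig i = σ ∧ alive J d ω j (lvs i) q) := by
    refine pr_mono ?_
    rintro ω ⟨i, hi, ha⟩
    exact ⟨sig i, Finset.mem_range.2 (hsigle i), i, hi, rfl, ha⟩
  refine h1.trans ((pr_exists _ _).trans ?_)
  have h2 : ∀ σ ∈ Finset.range ((d + 1) * J + 1),
      pr (fun ω : Seeds L J d => ∃ i ≤ N, sig i = σ ∧ alive J d ω j (lvs i) q) ≤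
        2 ^ j.1 * cp J (lvs N q) := by
    intro σ _
    by_cases hex : ∃ i ≤ N, sig i = σ
    · obtain ⟨i0, hi0, hs0⟩ := hex
      refine le_trans (pr_mono (B := fun ω => alive J d ω j (lvs i0) q) ?_) ?_
      · rintro ω ⟨i, hi, hs, ha⟩
        exact alive_congr J d ω j _ _ q
          (fun p _ hp => hsame' i i0 (hs.trans hs0.symm) p hp) ha
      · refine (alive_cost J d j (lvs i0) q hq (hlv i0)).trans ?_
        exact mul_le_mul_of_nonneg_left (cp_mono _ (hmono i0 N hi0 q)) (by positivity)
    · refine le_trans (pr_mono (B := fun _ => False) ?_) ?_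
      · rintro ω ⟨i, hi, hs, _⟩
        exact hex ⟨i, hi, hs⟩
      · rw [pr_false]; exact mul_nonneg (by positivity) (cp_nonneg _ _)
  refine (Finset.sum_le_sum h2).trans (le_of_eq ?_)
  rw [Finset.sum_const, Finset.card_range, nsmul_eq_mul]

end Time

section Om
variable {R L V : Type} [Fintype R] [DecidableEq R] [Fintype L] [DecidableEq L] [DecidableEq V]

/-- The probability space. -/
abbrev Om (R L : Type) (J h M M' : ℕ) : Type :=
  (R × Fin (J + 1) × Fin M') → Fin (2 ^ J) × (Fin M → Seeds L J h)

instance omNonempty (J h M : ℕ) : Nonempty (Fin (2 ^ J) × (Fin M → Seeds L J h)) :=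
  ⟨⟨⟨0, by positivity⟩, Classical.arbitrary _⟩⟩

/-- Node bought by the rounding at given levels. -/
def bt {J h M M' : ℕ} (ω : Om R L J h M M') (lv : R → List L → ℕ) (r : R) (q : List L) : Prop :=
  ∃ (j : Fin (J + 1)) (c : Fin M'), (ω (r, j, c)).1.1 < 2 ^ (J - j.1) ∧
    ∃ μ, alive J h ((ω (r, j, c)).2 μ) j (lv r) q

theorem bt_pre {J h M M' : ℕ} (ω : Om R L J h M M') (lv : R → List L → ℕ) (r : R)
    (p q : List L) (hpq : p <+: q) (hb : bt ω lv r q) : bt ω lv r p := by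
  obtain ⟨j, c, h1, μ, h2⟩ := hb
  exact ⟨j, c, h1, μ, alive_pre _ _ _ _ _ p q hpq h2⟩

theorem bt_cost (J h M M' : ℕ) (lvs : ℕ → R → List L → ℕ) (N : ℕ)
    (hmono : ∀ i i', i ≤ i' → ∀ r p, lvs i r p ≤ lvs i' r p) (hlv : ∀ i r p, lvs i r p ≤ J)
    (r : R) (q : List L) (hq : q ≠ []) (hql : q.length ≤ h) :
    pr (fun ω : Om R L J h M M' => ∃ i ≤ N, bt ω (lvs i) r q) ≤
      (((J + 1) * (M' * (M * ((h + 1) * J + 1))) : ℕ) : ℝ) * cp J (lvs N r q) := by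
  have h1 : pr (fun ω : Om R L J h M M' => ∃ i ≤ N, bt ω (lvs i) r q) ≤
      pr (fun ω : Om R L J h M M' => ∃ z : Fin (J + 1) × Fin M' × Fin M,
        (ω (r, z.1, z.2.1)).1.1 < 2 ^ (J - z.1.1) ∧
        ∃ i ≤ N, alive J h ((ω (r, z.1, z.2.1)).2 z.2.2) z.1 (lvs i r) q) := by
    refine pr_mono ?_
    rintro ω ⟨i, hi, j, c, h1, μ, h2⟩
    exact ⟨(j, c, μ), h1, i, hi, h2⟩
  refine h1.trans ((pr_exists' _).trans ?_)
  have h2 : ∀ z : Fin (J + 1) × Fin M' × Fin M,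
      pr (fun ω : Om R L J h M M' => (ω (r, z.1, z.2.1)).1.1 < 2 ^ (J - z.1.1) ∧
        ∃ i ≤ N, alive J h ((ω (r, z.1, z.2.1)).2 z.2.2) z.1 (lvs i r) q) ≤
      (((h + 1) * J + 1 : ℕ) : ℝ) * cp J (lvs N r q) := by
    rintro ⟨j, c, μ⟩
    have e1 := pr_proj (ι := R × Fin (J + 1) × Fin M') (r, j, c)
      (fun y : Fin (2 ^ J) × (Fin M → Seeds L J h) => y.1.1 < 2 ^ (J - j.1) ∧
        ∃ i ≤ N, alive J h (y.2 μ) j (lvs i r) q)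
    have e2 := pr_prod (fun y : Fin (2 ^ J) => y.1 < 2 ^ (J - j.1))
      (fun y : Fin M → Seeds L J h => ∃ i ≤ N, alive J h (y μ) j (lvs i r) q)
    have e3 := pr_proj (ι := Fin M) μ
      (fun y : Seeds L J h => ∃ i ≤ N, alive J h y j (lvs i r) q)
    have e4 := alive_time J h j (fun i => lvs i r) N (fun i i' hi p => hmono i i' hi r p)
      (fun i p => hlv i r p) q hq hql
    rw [e2, e3, pr_coin J _ (Nat.sub_le _ _)] at e1
    refine (le_of_eq e1).trans ?_
    refine (mul_le_mul_of_nonneg_left e4 (by positivity)).trans (le_of_eq ?_)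
    have hj : j.1 ≤ J := by have := j.2; omega
    have e5 : (2 : ℝ) ^ J = 2 ^ (J - j.1) * 2 ^ j.1 := by
      rw [← pow_add, Nat.sub_add_cancel hj]
    rw [e5]
    field_simp
  refine (Finset.sum_le_sum (fun z _ => h2 z)).trans (le_of_eq ?_)
  rw [Finset.sum_const, Finset.card_univ, nsmul_eq_mul]
  simp only [Fintype.card_prod, Fintype.card_fin]
  push_cast
  ring

theorem exists_exponent (J : ℕ) (y : ℝ) (hy1 : y ≤ 1) (hy : 1 ≤ 2 ^ J * y) :
    ∃ j : Fin (J + 1), 1 ≤ 2 ^ j.1 * y ∧ 2 ^ j.1 * y ≤ 2 := by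
  classical
  have hex : ∃ j : ℕ, 1 ≤ 2 ^ j * y := ⟨J, hy⟩
  refine ⟨⟨Nat.find hex, Nat.lt_succ_of_le (Nat.find_min' hex hy)⟩, Nat.find_spec hex, ?_⟩
  change 2 ^ (Nat.find hex) * y ≤ 2
  rcases hj : Nat.find hex with _ | j
  · rw [pow_zero]; linarith
  · have := Nat.find_min hex (m := j) (by omega)
    rw [not_le] at this
    rw [pow_succ]
    linarith

theorem exp_neg_two : Real.exp (-2) ≤ 1 / 4 := by
  have h1 := Real.add_one_le_exp (1 : ℝ)
  have h2 : Real.exp 2 = Real.exp 1 * Real.exp 1 := by rw [← Real.exp_add]; norm_num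
  rw [Real.exp_neg, ← one_div]
  refine one_div_le_one_div_of_le (by norm_num) ?_
  nlinarith

theorem side_fail (J h : ℕ) (j : Fin (J + 1)) (lv : List L → ℕ) (T : List L → Prop)
    (hlv : ∀ p, lv p ≤ J) (hF : 1 ≤ 2 ^ j.1 * Fl h (fun q => cp J (lv q)) T) :
    pr (fun y : Fin (2 * (h + 1)) → Seeds L J h =>
      ¬ ∃ μ, ∃ q, q.length ≤ h ∧ T q ∧ alive J h (y μ) j lv q) ≤ 1 / 4 := by
  have h1 := alive_conn J h j lv T hlv
  rw [min_eq_right hF] at h1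
  have h2 := pr_pi_exp (ι := Fin (2 * (h + 1)))
    (fun _ (ω : Seeds L J h) => ∃ q, q.length ≤ h ∧ T q ∧ alive J h ω j lv q)
    (fun _ => 1 / ((h : ℝ) + 1)) (fun _ => h1)
  have h3 : ∑ _i : Fin (2 * (h + 1)), 1 / ((h : ℝ) + 1) = 2 := by
    rw [Finset.sum_const, Finset.card_univ, Fintype.card_fin, nsmul_eq_mul]
    push_cast
    field_simp
  rw [h3] at h2
  refine le_trans (pr_mono ?_) (h2.trans exp_neg_two)
  intro y hy μ hμ
  exact hy ⟨μ, hμ⟩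

theorem Dat.success (D : Dat R L V) (u : R → List L → ℕ) (s t : V) (m M' : ℕ)
    (hY : 1 ≤ D.Y u s t m) (hR : 2 * Fintype.card R ≤ 2 ^ D.J) :
    pr (fun ω : Om R L D.J D.h (2 * (D.h + 1)) M' => ¬ ∃ r a b, a.length ≤ D.h ∧ b.length ≤ D.h ∧
      D.Tg s m r a ∧ D.Tg t m r b ∧ bt ω (D.lev u) r a ∧ bt ω (D.lev u) r b) ≤
      Real.exp (-(M' / 8)) := by
  set J := D.J with hJ
  set y : R → ℝ := fun r => min (D.F u s m r) (D.F u t m r) with hy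
  have hFle : ∀ v r, D.F u v m r ≤ 1 := by
    intro v r
    refine (Fl_le _ _ _ (D.x_nonneg u r)).trans ?_
    unfold Dat.x cp
    split_ifs
    · exact zero_le_one
    · rw [div_le_one (by positivity)]
      exact pow_le_pow_right₀ (by norm_num) (D.lev_le u r [])
  have hy1 : ∀ r, y r ≤ 1 := fun r => (min_le_left _ _).trans (hFle s r)
  have hex : ∀ r, ∃ j : Fin (J + 1), 1 ≤ 2 ^ J * y r → 1 ≤ 2 ^ j.1 * y r ∧ 2 ^ j.1 * y r ≤ 2 := by
    intro r
    by_cases h : 1 ≤ 2 ^ J * y r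
    · obtain ⟨j, hj⟩ := exists_exponent J (y r) (hy1 r) h
      exact ⟨j, fun _ => hj⟩
    · exact ⟨0, fun h' => absurd h' h⟩
  choose j0 hj0 using hex
  let con : V → R → (Fin (2 * (D.h + 1)) → Seeds L J D.h) → Prop := fun v r z =>
    ∃ μ, ∃ q, q.length ≤ D.h ∧ D.Tg v m r q ∧ alive J D.h (z μ) (j0 r) (D.lev u r) q
  let G : R × Fin (J + 1) × Fin M' → Fin (2 ^ J) × (Fin (2 * (D.h + 1)) → Seeds L J D.h) → Prop :=
    fun i z => i.2.1 = j0 i.1 ∧ z.1.1 < 2 ^ (J - (j0 i.1).1) ∧ (con s i.1 z.2 ∧ con t i.1 z.2)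
  let pp : R × Fin (J + 1) × Fin M' → ℝ := fun i =>
    if i.2.1 = j0 i.1 then (y i.1 - 1 / 2 ^ J) / 4 else 0
  have hpG : ∀ i, pp i ≤ pr (G i) := by
    rintro ⟨r, j, c⟩
    simp only [pp]
    split_ifs with h1
    · by_cases h2 : 1 ≤ 2 ^ J * y r
      · obtain ⟨h3, h4⟩ := hj0 r h2
        have hfail : ∀ v, y r ≤ D.F u v m r → pr (fun z => ¬ con v r z) ≤ 1 / 4 := by
          intro v hv
          refine side_fail J D.h (j0 r) (D.lev u r) (D.Tg v m r) (D.lev_le u r) (h3.trans ?_)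
          exact mul_le_mul_of_nonneg_left hv (by positivity)
        have h5 : 1 / 2 ≤ pr (fun z => con s r z ∧ con t r z) := by
          have h6 := pr_not (fun z => con s r z ∧ con t r z)
          have h7 : pr (fun z => ¬ (con s r z ∧ con t r z)) ≤ 1 / 4 + 1 / 4 := by
            refine le_trans (pr_mono (B := fun z => ¬ con s r z ∨ ¬ con t r z) ?_) ?_
            · intro z hz; exact not_and_or.1 hz
            · exact (pr_or _ _).trans (add_le_add (hfail s (min_le_left _ _))
                (hfail t (min_le_right _ _)))
          linarith
        have h8 := pr_prod (fun z : Fin (2 ^ J) => z.1 < 2 ^ (J - (j0 r).1))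
          (fun z => con s r z ∧ con t r z)
        rw [pr_coin J _ (Nat.sub_le _ _)] at h8
        have h9 : pr (G (r, j, c)) = 2 ^ (J - (j0 r).1) / 2 ^ J *
            pr (fun z => con s r z ∧ con t r z) := by
          refine Eq.trans ?_ h8
          congr 1
          funext z
          simp only [G, h1, true_and]
        rw [h9]
        have hjJ : (j0 r).1 ≤ J := by have := (j0 r).2; omega
        have e5 : (2 : ℝ) ^ J = 2 ^ (J - (j0 r).1) * 2 ^ (j0 r).1 := by
          rw [← pow_add, Nat.sub_add_cancel hjJ]
        have e6 : (2 : ℝ) ^ (J - (j0 r).1) / 2 ^ J = 1 / 2 ^ (j0 r).1 := by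
          rw [e5]; field_simp
        rw [e6]
        have e7 : y r ≤ 2 * (1 / 2 ^ (j0 r).1) := by
          rw [mul_one_div, le_div_iff₀ (by positivity)]; linarith
        have e8 : (0 : ℝ) ≤ 1 / 2 ^ J := by positivity
        have e9 : (0 : ℝ) ≤ 1 / 2 ^ (j0 r).1 := by positivity
        nlinarith
      · refine le_trans ?_ (pr_nonneg _)
        have : y r ≤ 1 / 2 ^ J := by
          rw [le_div_iff₀ (by positivity)]; linarith
        linarith
    · exact pr_nonneg _
  have hexp := pr_pi_exp G pp hpG
  have hsum : (M' : ℝ) / 8 ≤ ∑ i, pp i := by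
    have h1 : ∑ i, pp i = M' * ∑ r, (y r - 1 / 2 ^ J) / 4 := by
      rw [Fintype.sum_prod_type, Finset.mul_sum]
      refine Finset.sum_congr rfl (fun r _ => ?_)
      rw [Fintype.sum_prod_type]
      simp only [pp, Finset.sum_const, Finset.card_univ, Fintype.card_fin, nsmul_eq_mul]
      rw [← Finset.mul_sum]
      simp
    have h2 : ∑ r, (y r - 1 / 2 ^ J) / 4 = (D.Y u s t m - Fintype.card R * (1 / 2 ^ J)) / 4 := by
      rw [← Finset.sum_div, Finset.sum_sub_distrib]
      congr 2
      simp
    have h3 : (Fintype.card R : ℝ) * (1 / 2 ^ J) ≤ 1 / 2 := by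
      rw [mul_one_div, div_le_div_iff₀ (by positivity) (by norm_num)]
      have : ((2 * Fintype.card R : ℕ) : ℝ) ≤ ((2 ^ J : ℕ) : ℝ) := by exact_mod_cast hR
      push_cast at this
      linarith
    rw [h1, h2]
    have h4 : (0 : ℝ) ≤ M' := Nat.cast_nonneg _
    nlinarith
  refine le_trans (le_trans (pr_mono ?_) hexp) (Real.exp_le_exp.2 (by linarith))
  intro ω hω i hG
  obtain ⟨g1, g2, ⟨μ, a, g3, g4, g5⟩, μ', b, g6, g7, g8⟩ := hG
  apply hω
  have hi : i = (i.1, j0 i.1, i.2.2) := by rw [← g1]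
  rw [hi] at g2 g5 g8
  exact ⟨i.1, a, b, g3, g6, g4, g7, ⟨j0 i.1, i.2.2, g2, μ, g5⟩, ⟨j0 i.1, i.2.2, g2, μ', g8⟩⟩

end Om

set_option linter.unusedSectionVars false

section Alg
variable {R L V : Type} [Fintype R] [DecidableEq R] [Fintype L] [DecidableEq L]
  [Fintype V] [DecidableEq V] [Nonempty R]

/-- Valid routes. -/
def Dat.Valid (D : Dat R L V) (s t : V) (m : ℕ) (z : R × List L × List L) : Prop :=
  z.2.1.length ≤ D.h ∧ z.2.2.length ≤ D.h ∧ D.Tg s m z.1 z.2.1 ∧ D.Tg t m z.1 z.2.2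

noncomputable def Dat.pc (D : Dat R L V) (z : R × List L × List L) : ℝ :=
  pw (fun q => (D.k z.1 q : ℝ)) z.2.1 + pw (fun q => (D.k z.1 q : ℝ)) z.2.2

/-- Cheapest route satisfying a predicate. -/
noncomputable def Dat.fb (D : Dat R L V) (P : R × List L × List L → Prop) : R × List L × List L :=
  Classical.epsilon (fun z => P z ∧ ∀ z', P z' → D.pc z ≤ D.pc z')

def Dat.bought (D : Dat R L V) {M M' : ℕ} (ω : Om R L D.J D.h M M') (X : List (V × V)) (r : R)
    (q : List L) : Prop := ∃ i ≤ X.length, bt ω (D.lev (D.st (X.take i)).1) r q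

def Dat.Good (D : Dat R L V) {M M' : ℕ} (ω : Om R L D.J D.h M M') (X : List (V × V)) (s t : V)
    (z : R × List L × List L) : Prop :=
  D.Valid s t (D.st X).2 z ∧ D.bought ω X z.1 z.2.1 ∧ D.bought ω X z.1 z.2.2

open Classical in
noncomputable def Dat.pick (D : Dat R L V) {M M' : ℕ} (ω : Om R L D.J D.h M M')
    (X : List (V × V)) (s t : V) : R × List L × List L :=
  if ∃ z, D.Good ω X s t z then Classical.epsilon (D.Good ω X s t)
  else D.fb (D.Valid s t (D.st X).2)

noncomputable def Dat.cnt (D : Dat R L V) (m : ℕ) : ℕ :=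
  (((Finset.univ : Finset R) ×ˢ lists L D.h).filter (fun z => D.len z.1 z.2 ≤ m)).card

theorem Dat.cnt_valid (D : Dat R L V) (s t : V) (m m' : ℕ) (h : D.cnt m = D.cnt m') :
    D.Valid s t m = D.Valid s t m' := by
  have key : ∀ m m', m ≤ m' → D.cnt m = D.cnt m' → ∀ r q, q.length ≤ D.h →
      (D.len r q ≤ m ↔ D.len r q ≤ m') := by
    intro m m' hm he r q hq
    refine ⟨fun h => h.trans hm, fun h => ?_⟩
    have hsub : (((Finset.univ : Finset R) ×ˢ lists L D.h).filter (fun z => D.len z.1 z.2 ≤ m)) ⊆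
        (((Finset.univ : Finset R) ×ˢ lists L D.h).filter (fun z => D.len z.1 z.2 ≤ m')) :=
      Finset.monotone_filter_right _ (fun z _ hz => hz.trans hm)
    have heq := Finset.eq_of_subset_of_card_le hsub (le_of_eq he.symm)
    have : (r, q) ∈ (((Finset.univ : Finset R) ×ˢ lists L D.h).filter
        (fun z => D.len z.1 z.2 ≤ m')) := by
      simp [mem_lists, hq, h]
    rw [← heq] at this
    exact (Finset.mem_filter.1 this).2
  have key' : ∀ r q, q.length ≤ D.h → (D.len r q ≤ m ↔ D.len r q ≤ m') := by
    intro r q hq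
    rcases le_total m m' with h1 | h1
    · exact key m m' h1 h r q hq
    · exact (key m' m h1 h.symm r q hq).symm
  funext z
  unfold Dat.Valid Dat.Tg
  refine propext ⟨fun ⟨h1, h2, h3, h4⟩ => ?_, fun ⟨h1, h2, h3, h4⟩ => ?_⟩
  · exact ⟨h1, h2, ⟨h3.1, (key' _ _ h1).1 h3.2⟩, ⟨h4.1, (key' _ _ h2).1 h4.2⟩⟩
  · exact ⟨h1, h2, ⟨h3.1, (key' _ _ h1).2 h3.2⟩, ⟨h4.1, (key' _ _ h2).2 h4.2⟩⟩

theorem Dat.fb_spec (D : Dat R L V) (s t : V) (m : ℕ) (z0 : R × List L × List L)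
    (h0 : D.Valid s t m z0) : D.Valid s t m (D.fb (D.Valid s t m)) ∧
      D.pc (D.fb (D.Valid s t m)) ≤ D.pc z0 := by
  classical
  have hex : ∃ z, D.Valid s t m z ∧ ∀ z', D.Valid s t m z' → D.pc z ≤ D.pc z' := by
    obtain ⟨z, hz, hm⟩ := Finset.exists_min_image
      (((Finset.univ : Finset R) ×ˢ lists L D.h ×ˢ lists L D.h).filter (D.Valid s t m)) D.pc
      ⟨z0, by simp [mem_lists, h0, h0.1, h0.2.1]⟩
    refine ⟨z, (Finset.mem_filter.1 hz).2, fun z' hz' => hm z' ?_⟩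
    simp [mem_lists, hz', hz'.1, hz'.2.1]
  have := Classical.epsilon_spec hex
  exact ⟨this.1, this.2 z0 h0⟩

theorem nodup_inits' {α : Type} (l : List α) : l.inits.Nodup := by
  induction l with
  | nil => simp
  | cons a l ih =>
    rw [List.inits_cons, List.nodup_cons]
    refine ⟨by simp, ih.map (fun x y h => (List.cons.inj h).2)⟩

theorem sum_prefix_le (h : ℕ) (w : List L → ℝ) (hw : ∀ q, 0 ≤ w q) (a : List L) :
    (∑ q ∈ (lists L h).filter (fun q => q <+: a), w q) ≤ pw w a := by
  have h1 : pw w a = ∑ q ∈ a.inits.toFinset, w q := by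
    unfold pw
    rw [List.sum_toFinset]
    exact nodup_inits' a
  rw [h1]
  refine Finset.sum_le_sum_of_subset_of_nonneg ?_ (fun q _ _ => hw q)
  intro q hq
  rw [List.mem_toFinset, List.mem_inits]
  exact (Finset.mem_filter.1 hq).2

theorem Dat.pc_sum (D : Dat R L V) (z : R × List L × List L) :
    (∑ y ∈ (Finset.univ : Finset R) ×ˢ lists L D.h, (D.k y.1 y.2 : ℝ) *
      (if z.1 = y.1 ∧ (y.2 <+: z.2.1 ∨ y.2 <+: z.2.2) then 1 else 0)) ≤ D.pc z := by
  rw [Finset.sum_product, Finset.sum_eq_single z.1]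
  · have h1 : ∀ q ∈ lists L D.h, (D.k z.1 q : ℝ) *
        (if z.1 = z.1 ∧ (q <+: z.2.1 ∨ q <+: z.2.2) then 1 else 0) ≤
        (if q <+: z.2.1 then (D.k z.1 q : ℝ) else 0) +
        (if q <+: z.2.2 then (D.k z.1 q : ℝ) else 0) := by
      intro q _
      have : (0 : ℝ) ≤ D.k z.1 q := Nat.cast_nonneg _
      by_cases e1 : q <+: z.2.1 <;> by_cases e2 : q <+: z.2.2 <;> simp [e1, e2]
    refine (Finset.sum_le_sum h1).trans ?_
    rw [Finset.sum_add_distrib, ← Finset.sum_filter, ← Finset.sum_filter]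
    exact add_le_add (sum_prefix_le _ _ (fun _ => Nat.cast_nonneg _) _)
      (sum_prefix_le _ _ (fun _ => Nat.cast_nonneg _) _)
  · intro r _ hr
    refine Finset.sum_eq_zero (fun q _ => ?_)
    simp [hr.symm]
  · intro h; exact absurd (Finset.mem_univ _) h

/-- Node used by a route. -/
def onR (z : R × List L × List L) (y : R × List L) : Prop :=
  z.1 = y.1 ∧ (y.2 <+: z.2.1 ∨ y.2 <+: z.2.2)

theorem Dat.round (D : Dat R L V) (M' : ℕ)
    (hN : Fintype.card R * (lists L D.h).card ≤ 2 ^ D.J)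
    (hR : 2 * Fintype.card R ≤ 2 ^ D.J)
    (hK : ((Fintype.card V * (Fintype.card V * (Fintype.card R * (lists L D.h).card + 1)) : ℕ) : ℝ)
      * Real.exp (-(M' / 8)) ≤ 1)
    (X : List (V × V)) (S : Finset (R × List L)) (r : Fin X.length → R)
    (a b : Fin X.length → List L) (M : Fin X.length → ℕ)
    (hab : ∀ i, (a i).length ≤ D.h ∧ (b i).length ≤ D.h ∧ D.Tg (X.get i).1 (M i) (r i) (a i) ∧
      D.Tg (X.get i).2 (M i) (r i) (b i) ∧
      ∀ p, p ≠ [] → (p <+: a i ∨ p <+: b i) → (r i, p) ∈ S) :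
    (∀ (ω : Om R L D.J D.h (2 * (D.h + 1)) M') (i : Fin X.length),
      D.Valid (X.get i).1 (X.get i).2 (D.st (X.take (i + 1))).2
        (D.pick ω (X.take (i + 1)) (X.get i).1 (X.get i).2)) ∧
    ∑ y ∈ ((Finset.univ : Finset R) ×ˢ lists L D.h).filter (fun y => y.2 ≠ []),
      (D.k y.1 y.2 : ℝ) * pr (fun ω : Om R L D.J D.h (2 * (D.h + 1)) M' => ∃ i : Fin X.length,
        onR (D.pick ω (X.take (i + 1)) (X.get i).1 (X.get i).2) y) ≤
      ((((D.J + 1) * (M' * ((2 * (D.h + 1)) * ((D.h + 1) * D.J + 1))) : ℕ) : ℝ) + 2) *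
        D.Frac (D.st X).1 := by
  classical
  obtain ⟨hY, hmono, -, -⟩ := D.frac hN X S r a b M hab
  have hvex : ∀ i : Fin X.length, ∃ z, D.Valid (X.get i).1 (X.get i).2 (D.st (X.take (i + 1))).2 z ∧
      D.pc z ≤ 2 * D.Frac (D.st (X.take (i + 1))).1 := by
    intro i
    obtain ⟨r, a, b, h1, h2, h3, h4, h5⟩ := D.cheap _ _ _ _ (hY i)
    exact ⟨(r, a, b), ⟨h1, h2, h3, h4⟩, h5⟩
  have hlast : ∀ i : ℕ, D.Frac (D.st (X.take i)).1 ≤ D.Frac (D.st X).1 := by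
    intro i
    have h1 : ∀ r q, (D.st (X.take i)).1 r q ≤ (D.st X).1 r q := by
      intro r q
      have := hmono i (max i X.length) (le_max_left _ _) r q
      rwa [List.take_of_length_le (le_max_right _ _)] at this
    exact D.Frac_mono h1
  have hfb : ∀ i : Fin X.length, D.Valid (X.get i).1 (X.get i).2 (D.st (X.take (i + 1))).2
      (D.fb (D.Valid (X.get i).1 (X.get i).2 (D.st (X.take (i + 1))).2)) ∧
      D.pc (D.fb (D.Valid (X.get i).1 (X.get i).2 (D.st (X.take (i + 1))).2)) ≤
        2 * D.Frac (D.st X).1 := by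
    intro i
    obtain ⟨z, h1, h2⟩ := hvex i
    obtain ⟨h3, h4⟩ := D.fb_spec _ _ _ z h1
    have := hlast (i + 1)
    exact ⟨h3, by linarith⟩
  have hpickGood : ∀ (ω : Om R L D.J D.h (2 * (D.h + 1)) M') (i : Fin X.length),
      (∃ z, D.Good ω (X.take (i + 1)) (X.get i).1 (X.get i).2 z) →
      D.Good ω (X.take (i + 1)) (X.get i).1 (X.get i).2
        (D.pick ω (X.take (i + 1)) (X.get i).1 (X.get i).2) := by
    intro ω i h
    unfold Dat.pick
    rw [if_pos h]
    exact Classical.epsilon_spec h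
  refine ⟨?_, ?_⟩
  · intro ω i
    by_cases h : ∃ z, D.Good ω (X.take (i + 1)) (X.get i).1 (X.get i).2 z
    · exact (hpickGood ω i h).1
    · unfold Dat.pick
      rw [if_neg h]
      exact (hfb i).1
  -- keys
  set key : Fin X.length → V × V × ℕ := fun i =>
    ((X.get i).1, (X.get i).2, D.cnt (D.st (X.take (i + 1))).2) with hkey
  set first : Finset (Fin X.length) := Finset.univ.filter (fun i => ∀ i' < i, key i' ≠ key i)
    with hfirst
  have hfex : ∀ i, ∃ i0 ∈ first, i0 ≤ i ∧ key i0 = key i := by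
    intro i
    obtain ⟨i0, hi0, hm⟩ := Finset.exists_min_image (Finset.univ.filter (fun i' => key i' = key i))
      id ⟨i, by simp⟩
    have e0 := (Finset.mem_filter.1 hi0).2
    refine ⟨i0, ?_, hm i (by simp), e0⟩
    refine Finset.mem_filter.2 ⟨Finset.mem_univ _, fun i' hi' he => ?_⟩
    exact absurd (hm i' (by simp [he, e0])) (not_le.2 hi')
  have hcard : first.card ≤
      Fintype.card V * (Fintype.card V * (Fintype.card R * (lists L D.h).card + 1)) := by
    have h1 : first.card ≤ ((Finset.univ : Finset V) ×ˢ (Finset.univ : Finset V) ×ˢ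
        Finset.range (Fintype.card R * (lists L D.h).card + 1)).card := by
      refine Finset.card_le_card_of_injOn key ?_ ?_
      · intro i _
        simp only [hkey, Finset.coe_product, Set.mem_prod, Finset.coe_univ, Set.mem_univ, true_and,
          Finset.coe_range, Set.mem_Iio]
        refine Nat.lt_succ_of_le ((Finset.card_filter_le _ _).trans ?_)
        rw [Finset.card_product, Finset.card_univ]
      · intro i hi i' hi' he
        rcases lt_trichotomy i i' with h | h | h
        · exact absurd he ((Finset.mem_filter.1 hi').2 i h)
        · exact h
        · exact absurd he.symm ((Finset.mem_filter.1 hi).2 i' h)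
    simpa [Finset.card_product, Finset.card_univ] using h1
  -- failure events
  let suc : Fin X.length → Om R L D.J D.h (2 * (D.h + 1)) M' → Prop := fun i ω =>
    ∃ r a b, a.length ≤ D.h ∧ b.length ≤ D.h ∧
      D.Tg (X.get i).1 (D.st (X.take (i + 1))).2 r a ∧
      D.Tg (X.get i).2 (D.st (X.take (i + 1))).2 r b ∧
      bt ω (D.lev (D.st (X.take (i + 1))).1) r a ∧ bt ω (D.lev (D.st (X.take (i + 1))).1) r b
  have hsuc : ∀ i, pr (fun ω => ¬ suc i ω) ≤ Real.exp (-(M' / 8)) := fun i =>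
    D.success _ _ _ _ M' (hY i) hR
  let fbz : Fin X.length → R × List L × List L := fun i =>
    D.fb (D.Valid (X.get i).1 (X.get i).2 (D.st (X.take (i + 1))).2)
  let Bt : R × List L → Om R L D.J D.h (2 * (D.h + 1)) M' → Prop := fun y ω =>
    ∃ i ≤ X.length, bt ω (D.lev (D.st (X.take i)).1) y.1 y.2
  have hused : ∀ y ω, (∃ i : Fin X.length,
        onR (D.pick ω (X.take (i + 1)) (X.get i).1 (X.get i).2) y) →
      Bt y ω ∨ ∃ i ∈ first, onR (fbz i) y ∧ ¬ suc i ω := by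
    rintro y ω ⟨i, hon⟩
    by_cases h : ∃ z, D.Good ω (X.take (i + 1)) (X.get i).1 (X.get i).2 z
    · left
      have hg := hpickGood ω i h
      have hb : ∀ q, D.bought ω (X.take (i + 1)) y.1 q → ∀ p, p <+: q → Bt (y.1, p) ω := by
        rintro q ⟨l, hl, hq⟩ p hp
        rw [List.length_take] at hl
        have hl1 := hl.trans (min_le_left _ _)
        have hl2 := hl.trans (min_le_right _ _)
        rw [List.take_take, min_eq_left hl1] at hq
        exact ⟨l, hl2, bt_pre ω _ _ p q hp hq⟩
      obtain ⟨h1, h2⟩ := hon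
      rw [Dat.Good, h1] at hg
      rcases h2 with h2 | h2
      · exact hb _ hg.2.1 _ h2
      · exact hb _ hg.2.2 _ h2
    · right
      obtain ⟨i0, hi0, hle, hke⟩ := hfex i
      have hV : D.Valid (X.get i0).1 (X.get i0).2 (D.st (X.take (i0 + 1))).2 =
          D.Valid (X.get i).1 (X.get i).2 (D.st (X.take (i + 1))).2 := by
        simp only [hkey, Prod.mk.injEq] at hke
        obtain ⟨k1, k2, k3⟩ := hke
        rw [k1, k2]
        exact D.cnt_valid _ _ _ _ k3
      refine ⟨i0, hi0, ?_, ?_⟩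
      · unfold Dat.pick at hon
        rw [if_neg h, ← hV] at hon
        exact hon
      · rintro ⟨r, a, b, g1, g2, g3, g4, g5, g6⟩
        apply h
        have hv : D.Valid (X.get i).1 (X.get i).2 (D.st (X.take (i + 1))).2 (r, a, b) := by
          rw [← hV]; exact ⟨g1, g2, g3, g4⟩
        have hle' : i0.1 ≤ i.1 := hle
        have hb : ∀ q, bt ω (D.lev (D.st (X.take (i0 + 1))).1) r q →
            D.bought ω (X.take (i + 1)) r q := by
          intro q hq
          refine ⟨i0.1 + 1, ?_, ?_⟩
          · rw [List.length_take]; have := i0.2; have := i.2; omega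
          · rw [List.take_take, min_eq_left (by omega)]; exact hq
        exact ⟨(r, a, b), hv, hb _ g5, hb _ g6⟩
  set Q : ℝ := (((D.J + 1) * (M' * ((2 * (D.h + 1)) * ((D.h + 1) * D.J + 1))) : ℕ) : ℝ) with hQ
  have hpr : ∀ y ∈ ((Finset.univ : Finset R) ×ˢ lists L D.h).filter (fun y => y.2 ≠ []),
      (D.k y.1 y.2 : ℝ) * pr (fun ω : Om R L D.J D.h (2 * (D.h + 1)) M' => ∃ i : Fin X.length,
        onR (D.pick ω (X.take (i + 1)) (X.get i).1 (X.get i).2) y) ≤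
      Q * ((D.k y.1 y.2 : ℝ) * D.x (D.st X).1 y.1 y.2) + ∑ i ∈ first, Real.exp (-(M' / 8)) *
        ((D.k y.1 y.2 : ℝ) * (if (fbz i).1 = y.1 ∧ (y.2 <+: (fbz i).2.1 ∨ y.2 <+: (fbz i).2.2)
          then 1 else 0)) := by
    intro y hy
    rw [Finset.mem_filter, Finset.mem_product, mem_lists] at hy
    have h1 : pr (fun ω : Om R L D.J D.h (2 * (D.h + 1)) M' => ∃ i : Fin X.length,
        onR (D.pick ω (X.take (i + 1)) (X.get i).1 (X.get i).2) y) ≤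
        pr (Bt y) + ∑ i ∈ first, pr (fun ω => onR (fbz i) y ∧ ¬ suc i ω) :=
      (pr_mono (hused y)).trans ((pr_or _ _).trans (add_le_add le_rfl (pr_exists _ _)))
    have h2 : pr (Bt y) ≤ Q * D.x (D.st X).1 y.1 y.2 := by
      have := bt_cost D.J D.h (2 * (D.h + 1)) M' (fun i => D.lev (D.st (X.take i)).1) X.length
        (fun i i' hi r p => D.lev_mono (hmono i i' hi) r p) (fun i r p => D.lev_le _ r p)
        y.1 y.2 hy.2 hy.1.2
      simp only [List.take_length] at this
      exact this
    have h3 : ∀ i ∈ first, pr (fun ω => onR (fbz i) y ∧ ¬ suc i ω) ≤ Real.exp (-(M' / 8)) *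
        (if (fbz i).1 = y.1 ∧ (y.2 <+: (fbz i).2.1 ∨ y.2 <+: (fbz i).2.2) then 1 else 0) := by
      intro i _
      split_ifs with h
      · rw [mul_one]
        exact (pr_mono (fun ω hω => hω.2)).trans (hsuc i)
      · refine le_trans (pr_mono (B := fun _ => False) (fun ω hω => h hω.1)) ?_
        rw [pr_false, mul_zero]
    have h4 := Finset.sum_le_sum h3
    have hk : (0 : ℝ) ≤ D.k y.1 y.2 := Nat.cast_nonneg _
    have h5 := mul_le_mul_of_nonneg_left (h1.trans (add_le_add h2 h4)) hk
    refine h5.trans (le_of_eq ?_)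
    rw [mul_add, Finset.mul_sum]
    congr 1
    · ring
    · refine Finset.sum_congr rfl (fun i _ => ?_)
      ring
  refine (Finset.sum_le_sum hpr).trans ?_
  rw [Finset.sum_add_distrib, ← Finset.mul_sum, add_mul]
  have hF0 := D.Frac_nonneg (D.st X).1
  refine add_le_add (mul_le_mul_of_nonneg_left ?_ (Nat.cast_nonneg _)) ?_
  · unfold Dat.Frac
    rw [← Finset.sum_product']
    exact Finset.sum_le_sum_of_subset_of_nonneg (Finset.filter_subset _ _)
      (fun y _ _ => mul_nonneg (Nat.cast_nonneg _) (D.x_nonneg _ _ _))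
  · rw [Finset.sum_comm]
    have h1 : ∀ i ∈ first, ∑ y ∈ ((Finset.univ : Finset R) ×ˢ lists L D.h).filter
        (fun y => y.2 ≠ []), Real.exp (-(M' / 8)) *
        ((D.k y.1 y.2 : ℝ) * (if (fbz i).1 = y.1 ∧ (y.2 <+: (fbz i).2.1 ∨ y.2 <+: (fbz i).2.2)
          then 1 else 0)) ≤ Real.exp (-(M' / 8)) * (2 * D.Frac (D.st X).1) := by
      intro i _
      rw [← Finset.mul_sum]
      refine mul_le_mul_of_nonneg_left ?_ (Real.exp_pos _).le
      refine le_trans ?_ ((D.pc_sum (fbz i)).trans (hfb i).2)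
      refine Finset.sum_le_sum_of_subset_of_nonneg (Finset.filter_subset _ _) (fun y _ _ => ?_)
      exact mul_nonneg (Nat.cast_nonneg _) (by split_ifs <;> norm_num)
    refine (Finset.sum_le_sum h1).trans ?_
    rw [Finset.sum_const, nsmul_eq_mul, ← mul_assoc]
    have h2 : (first.card : ℝ) * Real.exp (-(M' / 8)) ≤ 1 := by
      refine le_trans (mul_le_mul_of_nonneg_right ?_ (Real.exp_pos _).le) hK
      exact_mod_cast hcard
    nlinarith

end Alg

set_option linter.unusedSectionVars false

section Cover
variable {V : Type} [Fintype V] [DecidableEq V]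

/-- Last step of a chain. -/
noncomputable def lst (E : Set (V × V)) (c ℓ : V × V → ℝ) : V → List (Lab V) → List (V × V)
  | _, [] => []
  | u, a :: q => if q = [] then pth E c ℓ u a else lst E c ℓ (nv E c ℓ u a) q

theorem wsum_lst (E : Set (V × V)) (c ℓ : V × V → ℝ) (u : V) (q : List (Lab V)) :
    wsum c (lst E c ℓ u q) = Cn E c ℓ u q := by
  induction q generalizing u with
  | nil => simp [lst, Cn]
  | cons a q ih =>
    unfold lst Cn
    split_ifs
    · rfl
    · exact ih _

theorem cpath_cover (E : Set (V × V)) (c ℓ : V × V → ℝ) (u : V) (q : List (Lab V)) (e : V × V)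
    (he : e ∈ cpath E c ℓ u q) : ∃ p, p ≠ [] ∧ p <+: q ∧ e ∈ lst E c ℓ u p := by
  induction q generalizing u with
  | nil => simp [cpath] at he
  | cons a q ih =>
    rw [cpath, List.mem_append] at he
    rcases he with he | he
    · exact ⟨[a], by simp, by simp, by simpa [lst] using he⟩
    · obtain ⟨p, h1, h2, h3⟩ := ih _ he
      exact ⟨a :: p, by simp, by simpa using h2, by simpa [lst, h1] using h3⟩

theorem sum_toFinset_le (c : V × V → ℝ) (hc : ∀ e, 0 ≤ c e) (p : List (V × V)) :
    ∑ e ∈ p.toFinset, c e ≤ wsum c p := by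
  induction p with
  | nil => simp
  | cons a p ih =>
    rw [List.toFinset_cons, wsum_cons]
    by_cases h : a ∈ p.toFinset
    · rw [Finset.insert_eq_of_mem h]; linarith [hc a]
    · rw [Finset.sum_insert h]; linarith

/-- The walk of a route. -/
noncomputable def rwalk (E : Set (V × V)) (c ℓ : V × V → ℝ) (z : V × List (Lab V) × List (Lab V)) :
    List (V × V) := rev (cpath E c ℓ z.1 z.2.1) ++ cpath E c ℓ z.1 z.2.2

open Classical in
theorem objVal_le (E : Set (V × V)) {c ℓ : V × V → ℝ} (hc : ∀ e, 0 ≤ c e)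
    (hcs : ∀ e, c e.swap = c e) (hls : ∀ e, ℓ e.swap = ℓ e) (h : ℕ) {k : ℕ}
    (z : Fin k → V × List (Lab V) × List (Lab V))
    (hz : ∀ i, (z i).2.1.length ≤ h ∧ (z i).2.2.length ≤ h) :
    objVal c ℓ (fun i => rwalk E c ℓ (z i)) ≤
      2 * ∑ y ∈ ((Finset.univ : Finset V) ×ˢ lists (Lab V) h).filter (fun y => y.2 ≠ []),
        (Cn E c ℓ y.1 y.2 * if ∃ i, onR (z i) y then 1 else 0) +
      ∑ i, (Lam E c ℓ (z i).1 (z i).2.1 + Lam E c ℓ (z i).1 (z i).2.2) := by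
  unfold objVal
  refine add_le_add ?_ (le_of_eq ?_)
  · set U := ((Finset.univ : Finset V) ×ˢ lists (Lab V) h).filter (fun y => y.2 ≠ []) with hU
    set U' := U.filter (fun y => ∃ i, onR (z i) y) with hU'
    set T : V × List (Lab V) → Finset (V × V) := fun y =>
      (rev (lst E c ℓ y.1 y.2) ++ lst E c ℓ y.1 y.2).toFinset with hT
    have hmem : ∀ i p, p ≠ [] → (p <+: (z i).2.1 ∨ p <+: (z i).2.2) → ((z i).1, p) ∈ U' := by
      intro i p hp hpp
      have hlen : p.length ≤ h := by
        rcases hpp with hpp | hpp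
        · exact hpp.length_le.trans (hz i).1
        · exact hpp.length_le.trans (hz i).2
      refine Finset.mem_filter.2 ⟨Finset.mem_filter.2 ⟨?_, hp⟩, i, rfl, hpp⟩
      simp [mem_lists, hlen]
    have hsub : (Finset.univ.biUnion fun i => (rwalk E c ℓ (z i)).toFinset) ⊆ U'.biUnion T := by
      intro e he
      obtain ⟨i, _, hi⟩ := Finset.mem_biUnion.1 he
      have hi := List.mem_toFinset.1 hi
      rw [rwalk, List.mem_append] at hi
      rcases hi with hi | hi
      · have hi' : e.swap ∈ cpath E c ℓ (z i).1 (z i).2.1 := by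
          rw [rev, List.mem_reverse, List.mem_map] at hi
          obtain ⟨x, hx, rfl⟩ := hi
          simpa using hx
        obtain ⟨p, h1, h2, h3⟩ := cpath_cover _ _ _ _ _ _ hi'
        refine Finset.mem_biUnion.2 ⟨_, hmem i p h1 (Or.inl h2), ?_⟩
        simp only [hT, List.mem_toFinset, List.mem_append]
        left
        rw [rev, List.mem_reverse, List.mem_map]
        exact ⟨_, h3, by simp⟩
      · obtain ⟨p, h1, h2, h3⟩ := cpath_cover _ _ _ _ _ _ hi
        refine Finset.mem_biUnion.2 ⟨_, hmem i p h1 (Or.inr h2), ?_⟩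
        simp only [hT, List.mem_toFinset, List.mem_append]
        exact Or.inr h3
    calc _ ≤ ∑ e ∈ U'.biUnion T, c e :=
          Finset.sum_le_sum_of_subset_of_nonneg hsub (fun e _ _ => hc e)
      _ ≤ ∑ y ∈ U', ∑ e ∈ T y, c e := sum_biUnion_le _ _ _ hc
      _ ≤ ∑ y ∈ U', 2 * Cn E c ℓ y.1 y.2 := by
          refine Finset.sum_le_sum (fun y _ => (sum_toFinset_le c hc _).trans (le_of_eq ?_))
          rw [wsum_append, wsum_rev hcs, wsum_lst]; ring
      _ = _ := by
          rw [← Finset.mul_sum, hU', Finset.sum_filter]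
          simp
  · refine Finset.sum_congr rfl (fun i _ => ?_)
    change wsum ℓ (rwalk E c ℓ (z i)) = _
    rw [rwalk, wsum_append, wsum_rev hls, wsum_cpath, wsum_cpath]

/-- Scaling. -/
theorem ceil_scale {η x : ℝ} (hη : 0 < η) (hx : 0 ≤ x) (h : x = 0 ∨ η ≤ x) :
    x ≤ η * (⌈x / η⌉₊ : ℝ) ∧ η * (⌈x / η⌉₊ : ℝ) ≤ 2 * x := by
  constructor
  · have := Nat.le_ceil (x / η)
    rw [div_le_iff₀ hη] at this
    linarith
  · rcases h with h | h
    · simp [h]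
    · have h1 := (Nat.ceil_lt_add_one (div_nonneg hx hη.le)).le
      have h2 : η * (⌈x / η⌉₊ : ℝ) ≤ η * (x / η + 1) := by gcongr
      have h3 : η * (x / η + 1) = x + η := by field_simp
      linarith

/-- Averages over a finite type as probabilities. -/
theorem avg_ind {α : Type} [Fintype α] (A : α → Prop) [DecidablePred A] :
    ∑ ω, (Fintype.card α : ℝ)⁻¹ * (if A ω then 1 else 0) = pr A := by
  rw [pr_eq, ← Finset.mul_sum, Finset.sum_boole]
  ring

/-- Size bounds. -/
theorem card_lab (lg : ℕ) (hlg : 0 < lg) (hn : Fintype.card V < 2 ^ lg) :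
    Fintype.card (Lab V) + 1 ≤ 2 ^ (5 * lg) := by
  have h1 : Fintype.card (Lab V) = Fintype.card V * (Fintype.card V * Fintype.card V *
      (Fintype.card V + 1)) := by simp [Lab]
  rw [h1]
  set n := Fintype.card V
  have h2 : (2 : ℕ) ^ (5 * lg) = 2 ^ lg * (2 ^ lg * 2 ^ lg * 2 ^ lg) * 2 ^ lg := by
    rw [mul_comm, pow_mul]; ring
  have h3 : n * (n * n * (n + 1)) ≤ 2 ^ lg * (2 ^ lg * 2 ^ lg * 2 ^ lg) := by gcongr; omega
  have h4 : 2 ≤ 2 ^ lg := by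
    calc 2 = 2 ^ 1 := rfl
      _ ≤ 2 ^ lg := Nat.pow_le_pow_right (by norm_num) hlg
  have h5 : 1 ≤ 2 ^ lg * (2 ^ lg * 2 ^ lg * 2 ^ lg) := Nat.one_le_iff_ne_zero.2 (by positivity)
  rw [h2]
  nlinarith

theorem card_nodes (lg : ℕ) (hlg : 0 < lg) (hn : Fintype.card V < 2 ^ lg) :
    Fintype.card V * (lists (Lab V) lg).card ≤ 2 ^ (6 * lg ^ 2) := by
  have h1 : (lists (Lab V) lg).card ≤ 2 ^ (5 * lg ^ 2) := by
    refine (card_lists lg).trans ?_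
    refine (Nat.pow_le_pow_left (card_lab lg hlg hn) lg).trans (le_of_eq ?_)
    rw [← pow_mul]; ring_nf
  calc _ ≤ 2 ^ lg * 2 ^ (5 * lg ^ 2) := by gcongr
    _ = 2 ^ (lg + 5 * lg ^ 2) := by rw [pow_add]
    _ ≤ _ := Nat.pow_le_pow_right (by norm_num) (by nlinarith)

theorem card_key (lg : ℕ) (hlg : 0 < lg) (hn : Fintype.card V < 2 ^ lg) :
    ((Fintype.card V * (Fintype.card V * (Fintype.card V * (lists (Lab V) lg).card + 1)) : ℕ) : ℝ)
      * Real.exp (-(((72 * lg ^ 2 : ℕ) : ℝ) / 8)) ≤ 1 := by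
  have h1 : Fintype.card V * (Fintype.card V * (Fintype.card V * (lists (Lab V) lg).card + 1)) ≤
      2 ^ (9 * lg ^ 2) := by
    have h2 := card_nodes lg hlg hn
    have h3 : Fintype.card V * (lists (Lab V) lg).card + 1 ≤ 2 ^ (6 * lg ^ 2 + 1) := by
      have := Nat.one_le_two_pow (n := 6 * lg ^ 2)
      rw [pow_succ]; omega
    calc _ ≤ 2 ^ lg * (2 ^ lg * 2 ^ (6 * lg ^ 2 + 1)) := by gcongr
      _ = 2 ^ (lg + (lg + (6 * lg ^ 2 + 1))) := by rw [← pow_add, ← pow_add]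
      _ ≤ _ := Nat.pow_le_pow_right (by norm_num) (by nlinarith)
  have h2 : ((Fintype.card V * (Fintype.card V *
      (Fintype.card V * (lists (Lab V) lg).card + 1)) : ℕ) : ℝ) ≤ 2 ^ (9 * lg ^ 2) := by
    exact_mod_cast h1
  have h3 : (2 : ℝ) ^ (9 * lg ^ 2) ≤ Real.exp (((72 * lg ^ 2 : ℕ) : ℝ) / 8) := by
    have h4 : (((72 * lg ^ 2 : ℕ) : ℝ) / 8) = ((9 * lg ^ 2 : ℕ) : ℝ) * 1 := by push_cast; ring
    rw [h4, Real.exp_nat_mul]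
    have : (2 : ℝ) ≤ Real.exp 1 := by linarith [Real.add_one_le_exp (1 : ℝ)]
    gcongr
  rw [Real.exp_neg, ← div_eq_mul_inv, div_le_one (Real.exp_pos _)]
  exact h2.trans h3

end Cover

set_option linter.unusedSectionVars false
set_option synthInstance.maxSize 2000
set_option synthInstance.maxHeartbeats 200000

section Final
variable {V : Type} [Fintype V] [DecidableEq V]

/-- The scaled tree problem. -/
noncomputable def mkD (E : Set (V × V)) (c ℓ : V × V → ℝ) (lg : ℕ) (η : ℝ) : Dat V (Lab V) V where
  h := lg
  J := 6 * lg ^ 2 + 1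
  k := fun r q => ⌈Cn E c ℓ r q / η⌉₊
  len := fun r q => ⌈Lam E c ℓ r q / η⌉₊
  ed := en E c ℓ
  k0 := fun r => by simp [Cn]
  J0 := by omega

/-- The seeds of the algorithm. -/
abbrev OmA (E : Set (V × V)) (c ℓ : V × V → ℝ) (lg : ℕ) (η : ℝ) : Type :=
  Om V (Lab V) (mkD E c ℓ lg η).J (mkD E c ℓ lg η).h (2 * ((mkD E c ℓ lg η).h + 1)) (72 * lg ^ 2)

/-- The action of the algorithm. -/
noncomputable def actA [Nonempty V] (E : Set (V × V)) (c ℓ : V × V → ℝ) (lg : ℕ) (η : ℝ)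
    (ω : OmA E c ℓ lg η) (X : List (V × V)) : List (V × V) :=
  match X.getLast? with
  | none => []
  | some x => rwalk E c ℓ ((mkD E c ℓ lg η).pick ω X x.1 x.2)

/-- The online algorithm: the seed is uniform on a finite set. -/
noncomputable def algA [Nonempty V] (E : Set (V × V)) (c ℓ : V × V → ℝ) (lg : ℕ) (η : ℝ) :
    OnlineAlg V where
  Ω := OmA E c ℓ lg η
  m := ⊤
  μ := @PMF.toMeasure _ ⊤ (PMF.uniformOfFintype (OmA E c ℓ lg η))
  prob := @PMF.toMeasure.isProbabilityMeasure _ ⊤ (PMF.uniformOfFintype (OmA E c ℓ lg η))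
  act := actA E c ℓ lg η

theorem actA_take [Nonempty V] (E : Set (V × V)) (c ℓ : V × V → ℝ) (lg : ℕ) (η : ℝ)
    (ω : OmA E c ℓ lg η) (X : List (V × V)) (i : Fin X.length) :
    actA E c ℓ lg η ω (X.take (i.1 + 1)) =
      rwalk E c ℓ ((mkD E c ℓ lg η).pick ω (X.take (i.1 + 1)) (X.get i).1 (X.get i).2) := by
  have h : (X.take (i.1 + 1)).getLast? = some (X.get i) := by
    rw [List.take_succ_eq_append_getElem i.2, List.getLast?_append]
    simp
  unfold actA
  rw [h]

theorem expObj_algA [Nonempty V] (E : Set (V × V)) (c ℓ : V × V → ℝ) (lg : ℕ) (η : ℝ)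
    (X : List (V × V)) : expObj (algA E c ℓ lg η) c ℓ X =
      ∑ ω : OmA E c ℓ lg η, (Fintype.card (OmA E c ℓ lg η) : ℝ)⁻¹ *
        objVal c ℓ (fun i : Fin X.length => rwalk E c ℓ ((mkD E c ℓ lg η).pick ω
          (X.take (i.1 + 1)) (X.get i).1 (X.get i).2)) := by
  unfold expObj algA
  let _ : MeasurableSpace (OmA E c ℓ lg η) := ⊤
  have : MeasurableSingletonClass (OmA E c ℓ lg η) := ⟨fun _ => trivial⟩
  refine (PMF.integral_eq_sum (PMF.uniformOfFintype (OmA E c ℓ lg η)) _).trans ?_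
  refine Finset.sum_congr rfl (fun ω _ => ?_)
  simp only [actA_take]
  simp [PMF.uniformOfFintype_apply]

theorem algA_bound [Nonempty V] (E : Set (V × V)) {c ℓ : V × V → ℝ}
    (hc : ∀ e, 0 ≤ c e) (hl : ∀ e, 0 ≤ ℓ e)
    (hE : ∀ e ∈ E, e.swap ∈ E) (hcs : ∀ e, c e.swap = c e) (hls : ∀ e, ℓ e.swap = ℓ e)
    (lg : ℕ) (hlg : 0 < lg) (hn : Fintype.card V < 2 ^ lg) (η : ℝ) (hη : 0 < η)
    (hηC : ∀ r, ∀ q : List (Lab V), q.length ≤ lg → Cn E c ℓ r q = 0 ∨ η ≤ Cn E c ℓ r q)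
    (hηL : ∀ r, ∀ q : List (Lab V), q.length ≤ lg → Lam E c ℓ r q = 0 ∨ η ≤ Lam E c ℓ r q)
    (X : List (V × V)) (P : Fin X.length → List (V × V))
    (hP : ∀ i, IsWalk E (X.get i).1 (X.get i).2 (P i)) :
    (∀ ω (i : Fin X.length), IsWalk E (X.get i).1 (X.get i).2
      (actA E c ℓ lg η ω (X.take (i.1 + 1)))) ∧
    expObj (algA E c ℓ lg η) c ℓ X ≤ 50000000 * lg ^ 12 * objVal c ℓ P := by
  classical
  obtain ⟨Q, r, a, b, hab, -, hQ, hL⟩ := benchmark E hc hl hE hcs hls lg hlg hn P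
    (fun i => (X.get i).1) (fun i => (X.get i).2) hP
  set D := mkD E c ℓ lg η with hD
  have hDh : D.h = lg := rfl
  have hDJ : D.J = 6 * lg ^ 2 + 1 := rfl
  have hkb : ∀ u, ∀ q : List (Lab V), q.length ≤ lg → Cn E c ℓ u q ≤ η * (D.k u q : ℝ) ∧
      η * (D.k u q : ℝ) ≤ 2 * Cn E c ℓ u q := fun u q hq =>
    ceil_scale hη (Cn_nonneg E hc u q) (hηC u q hq)
  have hlb : ∀ u, ∀ q : List (Lab V), q.length ≤ lg → Lam E c ℓ u q ≤ η * (D.len u q : ℝ) ∧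
      η * (D.len u q : ℝ) ≤ 2 * Lam E c ℓ u q := fun u q hq =>
    ceil_scale hη (Lam_nonneg E hl u q) (hηL u q hq)
  set S := Q.filter (fun z => z.2.length ≤ lg) with hS
  set M : Fin X.length → ℕ := fun i => D.len (r i) (a i) + D.len (r i) (b i) with hM
  have hab' : ∀ i : Fin X.length, (a i).length ≤ D.h ∧ (b i).length ≤ D.h ∧
      D.Tg (X.get i).1 (M i) (r i) (a i) ∧ D.Tg (X.get i).2 (M i) (r i) (b i) ∧
      ∀ p, p ≠ [] → (p <+: a i ∨ p <+: b i) → (r i, p) ∈ S := by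
    intro i
    obtain ⟨h1, h2, h3, h4, h5⟩ := hab i
    refine ⟨h1, h2, ⟨h3, Nat.le_add_right _ _⟩, ⟨h4, Nat.le_add_left _ _⟩, fun p hp hpp => ?_⟩
    refine Finset.mem_filter.2 ⟨h5 p hp hpp, ?_⟩
    rcases hpp with hpp | hpp
    · exact hpp.length_le.trans h1
    · exact hpp.length_le.trans h2
  have hN : Fintype.card V * (lists (Lab V) D.h).card ≤ 2 ^ D.J :=
    (card_nodes lg hlg hn).trans (Nat.pow_le_pow_right (by norm_num) (by omega))
  have hR : 2 * Fintype.card V ≤ 2 ^ D.J := by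
    calc 2 * Fintype.card V ≤ 2 * 2 ^ lg := by gcongr
      _ = 2 ^ (lg + 1) := by ring
      _ ≤ 2 ^ D.J := Nat.pow_le_pow_right (by norm_num) (by rw [hDJ]; nlinarith)
  obtain ⟨-, -, hFr, hMs⟩ := D.frac hN X S r a b M hab'
  obtain ⟨hV, hRd⟩ := D.round (72 * lg ^ 2) hN hR (card_key lg hlg hn) X S r a b M hab'
  refine ⟨?_, ?_⟩
  · intro ω i
    rw [actA_take]
    obtain ⟨-, -, h3, h4⟩ := hV ω i
    change IsWalk E _ _ (rwalk E c ℓ (D.pick ω (X.take (i.1 + 1)) (X.get i).1 (X.get i).2))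
    generalize D.pick ω (X.take (i.1 + 1)) (X.get i).1 (X.get i).2 = z at h3 h4 ⊢
    have e1 : en E c ℓ z.1 z.2.1 = (X.get i).1 := h3.1
    have e2 : en E c ℓ z.1 z.2.2 = (X.get i).2 := h4.1
    rw [← e1, ← e2]
    exact isWalk_append (isWalk_rev hE (cpath_walk E c ℓ _ _)) (cpath_walk E c ℓ _ _)
  rw [expObj_algA]
  set m : Fin X.length → ℝ := fun i => ((D.st (X.take (i + 1))).2 : ℝ) with hm
  set U := ((Finset.univ : Finset V) ×ˢ lists (Lab V) lg).filter (fun y => y.2 ≠ []) with hU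
  set F : OmA E c ℓ lg η → V × List (Lab V) → Prop := fun ω y => ∃ i : Fin X.length,
    onR (D.pick ω (X.take (i + 1)) (X.get i).1 (X.get i).2) y with hF
  have hcard : (0 : ℝ) < Fintype.card (OmA E c ℓ lg η) := by exact_mod_cast Fintype.card_pos
  have hstep : ∀ ω : OmA E c ℓ lg η, objVal c ℓ (fun i : Fin X.length =>
      rwalk E c ℓ (D.pick ω (X.take (i.1 + 1)) (X.get i).1 (X.get i).2)) ≤
      2 * η * ∑ y ∈ U, ((D.k y.1 y.2 : ℝ) * if F ω y then 1 else 0) + 2 * η * ∑ i, m i := by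
    intro ω
    refine (objVal_le E hc hcs hls lg _ (fun i => ⟨(hV ω i).1, (hV ω i).2.1⟩)).trans ?_
    refine add_le_add ?_ ?_
    · rw [mul_assoc, Finset.mul_sum (a := η)]
      refine mul_le_mul_of_nonneg_left (Finset.sum_le_sum fun y hy => ?_) (by norm_num)
      have hy' : y.2.length ≤ lg := by
        have := (Finset.mem_product.1 (Finset.mem_filter.1 hy).1).2
        exact mem_lists.1 this
      rw [← mul_assoc]
      refine mul_le_mul_of_nonneg_right (hkb _ _ hy').1 ?_
      split_ifs <;> norm_num
    · rw [Finset.mul_sum]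
      refine Finset.sum_le_sum fun i _ => ?_
      obtain ⟨h1, h2, h3, h4⟩ := hV ω i
      have e1 := (hlb (D.pick ω (X.take (i.1 + 1)) (X.get i).1 (X.get i).2).1 _ h1).1
      have e2 := (hlb (D.pick ω (X.take (i.1 + 1)) (X.get i).1 (X.get i).2).1 _ h2).1
      have f1 : η * (D.len (D.pick ω (X.take (i.1 + 1)) (X.get i).1 (X.get i).2).1
          (D.pick ω (X.take (i.1 + 1)) (X.get i).1 (X.get i).2).2.1 : ℝ) ≤ η * m i := by
        have : ((D.len _ _ : ℕ) : ℝ) ≤ ((D.st (X.take (i + 1))).2 : ℝ) := Nat.cast_le.2 h3.2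
        exact mul_le_mul_of_nonneg_left this hη.le
      have f2 : η * (D.len (D.pick ω (X.take (i.1 + 1)) (X.get i).1 (X.get i).2).1
          (D.pick ω (X.take (i.1 + 1)) (X.get i).1 (X.get i).2).2.2 : ℝ) ≤ η * m i := by
        have : ((D.len _ _ : ℕ) : ℝ) ≤ ((D.st (X.take (i + 1))).2 : ℝ) := Nat.cast_le.2 h4.2
        exact mul_le_mul_of_nonneg_left this hη.le
      linarith
  have havg : ∑ ω : OmA E c ℓ lg η, (Fintype.card (OmA E c ℓ lg η) : ℝ)⁻¹ *
        objVal c ℓ (fun i : Fin X.length => rwalk E c ℓ (D.pick ω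
          (X.take (i.1 + 1)) (X.get i).1 (X.get i).2)) ≤
      2 * η * ∑ y ∈ U, ((D.k y.1 y.2 : ℝ) * pr (fun ω => F ω y)) + 2 * η * ∑ i, m i := by
    calc _ ≤ ∑ ω : OmA E c ℓ lg η, (Fintype.card (OmA E c ℓ lg η) : ℝ)⁻¹ *
          (2 * η * ∑ y ∈ U, ((D.k y.1 y.2 : ℝ) * if F ω y then 1 else 0) + 2 * η * ∑ i, m i) :=
          Finset.sum_le_sum fun ω _ => mul_le_mul_of_nonneg_left (hstep ω) (by positivity)
      _ = _ := by
          simp only [mul_add, Finset.sum_add_distrib]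
          congr 1
          · calc _ = ∑ ω : OmA E c ℓ lg η, ∑ y ∈ U, 2 * η * ((D.k y.1 y.2 : ℝ) *
                  ((Fintype.card (OmA E c ℓ lg η) : ℝ)⁻¹ * if F ω y then 1 else 0)) := by
                  refine Finset.sum_congr rfl fun ω _ => ?_
                  simp only [Finset.mul_sum]
                  refine Finset.sum_congr rfl fun y _ => ?_
                  ring
              _ = _ := by
                  rw [Finset.sum_comm, Finset.mul_sum]
                  refine Finset.sum_congr rfl fun y _ => ?_
                  rw [← Finset.mul_sum, ← Finset.mul_sum, avg_ind]
          · rw [Finset.sum_const, Finset.card_univ, nsmul_eq_mul]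
            field_simp
  refine havg.trans ?_
  set q : ℝ := (((D.J + 1) * ((72 * lg ^ 2) * ((2 * (D.h + 1)) * ((D.h + 1) * D.J + 1))) : ℕ) : ℝ)
    with hq
  have hRd' : ∑ y ∈ U, ((D.k y.1 y.2 : ℝ) * pr (fun ω => F ω y)) ≤ (q + 2) * D.Frac (D.st X).1 :=
    hRd
  have hlgr : (1 : ℝ) ≤ lg := by exact_mod_cast hlg
  have hq34 : q ≤ 34560 * lg ^ 8 := by
    have : (D.J + 1) * ((72 * lg ^ 2) * ((2 * (D.h + 1)) * ((D.h + 1) * D.J + 1))) ≤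
        (8 * lg ^ 2) * ((72 * lg ^ 2) * ((4 * lg) * (15 * lg ^ 3))) := by
      have g1 : D.J + 1 ≤ 8 * lg ^ 2 := by rw [hDJ]; nlinarith
      have g2 : 2 * (D.h + 1) ≤ 4 * lg := by rw [hDh]; omega
      have g3 : (D.h + 1) * D.J + 1 ≤ 15 * lg ^ 3 := by
        rw [hDh, hDJ]
        have : (lg + 1) * (6 * lg ^ 2 + 1) ≤ (2 * lg) * (7 * lg ^ 2) := by
          gcongr
          · omega
          · nlinarith
        have : 1 ≤ lg ^ 3 := Nat.one_le_pow _ _ hlg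
        nlinarith
      gcongr
    have h2 : q ≤ (((8 * lg ^ 2) * ((72 * lg ^ 2) * ((4 * lg) * (15 * lg ^ 3))) : ℕ) : ℝ) := by
      rw [hq]
      exact Nat.cast_le.2 this
    refine h2.trans (le_of_eq ?_)
    push_cast; ring
  have hq0 : 0 ≤ q := Nat.cast_nonneg _
  have hlg8 : (1 : ℝ) ≤ (lg : ℝ) ^ 8 := one_le_pow₀ hlgr
  have hms0 : 0 ≤ ∑ i, m i := Finset.sum_nonneg fun i _ => Nat.cast_nonneg _
  have hmain : 2 * η * ∑ y ∈ U, ((D.k y.1 y.2 : ℝ) * pr (fun ω => F ω y)) + 2 * η * ∑ i, m i ≤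
      276498 * lg ^ 8 * (η * ∑ i, m i) := by
    have h1 : ∑ y ∈ U, ((D.k y.1 y.2 : ℝ) * pr (fun ω => F ω y)) ≤
        (34562 * lg ^ 8) * (4 * ∑ i, m i) := by
      refine hRd'.trans ?_
      refine (mul_le_mul_of_nonneg_left hFr (by linarith)).trans ?_
      refine mul_le_mul_of_nonneg_right ?_ (by positivity)
      linarith
    have h2 := mul_le_mul_of_nonneg_left h1 (by positivity : 0 ≤ 2 * η)
    have h3 : 2 * (η * ∑ i, m i) ≤ 2 * lg ^ 8 * (η * ∑ i, m i) := by
      have : 0 ≤ η * ∑ i, m i := mul_nonneg hη.le hms0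
      nlinarith
    linarith
  refine hmain.trans ?_
  -- the benchmark
  set cost := ∑ e ∈ Finset.univ.biUnion fun i => (P i).toFinset, c e with hcost
  set len := ∑ i, wsum ℓ (P i) with hlen
  have hobj : objVal c ℓ P = cost + len := rfl
  have hcost0 : 0 ≤ cost := Finset.sum_nonneg fun e _ => hc e
  have hlen0 : 0 ≤ len := Finset.sum_nonneg fun i _ => wsum_nonneg hl _
  have hMs' : ∑ i, m i ≤ ∑ i, (M i : ℝ) + D.J * ∑ z ∈ S, (D.k z.1 z.2 : ℝ) := by
    have : ((∑ i : Fin X.length, (D.st (X.take (i + 1))).2 : ℕ) : ℝ) ≤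
      ((∑ i, M i + D.J * ∑ z ∈ S, D.k z.1 z.2 : ℕ) : ℝ) := Nat.cast_le.2 hMs
    push_cast at this
    exact this
  have hMi : η * ∑ i, (M i : ℝ) ≤ 152 * lg ^ 2 * len := by
    have : η * ∑ i, (M i : ℝ) ≤ 2 * ∑ i, (Lam E c ℓ (r i) (a i) + Lam E c ℓ (r i) (b i)) := by
      rw [Finset.mul_sum, Finset.mul_sum]
      refine Finset.sum_le_sum fun i _ => ?_
      have e1 := (hlb (r i) _ (hab i).1).2
      have e2 := (hlb (r i) _ (hab i).2.1).2
      simp only [hM]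
      push_cast
      linarith
    linarith
  have hkS : η * ∑ z ∈ S, (D.k z.1 z.2 : ℝ) ≤ 8 * lg ^ 2 * cost := by
    have h1 : η * ∑ z ∈ S, (D.k z.1 z.2 : ℝ) ≤ 2 * ∑ z ∈ S, Cn E c ℓ z.1 z.2 := by
      rw [Finset.mul_sum, Finset.mul_sum]
      exact Finset.sum_le_sum fun z hz => (hkb _ _ (Finset.mem_filter.1 hz).2).2
    have h2 : ∑ z ∈ S, Cn E c ℓ z.1 z.2 ≤ ∑ z ∈ Q, Cn E c ℓ z.1 z.2 :=
      Finset.sum_le_sum_of_subset_of_nonneg (Finset.filter_subset _ _)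
        (fun z _ _ => Cn_nonneg E hc _ _)
    linarith
  have hJr : (D.J : ℝ) ≤ 7 * lg ^ 2 := by
    have : D.J ≤ 7 * lg ^ 2 := by rw [hDJ]; nlinarith
    exact_mod_cast this
  have hηm : η * ∑ i, m i ≤ 152 * lg ^ 4 * (cost + len) := by
    have h1 : η * ∑ i, m i ≤ η * ∑ i, (M i : ℝ) + D.J * (η * ∑ z ∈ S, (D.k z.1 z.2 : ℝ)) := by
      have := mul_le_mul_of_nonneg_left hMs' hη.le
      linarith
    have h2 : (D.J : ℝ) * (η * ∑ z ∈ S, (D.k z.1 z.2 : ℝ)) ≤ (7 * lg ^ 2) * (8 * lg ^ 2 * cost) :=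
      mul_le_mul hJr hkS (mul_nonneg hη.le (Finset.sum_nonneg fun _ _ => Nat.cast_nonneg _))
        (by positivity)
    have h3 : (lg : ℝ) ^ 2 * len ≤ lg ^ 4 * len :=
      mul_le_mul_of_nonneg_right (pow_le_pow_right₀ hlgr (by norm_num)) hlen0
    have h4 : 0 ≤ (lg : ℝ) ^ 4 * cost := by positivity
    linarith
  rw [hobj]
  calc 276498 * (lg : ℝ) ^ 8 * (η * ∑ i, m i) ≤
        276498 * (lg : ℝ) ^ 8 * (152 * lg ^ 4 * (cost + len)) := by gcongr
    _ = 42027696 * (lg ^ 12 * (cost + len)) := by ring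
    _ ≤ 50000000 * (lg ^ 12 * (cost + len)) := by gcongr; norm_num
    _ = _ := by ring

end Final

/-- **Online multicommodity buy-at-bulk in undirected edge-weighted graphs.**
There are absolute constants `C, d` such that every undirected edge-weighted
buy-at-bulk instance on `n ≥ 2` vertices admits a randomized online algorithm whose
expected objective value, on every finite request sequence in every arrival order,
is at most `C·(log n)^d` times the optimum of that multicommodity instance. -/
theorem online_undirected_edge_buy_at_bulk :
    ∃ (C : ℝ) (d : ℕ), 0 < C ∧
      ∀ (V : Type) [Fintype V] [DecidableEq V],
        ∀ (E : Set (V × V)) (c ℓ : V × V → ℝ) (n : ℕ),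
        n = Fintype.card V → 2 ≤ n →
        (∀ e, 0 ≤ c e) → (∀ e, 0 ≤ ℓ e) →
        Undirected E c ℓ →
        ∃ A : OnlineAlg V, ∀ X : List (V × V),
          CompetitiveOn A E c ℓ (C * Real.log n ^ d) X := by
  refine ⟨50000000 * 4 ^ 12, 12, by norm_num, ?_⟩
  intro V _ _ E c ℓ n hn hn2 hc hl hU
  have : Nonempty V := Fintype.card_pos_iff.1 (by omega)
  have hE : ∀ e ∈ E, e.swap ∈ E := fun e he => (hU e.1 e.2).1.1 he
  have hcs : ∀ e, c e.swap = c e := fun e => ((hU e.1 e.2).2.1).symm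
  have hls : ∀ e, ℓ e.swap = ℓ e := fun e => ((hU e.1 e.2).2.2).symm
  set lg := Nat.log 2 n + 1 with hlg
  have hnlg : Fintype.card V < 2 ^ lg := hn ▸ Nat.lt_pow_succ_log_self (by norm_num) n
  obtain ⟨δ1, h1, h1'⟩ := exists_delta ((Finset.univ : Finset V) ×ˢ lists (Lab V) lg)
    (fun z => Cn E c ℓ z.1 z.2) (fun z => Cn_nonneg E hc _ _)
  obtain ⟨δ2, h2, h2'⟩ := exists_delta ((Finset.univ : Finset V) ×ˢ lists (Lab V) lg)
    (fun z => Lam E c ℓ z.1 z.2) (fun z => Lam_nonneg E hl _ _)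
  refine ⟨algA E c ℓ lg (min δ1 δ2), fun X hX => ?_⟩
  have hb := algA_bound E hc hl hE hcs hls lg (Nat.succ_pos _) hnlg (min δ1 δ2) (lt_min h1 h2)
    (fun r q hq => (h1' (r, q) (by simp [mem_lists, hq])).imp id (fun h => (min_le_left _ _).trans h))
    (fun r q hq => (h2' (r, q) (by simp [mem_lists, hq])).imp id (fun h => (min_le_right _ _).trans h))
    X
  have hex : ∀ i : Fin X.length, ∃ w, IsWalk E (X.get i).1 (X.get i).2 w :=
    fun i => hX _ (List.get_mem X i)
  choose P0 hP0 using hex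
  refine ⟨(hb P0 hP0).1, ?_⟩
  have hlgr : (lg : ℝ) ≤ 4 * Real.log n := by
    have e1 : (Nat.log 2 n : ℝ) * Real.log 2 ≤ Real.log n := by
      have : (2 : ℝ) ^ (Nat.log 2 n) ≤ n := by exact_mod_cast Nat.pow_log_le_self 2 (by omega)
      have := Real.log_le_log (by positivity) this
      rwa [Real.log_pow] at this
    have e2 : Real.log 2 ≤ Real.log n :=
      Real.log_le_log (by norm_num) (by exact_mod_cast hn2)
    have e3 : (0.5 : ℝ) ≤ Real.log 2 := by linarith [Real.log_two_gt_d9]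
    have e4 : (Nat.log 2 n : ℝ) * 0.5 ≤ (Nat.log 2 n : ℝ) * Real.log 2 := by gcongr
    rw [hlg]; push_cast
    linarith
  have hlg1 : (1 : ℝ) ≤ lg := by rw [hlg]; push_cast; linarith [Nat.cast_nonneg (α := ℝ) (Nat.log 2 n)]
  set γ : ℝ := 50000000 * 4 ^ 12 * Real.log n ^ 12 with hγ
  have hγ1 : 50000000 * (lg : ℝ) ^ 12 ≤ γ := by
    have : (lg : ℝ) ^ 12 ≤ (4 * Real.log n) ^ 12 := by gcongr
    rw [mul_pow] at this
    rw [hγ]; linarith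
  have hγ0 : 0 < γ := lt_of_lt_of_le (by positivity) hγ1
  rw [← div_le_iff₀' hγ0]
  refine le_csInf ⟨_, P0, hP0, rfl⟩ ?_
  rintro v ⟨P, hP, rfl⟩
  rw [div_le_iff₀' hγ0]
  refine (hb P hP).2.trans (mul_le_mul_of_nonneg_right hγ1 ?_)
  exact add_nonneg (Finset.sum_nonneg fun e _ => hc e)
    (Finset.sum_nonneg fun i _ => wsum_nonneg hl (P i))

end BaB
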